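/- arXiv:1409.6011 — 9 statements merged into one kernel-verified Lean document; each statement's English description precedes it below -/
import Mathlib

section
/- Let n ≥ 1, let C > 0, and let K ⊆ ℝⁿ be a convex body with K ⊆ C√n·B_n. For σ > 0 define F(s) = ∫_K exp(−‖x‖²/(2s)) dx for s > 0. Then for every α with 0 < α ≤ 1/2, F(σ²/(1+α)) · F(σ²/(1−α)) ≤ exp(2·C²·α²·n/σ²) · F(σ²)². -/
open MeasureTheory
open scoped ENNReal Pointwise

theorem Real.volume_add_le_volume_add_of_isCompact {A B : Set ℝ} (hA : IsCompact A)
    (hB : IsCompact B) (hA₀ : A.Nonempty) (hB₀ : B.Nonempty) :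
    volume A + volume B ≤ volume (A + B) := by
  obtain ⟨a, ha, hamax⟩ := hA.exists_isGreatest hA₀
  obtain ⟨b, hb, hbmin⟩ := hB.exists_isLeast hB₀
  have hdisj : AEDisjoint volume (b +ᵥ A) (a +ᵥ B) := by
    refine measure_mono_null (t := {a + b}) ?_ (by simp)
    rintro _ ⟨⟨x, hx, rfl⟩, ⟨y, hy, hxy⟩⟩
    have h₁ := hamax hx
    have h₂ := hbmin hy
    simp only [vadd_eq_add] at hxy
    simp only [vadd_eq_add, Set.mem_singleton_iff]
    linarith
  have hmeas : NullMeasurableSet (a +ᵥ B) (volume : Measure ℝ) :=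
    (hB.vadd a).measurableSet.nullMeasurableSet
  calc volume A + volume B = volume (b +ᵥ A) + volume (a +ᵥ B) := by
        rw [measure_vadd, measure_vadd]
    _ = volume ((b +ᵥ A) ∪ (a +ᵥ B)) := (measure_union₀ hmeas hdisj).symm
    _ ≤ volume (A + B) := by
        refine measure_mono (Set.union_subset ?_ ?_)
        · rintro _ ⟨x, hx, rfl⟩
          exact ⟨x, hx, b, hb, add_comm _ _⟩
        · rintro _ ⟨y, hy, rfl⟩
          exact ⟨a, ha, y, hy, rfl⟩

/-- The one-dimensional **Brunn–Minkowski inequality**. -/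
theorem Real.volume_add_le_volume_add {A B : Set ℝ} (hA : MeasurableSet A)
    (hB : MeasurableSet B) (hA₀ : A.Nonempty) (hB₀ : B.Nonempty) :
    volume A + volume B ≤ volume (A + B) := by
  obtain ⟨a, ha⟩ := hA₀
  obtain ⟨b, hb⟩ := hB₀
  rw [hA.measure_eq_iSup_isCompact, hB.measure_eq_iSup_isCompact]
  simp only [iSup_and']
  refine ENNReal.biSup_add_biSup_le' ⟨∅, by simp⟩ ⟨∅, by simp⟩ ?_
  rintro K ⟨hKA, hK⟩ L ⟨hLB, hL⟩
  calc volume K + volume L ≤ volume (insert a K) + volume (insert b L) := by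
        gcongr <;> exact Set.subset_insert _ _
    _ ≤ volume (insert a K + insert b L) :=
        volume_add_le_volume_add_of_isCompact (hK.insert a) (hL.insert b)
          (Set.insert_nonempty _ _) (Set.insert_nonempty _ _)
    _ ≤ volume (A + B) := by
        gcongr <;> exact Set.insert_subset ‹_› ‹_›

/-- The midpoint form of the one-dimensional Prékopa–Leindler inequality for functions
whose supremum is one, with the arithmetic mean of the integrals. -/
theorem lintegral_add_le_two_mul_lintegral_of_forall_lt {f g h : ℝ → ℝ} (hf : Measurable f)
    (hg : Measurable g) (hh : Measurable h) (hf₀ : 0 ≤ f) (hg₀ : 0 ≤ g) (hh₀ : 0 ≤ h)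
    (hf₁ : f ≤ 1) (hg₁ : g ≤ 1) (hfsup : ∀ t < 1, ∃ x, t < f x) (hgsup : ∀ t < 1, ∃ x, t < g x)
    (hfgh : ∀ t, 0 < t → ∀ x y, t < f x → t < g y → t < h ((2⁻¹ : ℝ) • (x + y))) :
    (∫⁻ x, ENNReal.ofReal (f x)) + ∫⁻ x, ENNReal.ofReal (g x)
      ≤ 2 * ∫⁻ x, ENNReal.ofReal (h x) := by
  rw [lintegral_eq_lintegral_meas_lt _ (.of_forall hf₀) hf.aemeasurable,
    lintegral_eq_lintegral_meas_lt _ (.of_forall hg₀) hg.aemeasurable,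
    lintegral_eq_lintegral_meas_lt _ (.of_forall hh₀) hh.aemeasurable,
    ← lintegral_const_mul' _ _ (by simp)]
  refine (le_lintegral_add _ _).trans (setLIntegral_mono' measurableSet_Ioi fun t ht ↦ ?_)
  have ht₀ : 0 < t := ht
  rcases lt_or_ge t 1 with ht₁ | ht₁
  · calc volume {x | t < f x} + volume {x | t < g x}
        ≤ volume ({x | t < f x} + {x | t < g x}) :=
          Real.volume_add_le_volume_add (measurableSet_lt measurable_const hf)
            (measurableSet_lt measurable_const hg) (hfsup t ht₁) (hgsup t ht₁)
      _ ≤ volume ((2 : ℝ) • {x | t < h x}) := by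
          refine measure_mono ?_
          rintro _ ⟨x, hx, y, hy, rfl⟩
          exact ⟨_, hfgh t ht₀ x y hx hy, by simp⟩
      _ = 2 * volume {x | t < h x} := by
          simp [Measure.addHaar_smul]
  · have hf' : {x | t < f x} = ∅ :=
      Set.eq_empty_of_forall_notMem fun x hx ↦ (hx.trans_le (hf₁ x)).not_ge ht₁
    have hg' : {x | t < g x} = ∅ :=
      Set.eq_empty_of_forall_notMem fun x hx ↦ (hx.trans_le (hg₁ x)).not_ge ht₁
    simp [hf', hg']

theorem ENNReal.mul_le_sq_of_add_le_two_mul {a b c : ℝ≥0∞} (h : a + b ≤ 2 * c) :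
    a * b ≤ c ^ 2 := by
  rcases eq_or_ne c ∞ with rfl | hc
  · simp
  have hab : a + b ≠ ∞ := ne_top_of_le_ne_top (by finiteness) h
  lift a to NNReal using (ENNReal.add_ne_top.1 hab).1
  lift b to NNReal using (ENNReal.add_ne_top.1 hab).2
  lift c to NNReal using hc
  norm_cast at h ⊢
  have h' : (a : ℝ) + b ≤ 2 * c := by exact_mod_cast h
  have : (a : ℝ) * b ≤ c ^ 2 := by
    nlinarith [sq_nonneg ((a : ℝ) - b), a.2, b.2, c.2, sq_nonneg ((a : ℝ) + b)]
  exact_mod_cast this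

theorem lintegral_mul_lintegral_le_sq_of_iSup_eq_one {f g h : ℝ → ℝ≥0∞} (hf : Measurable f)
    (hg : Measurable g) (hh : Measurable h) (hfsup : ⨆ x, f x = 1) (hgsup : ⨆ x, g x = 1)
    (hfgh : ∀ x y, f x * g y ≤ h ((2⁻¹ : ℝ) • (x + y)) ^ 2) :
    (∫⁻ x, f x) * ∫⁻ x, g x ≤ (∫⁻ x, h x) ^ 2 := by
  have le_one {u : ℝ → ℝ≥0∞} (hu : ⨆ x, u x = 1) (x : ℝ) : u x ≤ 1 := hu ▸ le_iSup u x
  have ne_top {u : ℝ → ℝ≥0∞} (hu : ⨆ x, u x = 1) (x : ℝ) : u x ≠ ∞ :=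
    ne_top_of_le_ne_top ENNReal.one_ne_top (le_one hu x)
  have exists_lt {u : ℝ → ℝ≥0∞} (hu : ⨆ x, u x = 1) (t : ℝ) (ht : t < 1) :
      ∃ x, t < (u x).toReal := by
    have ht' : ENNReal.ofReal t < ⨆ x, u x := by rw [hu]; simpa using ht
    obtain ⟨x, hx⟩ := lt_iSup_iff.1 ht'
    refine ⟨x, ?_⟩
    calc t ≤ (ENNReal.ofReal t).toReal := Real.le_coe_toNNReal t
      _ < (u x).toReal := ENNReal.toReal_strict_mono (ne_top hu x) hx
  have hmin (x : ℝ) : min (h x) 1 ≠ ∞ := ne_top_of_le_ne_top ENNReal.one_ne_top (min_le_right _ _)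
  have key := lintegral_add_le_two_mul_lintegral_of_forall_lt (f := fun x ↦ (f x).toReal)
    (g := fun x ↦ (g x).toReal) (h := fun x ↦ (min (h x) 1).toReal) hf.ennreal_toReal
    hg.ennreal_toReal (hh.min measurable_const).ennreal_toReal
    (fun _ ↦ ENNReal.toReal_nonneg) (fun _ ↦ ENNReal.toReal_nonneg)
    (fun _ ↦ ENNReal.toReal_nonneg)
    (fun x ↦ ENNReal.toReal_mono ENNReal.one_ne_top (le_one hfsup x))
    (fun x ↦ ENNReal.toReal_mono ENNReal.one_ne_top (le_one hgsup x))
    (exists_lt hfsup) (exists_lt hgsup) ?_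
  · simp only [ENNReal.ofReal_toReal (ne_top hfsup _), ENNReal.ofReal_toReal (ne_top hgsup _),
      ENNReal.ofReal_toReal (hmin _)] at key
    refine ENNReal.mul_le_sq_of_add_le_two_mul (key.trans ?_)
    gcongr
    exact min_le_left _ _
  · intro t ht x y hx hy
    rw [← ENNReal.ofReal_lt_iff_lt_toReal ht.le (ne_top hfsup _)] at hx
    rw [← ENNReal.ofReal_lt_iff_lt_toReal ht.le (ne_top hgsup _)] at hy
    rw [← ENNReal.ofReal_lt_iff_lt_toReal ht.le (hmin _), lt_min_iff]
    refine ⟨lt_of_pow_lt_pow_left' 2 ?_, hx.trans_le (le_one hfsup x)⟩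
    calc ENNReal.ofReal t ^ 2 = ENNReal.ofReal t * ENNReal.ofReal t := sq _
      _ < f x * g y := ENNReal.mul_lt_mul hx hy
      _ ≤ _ := hfgh x y

theorem lintegral_mul_lintegral_le_sq_of_iSup_ne_top {f g h : ℝ → ℝ≥0∞} (hf : Measurable f)
    (hg : Measurable g) (hh : Measurable h) (hfsup : (⨆ x, f x) ≠ ∞) (hgsup : (⨆ x, g x) ≠ ∞)
    (hfgh : ∀ x y, f x * g y ≤ h ((2⁻¹ : ℝ) • (x + y)) ^ 2) :
    (∫⁻ x, f x) * ∫⁻ x, g x ≤ (∫⁻ x, h x) ^ 2 := by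
  set A := ⨆ x, f x with hA
  set B := ⨆ x, g x with hB
  rcases eq_or_ne A 0 with hA₀ | hA₀
  · have : f = 0 := funext (ENNReal.iSup_eq_zero.1 hA₀)
    simp [this]
  rcases eq_or_ne B 0 with hB₀ | hB₀
  · have : g = 0 := funext (ENNReal.iSup_eq_zero.1 hB₀)
    simp [this]
  obtain ⟨c, hc⟩ : ∃ c : ℝ≥0∞, c ^ 2 = A * B :=
    ⟨(A * B) ^ (2⁻¹ : ℝ), by rw [← ENNReal.rpow_two, ← ENNReal.rpow_mul]; simp⟩
  have hinv : A⁻¹ * B⁻¹ = c⁻¹ ^ 2 := by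
    rw [← ENNReal.mul_inv (.inl hA₀) (.inl hfsup), ← hc, ENNReal.inv_pow]
  have key := lintegral_mul_lintegral_le_sq_of_iSup_eq_one (f := fun x ↦ A⁻¹ * f x)
    (g := fun x ↦ B⁻¹ * g x) (h := fun x ↦ c⁻¹ * h x) (hf.const_mul _) (hg.const_mul _)
    (hh.const_mul _)
    (by rw [← ENNReal.mul_iSup, ← hA, ENNReal.inv_mul_cancel hA₀ hfsup])
    (by rw [← ENNReal.mul_iSup, ← hB, ENNReal.inv_mul_cancel hB₀ hgsup])
    (fun x y ↦ by
      rw [mul_mul_mul_comm, hinv, mul_pow]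
      gcongr
      exact hfgh x y)
  rw [lintegral_const_mul _ hf, lintegral_const_mul _ hg, lintegral_const_mul _ hh,
    mul_mul_mul_comm, hinv, mul_pow] at key
  have hAB₀ : c ^ 2 ≠ 0 := hc ▸ mul_ne_zero hA₀ hB₀
  have hAB : c ^ 2 ≠ ∞ := hc ▸ ENNReal.mul_ne_top hfsup hgsup
  rwa [← ENNReal.inv_pow, ENNReal.mul_le_mul_iff_right (ENNReal.inv_ne_zero.2 hAB)
    (ENNReal.inv_ne_top.2 hAB₀)] at key

/-- The midpoint form of the one-dimensional **Prékopa–Leindler inequality**. -/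
theorem Real.lintegral_mul_lintegral_le_sq {f g h : ℝ → ℝ≥0∞} (hf : Measurable f)
    (hg : Measurable g) (hh : Measurable h)
    (hfgh : ∀ x y, f x * g y ≤ h ((2⁻¹ : ℝ) • (x + y)) ^ 2) :
    (∫⁻ x, f x) * ∫⁻ x, g x ≤ (∫⁻ x, h x) ^ 2 := by
  have lintegral_eq {u : ℝ → ℝ≥0∞} (hu : Measurable u) :
      ∫⁻ x, u x = ⨆ N : ℕ, ∫⁻ x, min (u x) N := by
    rw [← lintegral_iSup (fun N ↦ hu.min measurable_const)
      (fun M N hMN x ↦ min_le_min_left _ (by exact_mod_cast hMN))]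
    refine lintegral_congr fun x ↦ ?_
    rw [← inf_iSup_eq, ENNReal.iSup_natCast, inf_top_eq]
  have iSup_ne_top (u : ℝ → ℝ≥0∞) (N : ℕ) : (⨆ x, min (u x) (N : ℝ≥0∞)) ≠ ∞ :=
    ne_top_of_le_ne_top (ENNReal.natCast_ne_top N) (iSup_le fun _ ↦ min_le_right _ _)
  rw [lintegral_eq hf, lintegral_eq hg]
  rw [ENNReal.iSup_mul]
  refine iSup_le fun M ↦ ?_
  rw [ENNReal.mul_iSup]
  refine iSup_le fun N ↦ ?_
  exact lintegral_mul_lintegral_le_sq_of_iSup_ne_top (hf.min measurable_const)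
    (hg.min measurable_const) hh (iSup_ne_top f M) (iSup_ne_top g N)
    fun x y ↦ (mul_le_mul' (min_le_left _ _) (min_le_left _ _)).trans (hfgh x y)

/-- The midpoint form of the **Prékopa–Leindler inequality** on `Fin n → ℝ`. -/
theorem lintegral_mul_lintegral_le_sq_pi (n : ℕ) {f g h : (Fin n → ℝ) → ℝ≥0∞}
    (hf : Measurable f) (hg : Measurable g) (hh : Measurable h)
    (hfgh : ∀ x y, f x * g y ≤ h ((2⁻¹ : ℝ) • (x + y)) ^ 2) :
    (∫⁻ x, f x) * ∫⁻ x, g x ≤ (∫⁻ x, h x) ^ 2 := by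
  induction n with
  | zero =>
    have hval (u : (Fin 0 → ℝ) → ℝ≥0∞) : ∫⁻ x, u x = u 0 := by
      rw [lintegral_unique, Unique.default_eq (0 : Fin 0 → ℝ)]
      simp [volume_pi]
    simpa [hval] using hfgh 0 0
  | succ n ih =>
    let e := (MeasurableEquiv.piFinSuccAbove (fun _ : Fin (n + 1) ↦ ℝ) 0).symm
    have he : MeasurePreserving e :=
      (volume_preserving_piFinSuccAbove (fun _ : Fin (n + 1) ↦ ℝ) 0).symm
    have hslice {u : (Fin (n + 1) → ℝ) → ℝ≥0∞} (hu : Measurable u) :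
        ∫⁻ x, u x = ∫⁻ s, ∫⁻ y, u (e (s, y)) := by
      rw [← he.lintegral_comp hu]
      exact lintegral_prod _ (hu.comp e.measurable).aemeasurable
    have hmeas {u : (Fin (n + 1) → ℝ) → ℝ≥0∞} (hu : Measurable u) :
        Measurable fun p : ℝ × (Fin n → ℝ) ↦ u (e p) := hu.comp e.measurable
    have hmid (s t : ℝ) (x y : Fin n → ℝ) :
        e ((2⁻¹ : ℝ) • (s + t), (2⁻¹ : ℝ) • (x + y)) = (2⁻¹ : ℝ) • (e (s, x) + e (t, y)) := by
      ext i
      refine Fin.cases ?_ (fun j ↦ ?_) i <;>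
        simp [e, MeasurableEquiv.piFinSuccAbove, mul_add]
    rw [hslice hf, hslice hg, hslice hh]
    refine Real.lintegral_mul_lintegral_le_sq (hmeas hf).lintegral_prod_right'
      (hmeas hg).lintegral_prod_right' (hmeas hh).lintegral_prod_right' fun s t ↦ ?_
    refine ih ((hmeas hf).comp measurable_prodMk_left) ((hmeas hg).comp measurable_prodMk_left)
      ((hmeas hh).comp measurable_prodMk_left) fun x y ↦ ?_
    simp only [hmid]
    exact hfgh _ _

/-- The midpoint form of the **Prékopa–Leindler inequality** on Euclidean space. -/
theorem EuclideanSpace.lintegral_mul_lintegral_le_sq {n : ℕ}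
    {f g h : EuclideanSpace ℝ (Fin n) → ℝ≥0∞}
    (hf : Measurable f) (hg : Measurable g) (hh : Measurable h)
    (hfgh : ∀ x y, f x * g y ≤ h ((2⁻¹ : ℝ) • (x + y)) ^ 2) :
    (∫⁻ x, f x) * ∫⁻ x, g x ≤ (∫⁻ x, h x) ^ 2 := by
  have he := PiLp.volume_preserving_toLp (Fin n)
  rw [← he.lintegral_comp hf, ← he.lintegral_comp hg, ← he.lintegral_comp hh]
  exact lintegral_mul_lintegral_le_sq_pi n (hf.comp he.measurable) (hg.comp he.measurable)
    (hh.comp he.measurable) fun x y ↦ hfgh _ _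

/-- The midpoint form of the Prékopa–Leindler inequality for set integrals over a compact
convex subset of Euclidean space. -/
theorem Convex.setIntegral_mul_setIntegral_le_sq {n : ℕ} {K : Set (EuclideanSpace ℝ (Fin n))}
    (hK : Convex ℝ K) (hKc : IsCompact K) {f g h : EuclideanSpace ℝ (Fin n) → ℝ}
    (hf : Continuous f) (hg : Continuous g) (hh : Continuous h)
    (hf₀ : 0 ≤ f) (hg₀ : 0 ≤ g) (hh₀ : 0 ≤ h)
    (hfgh : ∀ x ∈ K, ∀ y ∈ K, f x * g y ≤ h ((2⁻¹ : ℝ) • (x + y)) ^ 2) :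
    (∫ x in K, f x) * ∫ x in K, g x ≤ (∫ x in K, h x) ^ 2 := by
  have hKm := hKc.measurableSet
  have heq {u : EuclideanSpace ℝ (Fin n) → ℝ} (hu : Continuous u) (hu₀ : 0 ≤ u) :
      ENNReal.ofReal (∫ x in K, u x) = ∫⁻ x, K.indicator (fun x ↦ ENNReal.ofReal (u x)) x := by
    rw [ofReal_integral_eq_lintegral_ofReal (hu.continuousOn.integrableOn_compact hKc)
      (.of_forall hu₀), lintegral_indicator hKm]
  have hmeas {u : EuclideanSpace ℝ (Fin n) → ℝ} (hu : Continuous u) :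
      Measurable (K.indicator fun x ↦ ENNReal.ofReal (u x)) :=
    hu.measurable.ennreal_ofReal.indicator hKm
  have hint₀ {u : EuclideanSpace ℝ (Fin n) → ℝ} (hu₀ : 0 ≤ u) : 0 ≤ ∫ x in K, u x :=
    integral_nonneg hu₀
  rw [← ENNReal.ofReal_le_ofReal_iff (by positivity), ENNReal.ofReal_mul (hint₀ hf₀),
    ENNReal.ofReal_pow (hint₀ hh₀), heq hf hf₀, heq hg hg₀, heq hh hh₀]
  refine EuclideanSpace.lintegral_mul_lintegral_le_sq (hmeas hf) (hmeas hg) (hmeas hh)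
    fun x y ↦ ?_
  by_cases hx : x ∈ K
  · by_cases hy : y ∈ K
    · have hxy : (2⁻¹ : ℝ) • (x + y) ∈ K := by
        rw [smul_add]
        exact hK hx hy (by norm_num) (by norm_num) (by norm_num)
      rw [Set.indicator_of_mem hx, Set.indicator_of_mem hy, Set.indicator_of_mem hxy,
        ← ENNReal.ofReal_mul (hf₀ x), ← ENNReal.ofReal_pow (hh₀ _)]
      exact ENNReal.ofReal_le_ofReal (hfgh x hx y hy)
    · simp [hy]
  · simp [hx]

/-- Completing the square: the defect from the parallelogram law absorbs the difference of the
two Gaussian exponents. -/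
theorem norm_midpoint_sq_le {E : Type*} [NormedAddCommGroup E] [InnerProductSpace ℝ E]
    (α : ℝ) (x y : E) :
    2 * ‖(2⁻¹ : ℝ) • (x + y)‖ ^ 2 ≤ (1 + α) * ‖x‖ ^ 2 + (1 - α) * ‖y‖ ^ 2
      + 2 * α ^ 2 * ‖(2⁻¹ : ℝ) • (x + y)‖ ^ 2 := by
  have h := sq_nonneg ‖(x - y) + α • (x + y)‖
  have hs : ‖(2⁻¹ : ℝ) • (x + y)‖ ^ 2 = ‖x + y‖ ^ 2 / 4 := by
    rw [norm_smul, mul_pow]; norm_num; ring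
  have hinner : inner ℝ (x - y) (x + y) = ‖x‖ ^ 2 - ‖y‖ ^ 2 := by
    rw [inner_sub_left, inner_add_right, inner_add_right, real_inner_self_eq_norm_sq,
      real_inner_self_eq_norm_sq, real_inner_comm x y]
    ring
  rw [norm_add_sq_real, norm_smul, mul_pow, Real.norm_eq_abs, sq_abs, inner_smul_right,
    hinner] at h
  rw [hs]
  linarith [parallelogram_law_with_norm ℝ x y]

/-- Variance bound for the ratio estimator (accelerated cooling):
for a convex body `K ⊆ C√n·B_n`, with `F(s) = ∫_K exp(-‖x‖²/(2s)) dx`,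
and `0 < α ≤ 1/2`, one has
`F(σ²/(1+α)) · F(σ²/(1-α)) ≤ exp(2C²α²n/σ²) · F(σ²)²`. -/
theorem variance_bound_accelerated_cooling
    (n : ℕ) (hn : 1 ≤ n) (C : ℝ) (hC : 0 < C)
    (K : Set (EuclideanSpace ℝ (Fin n)))
    (hKconv : Convex ℝ K) (hKcomp : IsCompact K) (hKint : (interior K).Nonempty)
    (hKsub : K ⊆ Metric.closedBall 0 (C * Real.sqrt n))
    (σ α : ℝ) (hσ : 0 < σ) (hα0 : 0 < α) (hα : α ≤ 1 / 2) :
    (∫ x in K, Real.exp (-‖x‖ ^ 2 / (2 * (σ ^ 2 / (1 + α))))) *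
      (∫ x in K, Real.exp (-‖x‖ ^ 2 / (2 * (σ ^ 2 / (1 - α))))) ≤
    Real.exp (2 * C ^ 2 * α ^ 2 * n / σ ^ 2) *
      (∫ x in K, Real.exp (-‖x‖ ^ 2 / (2 * σ ^ 2))) ^ 2 := by
  set c := C ^ 2 * α ^ 2 * n / σ ^ 2 with hc
  have hexp : Real.exp (2 * C ^ 2 * α ^ 2 * n / σ ^ 2) = Real.exp c ^ 2 := by
    rw [← Real.exp_nat_mul, hc]
    congr 1
    push_cast
    ring
  rw [hexp, ← mul_pow, ← integral_const_mul (Real.exp c)]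
  refine hKconv.setIntegral_mul_setIntegral_le_sq hKcomp ?_ ?_ ?_
    (fun _ ↦ (Real.exp_pos _).le) (fun _ ↦ (Real.exp_pos _).le)
    (fun _ ↦ (mul_pos (Real.exp_pos _) (Real.exp_pos _)).le) fun x hx y hy ↦ ?_
  iterate 3 fun_prop
  have hz : (2⁻¹ : ℝ) • (x + y) ∈ K := by
    rw [smul_add]
    exact hKconv hx hy (by norm_num) (by norm_num) (by norm_num)
  have hnorm : ‖(2⁻¹ : ℝ) • (x + y)‖ ^ 2 ≤ C ^ 2 * n := by
    have := hKsub hz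
    rw [mem_closedBall_zero_iff] at this
    calc ‖(2⁻¹ : ℝ) • (x + y)‖ ^ 2 ≤ (C * √n) ^ 2 := by gcongr
      _ = C ^ 2 * n := by rw [mul_pow, Real.sq_sqrt (by positivity)]
  have hmid := norm_midpoint_sq_le α x y
  rw [← Real.exp_add, ← Real.exp_add, ← Real.exp_nat_mul, Real.exp_le_exp]
  set z := ‖(2⁻¹ : ℝ) • (x + y)‖
  have h1α : 0 < 1 - α := by linarith
  have hα2 := mul_le_mul_of_nonneg_left hnorm (sq_nonneg α)
  have hnn : 0 ≤ C ^ 2 * α ^ 2 * n := by positivity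
  have hdiff : ((2 : ℕ) : ℝ) * (c + -z ^ 2 / (2 * σ ^ 2)) - (-‖x‖ ^ 2 / (2 * (σ ^ 2 / (1 + α)))
      + -‖y‖ ^ 2 / (2 * (σ ^ 2 / (1 - α))))
      = (4 * (C ^ 2 * α ^ 2 * n) - 2 * z ^ 2 + (1 + α) * ‖x‖ ^ 2 + (1 - α) * ‖y‖ ^ 2)
        / (2 * σ ^ 2) := by
    rw [hc]
    field_simp
    push_cast
    ring
  rw [← sub_nonneg, hdiff]
  apply div_nonneg _ (by positivity)
  nlinarith
end

section
/- Let n ≥ 1, σ > 0 with σ² ≤ 64n, and δ ≤ σ/(8√n). Let u, x ∈ ℝⁿ with ‖u‖ ≤ 4σ√n and ‖x − u‖ ≤ δ. Then exp(−(‖x‖² − ‖u‖²)/(2σ²)) ≥ 1/e. In particular, for f(x) = exp(−‖x‖²/(2σ²)), the Metropolis acceptance probability min{1, f(x)/f(u)} is at least 1/e. -/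
open MeasureTheory

/-- Metropolis acceptance probability bound for the ball walk with step size
`δ ≤ σ/(8√n)` on the Gaussian of variance `σ² ≤ 64n` restricted to `4σ√n·B_n`:
if `‖u‖ ≤ 4σ√n` and `‖x - u‖ ≤ δ`, then `exp(-(‖x‖²-‖u‖²)/(2σ²)) ≥ 1/e`, and in
particular `min{1, f(x)/f(u)} ≥ 1/e` for `f(x) = exp(-‖x‖²/(2σ²))`. -/
theorem metropolis_acceptance_bound
    (n : ℕ) (hn : 1 ≤ n) (σ δ : ℝ) (hσ : 0 < σ) (hσ2 : σ ^ 2 ≤ 64 * n)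
    (hδ : δ ≤ σ / (8 * Real.sqrt n))
    (u x : EuclideanSpace ℝ (Fin n))
    (hu : ‖u‖ ≤ 4 * σ * Real.sqrt n) (hxu : ‖x - u‖ ≤ δ) :
    1 / Real.exp 1 ≤ Real.exp (-(‖x‖ ^ 2 - ‖u‖ ^ 2) / (2 * σ ^ 2)) ∧
    1 / Real.exp 1 ≤
      min 1 (Real.exp (-‖x‖ ^ 2 / (2 * σ ^ 2)) / Real.exp (-‖u‖ ^ 2 / (2 * σ ^ 2))) := by
  have hs : 1 ≤ Real.sqrt n := Real.one_le_sqrt.mpr (by exact_mod_cast hn)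
  have hd : ‖x - u‖ * (8 * Real.sqrt n) ≤ σ :=
    (le_div_iff₀ (by positivity)).mp (hxu.trans hδ)
  have hd0 : 0 ≤ ‖x - u‖ := norm_nonneg _
  have hx : ‖x‖ ≤ ‖u‖ + ‖x - u‖ := norm_le_norm_add_norm_sub' x u
  have hcross : 2 * ‖u‖ * ‖x - u‖ ≤ σ ^ 2 := by
    have h₁ := mul_le_mul_of_nonneg_right hu hd0
    have h₂ := mul_le_mul_of_nonneg_left hd hσ.le
    linarith
  have hstep : ‖x - u‖ ≤ σ := by nlinarith
  have hsq : ‖x - u‖ ^ 2 ≤ σ ^ 2 := by gcongr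
  have hx2 : ‖x‖ ^ 2 ≤ (‖u‖ + ‖x - u‖) ^ 2 := by gcongr
  have key : Real.exp (-1) ≤ Real.exp (-(‖x‖ ^ 2 - ‖u‖ ^ 2) / (2 * σ ^ 2)) := by
    rw [Real.exp_le_exp, le_div_iff₀ (by positivity)]
    linarith
  rw [one_div, ← Real.exp_neg, ← Real.exp_sub, ← sub_div,
    show -‖x‖ ^ 2 - -‖u‖ ^ 2 = -(‖x‖ ^ 2 - ‖u‖ ^ 2) by ring]
  exact ⟨key, le_min (Real.exp_le_one_iff.mpr (by norm_num)) key⟩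
end

section
/- Let n ≥ 1 and let K ⊆ ℝⁿ be a convex body with 0 ∈ K. Let σ_i > 0, let σ_{i+1}² = σ_i²·(1 + 1/n), and let f_i(x) = exp(−‖x‖²/(2σ_i²)), f_{i+1}(x) = exp(−‖x‖²/(2σ_{i+1}²)). Let Q_i and Q_{i+1} be the probability measures on K with densities proportional to f_i and f_{i+1} respectively. Then for every measurable S ⊆ K, Q_i(S) ≤ √e · Q_{i+1}(S); i.e., the warmness M(Q_i, Q_{i+1}) = sup_{S ⊆ K} Q_i(S)/Q_{i+1}(S) is at most √e. -/
open MeasureTheory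
open scoped Pointwise

/-- Rescaling a convex set containing the origin: stretching a nonnegative integrand by `c ≥ 1`
increases its integral by a factor of at most `c ^ finrank`. -/
theorem setIntegral_comp_inv_smul_le {E : Type*} [NormedAddCommGroup E] [NormedSpace ℝ E]
    [FiniteDimensional ℝ E] [MeasurableSpace E] [BorelSpace E] (μ : Measure E)
    [μ.IsAddHaarMeasure] {K : Set E} (hK : Convex ℝ K) (h0 : (0 : E) ∈ K) {f : E → ℝ}
    (hf : ∀ x, 0 ≤ f x) (hfi : IntegrableOn f K μ) {c : ℝ} (hc : 1 ≤ c) :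
    ∫ x in K, f (c⁻¹ • x) ∂μ ≤ c ^ Module.finrank ℝ E * ∫ x in K, f x ∂μ := by
  have hc0 : 0 < c := by linarith
  rw [Measure.setIntegral_comp_smul_of_pos μ f K (inv_pos.2 hc0), smul_eq_mul, inv_pow, inv_inv]
  refine mul_le_mul_of_nonneg_left ?_ (by positivity)
  refine setIntegral_mono_set hfi (Filter.Eventually.of_forall hf) (LE.le.eventuallyLE ?_)
  rintro _ ⟨x, hx, rfl⟩
  exact hK.smul_mem_of_zero_mem h0 hx ⟨by positivity, inv_le_one_of_one_le₀ hc⟩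

/-- The compound-interest bound `(1 + 1/n) ^ (n/2) ≤ √e`. -/
theorem sqrt_one_add_inv_pow_le (n : ℕ) :
    √(1 + 1 / (n : ℝ)) ^ n ≤ √(Real.exp 1) := by
  apply Real.le_sqrt_of_sq_le
  rw [← pow_mul, mul_comm, pow_mul, Real.sq_sqrt (by positivity)]
  calc (1 + 1 / (n : ℝ)) ^ n ≤ Real.exp (1 / n) ^ n := by
        gcongr
        rw [add_comm]
        exact Real.add_one_le_exp _
    _ = Real.exp (n * (1 / n)) := (Real.exp_nat_mul _ _).symm
    _ ≤ Real.exp 1 := Real.exp_le_exp.2 (by rw [mul_one_div]; exact div_self_le_one _)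

/-- Warm start at the fixed cooling rate: for a convex body `K ∋ 0` and
`σ_{i+1}² = σ_i²(1 + 1/n)`, the distributions `Q_i, Q_{i+1}` on `K` with
densities proportional to `exp(-‖x‖²/(2σ_i²))`, `exp(-‖x‖²/(2σ_{i+1}²))`
satisfy `Q_i(S) ≤ √e · Q_{i+1}(S)` for every measurable `S ⊆ K`. -/
theorem warm_start_fixed_rate
    (n : ℕ) (hn : 1 ≤ n)
    (K : Set (EuclideanSpace ℝ (Fin n)))
    (hKconv : Convex ℝ K) (hKcomp : IsCompact K) (hKint : (interior K).Nonempty)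
    (h0K : (0 : EuclideanSpace ℝ (Fin n)) ∈ K)
    (σ : ℝ) (hσ : 0 < σ)
    (S : Set (EuclideanSpace ℝ (Fin n))) (hS : MeasurableSet S) (hSK : S ⊆ K) :
    (∫ x in S, Real.exp (-‖x‖ ^ 2 / (2 * σ ^ 2))) /
      (∫ x in K, Real.exp (-‖x‖ ^ 2 / (2 * σ ^ 2))) ≤
    Real.sqrt (Real.exp 1) *
      ((∫ x in S, Real.exp (-‖x‖ ^ 2 / (2 * (σ ^ 2 * (1 + 1 / n))))) /
        (∫ x in K, Real.exp (-‖x‖ ^ 2 / (2 * (σ ^ 2 * (1 + 1 / n)))))) := by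
  set f : EuclideanSpace ℝ (Fin n) → ℝ := fun x => Real.exp (-‖x‖ ^ 2 / (2 * σ ^ 2)) with hf
  set g : EuclideanSpace ℝ (Fin n) → ℝ :=
    fun x => Real.exp (-‖x‖ ^ 2 / (2 * (σ ^ 2 * (1 + 1 / n)))) with hg
  have hfK : IntegrableOn f K :=
    (by fun_prop : Continuous f).continuousOn.integrableOn_compact hKcomp
  have hgK : IntegrableOn g K :=
    (by fun_prop : Continuous g).continuousOn.integrableOn_compact hKcomp
  have hvol : volume K ≠ 0 := (Measure.measure_pos_of_nonempty_interior _ hKint).ne'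
  have : NeZero (volume.restrict K) := ⟨by rwa [Ne, Measure.restrict_eq_zero]⟩
  have hfpos : 0 < ∫ x in K, f x := integral_exp_pos hfK
  have hgpos : 0 < ∫ x in K, g x := integral_exp_pos hgK
  have hrate : 1 ≤ 1 + 1 / (n : ℝ) := le_add_of_nonneg_right (by positivity)
  have hS_le : ∫ x in S, f x ≤ ∫ x in S, g x := by
    refine setIntegral_mono (hfK.mono_set hSK) (hgK.mono_set hSK) fun x => Real.exp_le_exp.2 ?_
    rw [neg_div, neg_div, neg_le_neg_iff]
    gcongr
    exact le_mul_of_one_le_right (by positivity) hrate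
  have hgf : ∀ x, g x = f ((√(1 + 1 / (n : ℝ)))⁻¹ • x) := fun x => by
    simp only [hf, hg, norm_smul, norm_inv, Real.norm_eq_abs, mul_pow, inv_pow, sq_abs]
    rw [Real.sq_sqrt (by positivity)]
    congr 1
    field_simp
  have hK_le : ∫ x in K, g x ≤ √(Real.exp 1) * ∫ x in K, f x := by
    have h := setIntegral_comp_inv_smul_le volume hKconv h0K (fun x => (Real.exp_pos _).le) hfK
      (Real.one_le_sqrt.2 hrate)
    rw [finrank_euclideanSpace_fin] at h
    simp only [hgf]
    exact h.trans (mul_le_mul_of_nonneg_right (sqrt_one_add_inv_pow_le n) hfpos.le)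
  have hS_nonneg : 0 ≤ ∫ x in S, g x := integral_nonneg fun x => (Real.exp_pos _).le
  rw [← mul_div_assoc, div_le_div_iff₀ hfpos hgpos]
  calc (∫ x in S, f x) * ∫ x in K, g x
      ≤ (∫ x in S, g x) * (√(Real.exp 1) * ∫ x in K, f x) := by gcongr
    _ = √(Real.exp 1) * (∫ x in S, g x) * ∫ x in K, f x := by ring
end

section
/- Let n ≥ 1, C > 0, and let K ⊆ ℝⁿ be a convex body with 0 ∈ K and K ⊆ C√n·B_n. Let σ_i > 0, let σ_{i+1}² = σ_i²·(1 + σ_i²/(C²n)), and let f_i(x) = exp(−‖x‖²/(2σ_i²)), f_{i+1}(x) = exp(−‖x‖²/(2σ_{i+1}²)). Let Q_i and Q_{i+1} be the probability measures on K with densities proportional to f_i and f_{i+1} respectively. Then for every measurable S ⊆ K, Q_i(S) ≤ √e · Q_{i+1}(S); i.e., the warmness M(Q_i, Q_{i+1}) = sup_{S ⊆ K} Q_i(S)/Q_{i+1}(S) is at most √e. -/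
open MeasureTheory

/-- Warmness bound from pointwise domination: if `f ≤ g ≤ c • f` on `K`, then the normalizations of
`f` and `g` to `K` satisfy `Q_f(S) ≤ c * Q_g(S)` for `S ⊆ K`. -/
theorem setIntegral_div_le_mul_setIntegral_div {α : Type*} [MeasurableSpace α] {μ : Measure α}
    {f g : α → ℝ} {c : ℝ} {S K : Set α} (hS : MeasurableSet S) (hK : MeasurableSet K)
    (hSK : S ⊆ K) (hf : IntegrableOn f K μ) (hg : IntegrableOn g K μ) (hc : 0 < c)
    (hg0 : ∀ x ∈ K, 0 ≤ g x) (hfg : ∀ x ∈ K, f x ≤ g x) (hgf : ∀ x ∈ K, g x ≤ c * f x)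
    (hpos : 0 < ∫ x in K, g x ∂μ) :
    (∫ x in S, f x ∂μ) / (∫ x in K, f x ∂μ) ≤
      c * ((∫ x in S, g x ∂μ) / (∫ x in K, g x ∂μ)) := by
  have hnum : ∫ x in S, f x ∂μ ≤ ∫ x in S, g x ∂μ :=
    setIntegral_mono_on (hf.mono_set hSK) (hg.mono_set hSK) hS fun x hx => hfg x (hSK hx)
  have hden : ∫ x in K, g x ∂μ ≤ c * ∫ x in K, f x ∂μ := by
    rw [← integral_const_mul]
    exact setIntegral_mono_on hg (hf.const_mul c) hK hgf
  have hS0 : 0 ≤ ∫ x in S, g x ∂μ := setIntegral_nonneg hS fun x hx => hg0 x (hSK hx)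
  have hfpos : 0 < ∫ x in K, f x ∂μ := pos_of_mul_pos_right (hpos.trans_le hden) hc.le
  rw [← mul_div_assoc, div_le_div_iff₀ hfpos hpos]
  calc (∫ x in S, f x ∂μ) * ∫ x in K, g x ∂μ
      ≤ (∫ x in S, g x ∂μ) * (c * ∫ x in K, f x ∂μ) := by gcongr
    _ = c * (∫ x in S, g x ∂μ) * ∫ x in K, f x ∂μ := by ring

/-- Warm start at the accelerated cooling rate: for a convex body `K` with
`0 ∈ K ⊆ C√n·B_n` and `σ_{i+1}² = σ_i²(1 + σ_i²/(C²n))`, the distributions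
`Q_i, Q_{i+1}` on `K` with densities proportional to `exp(-‖x‖²/(2σ_i²))`,
`exp(-‖x‖²/(2σ_{i+1}²))` satisfy `Q_i(S) ≤ √e · Q_{i+1}(S)` for every
measurable `S ⊆ K`. -/
theorem warm_start_accelerated_rate
    (n : ℕ) (hn : 1 ≤ n) (C : ℝ) (hC : 0 < C)
    (K : Set (EuclideanSpace ℝ (Fin n)))
    (hKconv : Convex ℝ K) (hKcomp : IsCompact K) (hKint : (interior K).Nonempty)
    (h0K : (0 : EuclideanSpace ℝ (Fin n)) ∈ K)
    (hKsub : K ⊆ Metric.closedBall 0 (C * Real.sqrt n))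
    (σ : ℝ) (hσ : 0 < σ)
    (S : Set (EuclideanSpace ℝ (Fin n))) (hS : MeasurableSet S) (hSK : S ⊆ K) :
    (∫ x in S, Real.exp (-‖x‖ ^ 2 / (2 * σ ^ 2))) /
      (∫ x in K, Real.exp (-‖x‖ ^ 2 / (2 * σ ^ 2))) ≤
    Real.sqrt (Real.exp 1) *
      ((∫ x in S, Real.exp (-‖x‖ ^ 2 / (2 * (σ ^ 2 * (1 + σ ^ 2 / (C ^ 2 * n)))))) /
        (∫ x in K, Real.exp (-‖x‖ ^ 2 / (2 * (σ ^ 2 * (1 + σ ^ 2 / (C ^ 2 * n))))))) := by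
  have hn0 : (0 : ℝ) < n := by exact_mod_cast hn
  have hint (a : ℝ) :
      IntegrableOn (fun x : EuclideanSpace ℝ (Fin n) => Real.exp (-‖x‖ ^ 2 / a)) K :=
    ContinuousOn.integrableOn_compact hKcomp (by fun_prop)
  have hvol : volume K ≠ 0 :=
    (Measure.measure_pos_of_nonempty_interior volume hKint).ne'
  have : NeZero (volume.restrict K) := ⟨by simpa using hvol⟩
  refine setIntegral_div_le_mul_setIntegral_div hS hKcomp.measurableSet hSK (hint _) (hint _)
    (by positivity) (fun x _ => (Real.exp_pos _).le) (fun x _ => ?_) (fun x hx => ?_)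
    (integral_exp_pos (hint _))
  · rw [Real.exp_le_exp, neg_div, neg_div, neg_le_neg_iff]
    gcongr
    exact le_mul_of_one_le_right (by positivity) (le_add_of_nonneg_right (by positivity))
  · rw [← Real.exp_half, ← Real.exp_add, Real.exp_le_exp]
    have hnorm : ‖x‖ ^ 2 ≤ C ^ 2 * n := by
      have h := pow_le_pow_left₀ (norm_nonneg x) (mem_closedBall_zero_iff.mp (hKsub hx)) 2
      rwa [mul_pow, Real.sq_sqrt hn0.le] at h
    set D : ℝ := C ^ 2 * n
    have hD : 0 < D := by positivity
    have hgap : 1 / 2 + -‖x‖ ^ 2 / (2 * σ ^ 2) - -‖x‖ ^ 2 / (2 * (σ ^ 2 * (1 + σ ^ 2 / D))) =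
        (D + σ ^ 2 - ‖x‖ ^ 2) / (2 * (D + σ ^ 2)) := by
      field_simp
      ring
    have hgap0 : 0 ≤ (D + σ ^ 2 - ‖x‖ ^ 2) / (2 * (D + σ ^ 2)) :=
      div_nonneg (by nlinarith [sq_nonneg σ]) (by positivity)
    linarith
end

section
/- Let n ≥ 2, σ > 0, set s = min{σ, 1}. Then for every t ∈ [0,1], ∫₀^{t·s} x^{n−1} e^{−x²/(2σ²)} dx ≤ t · ∫₀^{s} x^{n−1} e^{−x²/(2σ²)} dx. -/
open MeasureTheory intervalIntegral

theorem monotoneOn_mul_exp_neg_sq {σ : ℝ} (hσ : 0 < σ) :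
    MonotoneOn (fun x : ℝ => x * Real.exp (-x ^ 2 / (2 * σ ^ 2))) (Set.Icc 0 σ) := by
  have hderiv (x : ℝ) : HasDerivAt (fun x : ℝ => x * Real.exp (-x ^ 2 / (2 * σ ^ 2)))
      ((1 - x ^ 2 / σ ^ 2) * Real.exp (-x ^ 2 / (2 * σ ^ 2))) x := by
    refine ((hasDerivAt_id' x).mul
      ((((hasDerivAt_id' x).pow 2).neg.div_const (2 * σ ^ 2)).exp)).congr_deriv ?_
    simp only [Pi.neg_apply, Pi.pow_apply]
    field_simp
    ring
  refine monotoneOn_of_deriv_nonneg (convex_Icc 0 σ) (by fun_prop)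
    (fun x _ => (hderiv x).differentiableAt.differentiableWithinAt) fun x hx => ?_
  rw [interior_Icc] at hx
  rw [(hderiv x).deriv]
  have hle : x ^ 2 / σ ^ 2 ≤ 1 :=
    div_le_one_of_le₀ (pow_le_pow_left₀ hx.1.le hx.2.le 2) (by positivity)
  exact mul_nonneg (sub_nonneg.2 hle) (Real.exp_pos _).le

theorem monotoneOn_pow_mul_exp_neg_sq {n : ℕ} (hn : n ≠ 0) {σ : ℝ} (hσ : 0 < σ) :
    MonotoneOn (fun x : ℝ => x ^ n * Real.exp (-x ^ 2 / (2 * σ ^ 2))) (Set.Icc 0 σ) := by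
  obtain ⟨k, rfl⟩ := Nat.exists_eq_succ_of_ne_zero hn
  intro x hx y hy hxy
  simp only [Nat.succ_eq_add_one, pow_succ _ k, mul_assoc]
  exact mul_le_mul (pow_le_pow_left₀ hx.1 hxy k) (monotoneOn_mul_exp_neg_sq hσ hx hy hxy)
    (mul_nonneg hx.1 (Real.exp_pos _).le) (pow_nonneg hy.1 k)

/-- If `f` is monotone on `[0, s]`, then its primitive `F` vanishing at `0` satisfies
`F (t * s) ≤ t * F s` for `t ∈ [0, 1]`. -/
theorem integral_zero_mul_le_of_monotoneOn {f : ℝ → ℝ} {s t : ℝ} (hf : Continuous f)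
    (hs : 0 ≤ s) (hmono : MonotoneOn f (Set.Icc 0 s)) (ht0 : 0 ≤ t) (ht1 : t ≤ 1) :
    ∫ x in (0 : ℝ)..(t * s), f x ≤ t * ∫ x in (0 : ℝ)..s, f x := by
  have hsubst := smul_integral_comp_mul_left (a := 0) (b := s) f t
  rw [mul_zero, smul_eq_mul] at hsubst
  rw [← hsubst]
  refine mul_le_mul_of_nonneg_left (integral_mono_on hs
    (Continuous.intervalIntegrable (by fun_prop) _ _) (hf.intervalIntegrable _ _)
    fun x hx => ?_) ht0
  have hle : t * x ≤ x := mul_le_of_le_one_left hx.1 ht1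
  exact hmono ⟨mul_nonneg ht0 hx.1, hle.trans hx.2⟩ hx hle

/-- One-dimensional key inequality for `min{σ,1}`-roundedness of the restricted
Gaussian: with `s = min{σ,1}`, for every `t ∈ [0,1]`,
`∫₀^{ts} x^{n-1} e^{-x²/(2σ²)} dx ≤ t · ∫₀^{s} x^{n-1} e^{-x²/(2σ²)} dx`. -/
theorem gaussian_radial_convexity
    (n : ℕ) (hn : 2 ≤ n) (σ : ℝ) (hσ : 0 < σ)
    (t : ℝ) (ht0 : 0 ≤ t) (ht1 : t ≤ 1) :
    (∫ x in (0 : ℝ)..(t * min σ 1), x ^ (n - 1) * Real.exp (-x ^ 2 / (2 * σ ^ 2))) ≤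
      t * ∫ x in (0 : ℝ)..(min σ 1), x ^ (n - 1) * Real.exp (-x ^ 2 / (2 * σ ^ 2)) :=
  integral_zero_mul_le_of_monotoneOn (by fun_prop) (le_min hσ.le zero_le_one)
    ((monotoneOn_pow_mul_exp_neg_sq (by omega) hσ).mono
      (Set.Icc_subset_Icc_right (min_le_left σ 1))) ht0 ht1
end

section
/- Let n ≥ 1, σ > 0, R₁ > 0, 0 < α < 1, and c > 0. Suppose that for every interval [ℓ,u] ⊆ [−R₁, R₁] and every γ ∈ ℝ, (∫_ℓ^u e^{γt} e^{−t²(1+α)/(2σ²)} dt) · (∫_ℓ^u e^{γt} e^{−t²(1−α)/(2σ²)} dt) ≤ c · (∫_ℓ^u e^{γt} e^{−t²/(2σ²)} dt)². Then for every logconcave function f : ℝⁿ → ℝ≥0 whose support is a compact subset of R₁·B_n, defining G(s) = ∫_{ℝⁿ} f(x) e^{−‖x‖²/(2s)} dx, one has G(σ²/(1+α)) · G(σ²/(1−α)) ≤ c · G(σ²)². -/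
open MeasureTheory intervalIntegral

/-- A nonnegative function is logconcave if
`f(λx + (1-λ)y) ≥ f(x)^λ · f(y)^{1-λ}`. -/
def LogConcaveFn {E : Type*} [AddCommMonoid E] [Module ℝ E] (f : E → ℝ) : Prop :=
  ∀ x y : E, ∀ l : ℝ, 0 ≤ l → l ≤ 1 →
    f x ^ l * f y ^ (1 - l) ≤ f (l • x + (1 - l) • y)

/-- One-dimensional Brunn–Minkowski inequality, with the target set containing the combination
assumed convex. -/
lemma volume_combo_le {A B C : Set ℝ} {l : ℝ} (hl0 : 0 < l) (hl1 : l < 1)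
    (hA : A.Nonempty) (hB : B.Nonempty) {R : ℝ} (hAR : A ⊆ Set.Icc (-R) R)
    (hBR : B ⊆ Set.Icc (-R) R) (hC : C.OrdConnected)
    (h : ∀ a ∈ A, ∀ b ∈ B, l * a + (1 - l) * b ∈ C) :
    ENNReal.ofReal l * volume A + ENNReal.ofReal (1 - l) * volume B ≤ volume C := by
  have hAa : BddAbove A := bddAbove_Icc.mono hAR
  have hAb : BddBelow A := bddBelow_Icc.mono hAR
  have hBa : BddAbove B := bddAbove_Icc.mono hBR
  have hBb : BddBelow B := bddBelow_Icc.mono hBR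
  have vA : volume A ≤ ENNReal.ofReal (sSup A - sInf A) := by
    rw [← Real.volume_Icc]
    exact measure_mono fun x hx => ⟨csInf_le hAb hx, le_csSup hAa hx⟩
  have vB : volume B ≤ ENNReal.ofReal (sSup B - sInf B) := by
    rw [← Real.volume_Icc]
    exact measure_mono fun x hx => ⟨csInf_le hBb hx, le_csSup hBa hx⟩
  have hl1' : 0 < 1 - l := by linarith
  have vC : ENNReal.ofReal ((l * sSup A + (1 - l) * sSup B) - (l * sInf A + (1 - l) * sInf B))
      ≤ volume C := by
    rw [← Real.volume_Ioo]
    refine measure_mono fun x hx => ?_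
    obtain ⟨a, ha, b, hb, hab⟩ : ∃ a ∈ A, ∃ b ∈ B, l * a + (1 - l) * b < x := by
      set d := x - (l * sInf A + (1 - l) * sInf B) with hd
      have hdpos : 0 < d := by linarith [hx.1]
      obtain ⟨a, ha, ha'⟩ := exists_lt_of_csInf_lt hA (lt_add_of_pos_right (sInf A) hdpos)
      obtain ⟨b, hb, hb'⟩ := exists_lt_of_csInf_lt hB (lt_add_of_pos_right (sInf B) hdpos)
      exact ⟨a, ha, b, hb, by nlinarith⟩
    obtain ⟨a', ha', b', hb', hab'⟩ : ∃ a ∈ A, ∃ b ∈ B, x < l * a + (1 - l) * b := by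
      set d := (l * sSup A + (1 - l) * sSup B) - x with hd
      have hdpos : 0 < d := by linarith [hx.2]
      obtain ⟨a, ha, ha'⟩ := exists_lt_of_lt_csSup hA (sub_lt_self (sSup A) hdpos)
      obtain ⟨b, hb, hb'⟩ := exists_lt_of_lt_csSup hB (sub_lt_self (sSup B) hdpos)
      exact ⟨a, ha, b, hb, by nlinarith⟩
    exact hC.out (h a ha b hb) (h a' ha' b' hb') ⟨hab.le, hab'.le⟩
  have dA : 0 ≤ sSup A - sInf A := sub_nonneg.2 (csInf_le_csSup hA hAb hAa)
  have dB : 0 ≤ sSup B - sInf B := sub_nonneg.2 (csInf_le_csSup hB hBb hBa)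
  calc _ ≤ ENNReal.ofReal l * ENNReal.ofReal (sSup A - sInf A) +
        ENNReal.ofReal (1 - l) * ENNReal.ofReal (sSup B - sInf B) := by gcongr
    _ = ENNReal.ofReal (l * (sSup A - sInf A) + (1 - l) * (sSup B - sInf B)) := by
        rw [← ENNReal.ofReal_mul hl0.le, ← ENNReal.ofReal_mul hl1'.le,
          ← ENNReal.ofReal_add (by positivity) (by positivity)]
    _ ≤ _ := by
        convert vC using 2
        ring

/-- Prékopa–Leindler on the line for functions with supremum one. -/
lemma lintegral_combo_le {f g h : ℝ → ℝ} {l R : ℝ} (hl0 : 0 < l) (hl1 : l < 1)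
    (hfm : Measurable f) (hgm : Measurable g) (hhm : Measurable h)
    (hf0 : ∀ x, 0 ≤ f x) (hg0 : ∀ x, 0 ≤ g x) (hh0 : ∀ x, 0 ≤ h x)
    (hf1 : ∀ x, f x ≤ 1) (hg1 : ∀ x, g x ≤ 1)
    (hfR : Function.support f ⊆ Set.Icc (-R) R) (hgR : Function.support g ⊆ Set.Icc (-R) R)
    (hfs : ∀ t < 1, ∃ x, t < f x) (hgs : ∀ t < 1, ∃ x, t < g x)
    (hh : ∀ t, {x | t < h x}.OrdConnected)
    (H : ∀ x y, f x ^ l * g y ^ (1 - l) ≤ h (l * x + (1 - l) * y)) :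
    ENNReal.ofReal l * (∫⁻ x, ENNReal.ofReal (f x)) +
      ENNReal.ofReal (1 - l) * (∫⁻ x, ENNReal.ofReal (g x)) ≤ ∫⁻ x, ENNReal.ofReal (h x) := by
  have hl1' : 0 < 1 - l := by linarith
  rw [lintegral_eq_lintegral_meas_lt volume (.of_forall hf0) hfm.aemeasurable,
    lintegral_eq_lintegral_meas_lt volume (.of_forall hg0) hgm.aemeasurable,
    lintegral_eq_lintegral_meas_lt volume (.of_forall hh0) hhm.aemeasurable]
  have anti : ∀ k : ℝ → ℝ, Measurable fun t => volume {x | t < k x} := fun k =>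
    Antitone.measurable fun s t hst => measure_mono fun x (hx : t < k x) => hst.trans_lt hx
  rw [← lintegral_const_mul _ (anti f), ← lintegral_const_mul _ (anti g),
    ← lintegral_add_left ((anti f).const_mul _)]
  refine setLIntegral_mono (anti h) fun t ht => ?_
  have ht : 0 < t := ht
  rcases lt_or_ge t 1 with ht1 | ht1
  · refine volume_combo_le hl0 hl1 (hfs t ht1) (hgs t ht1) (R := R) ?_ ?_ (hh t) ?_
    · exact fun x (hx : t < f x) => hfR (ht.trans hx).ne'
    · exact fun x (hx : t < g x) => hgR (ht.trans hx).ne'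
    · intro a ha b hb
      have ha : t < f a := ha
      have hb : t < g b := hb
      refine lt_of_lt_of_le ?_ (H a b)
      calc t = t ^ l * t ^ (1 - l) := by
            rw [← Real.rpow_add ht]; simp
        _ < f a ^ l * g b ^ (1 - l) :=
            mul_lt_mul'' (Real.rpow_lt_rpow ht.le ha hl0) (Real.rpow_lt_rpow ht.le hb hl1')
              (by positivity) (by positivity)
  · have e1 : {x | t < f x} = ∅ := by
      ext x; simpa using (hf1 x).trans ht1
    have e2 : {x | t < g x} = ∅ := by
      ext x; simpa using (hg1 x).trans ht1
    simp [e1, e2]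

/-- The Prékopa–Leindler inequality on the line, with a quasiconcave target function. -/
lemma prekopa_leindler {f g h : ℝ → ℝ} {l R M : ℝ} (hl0 : 0 < l) (hl1 : l < 1)
    (hfm : Measurable f) (hgm : Measurable g) (hhm : Measurable h)
    (hf0 : ∀ x, 0 ≤ f x) (hg0 : ∀ x, 0 ≤ g x) (hh0 : ∀ x, 0 ≤ h x)
    (hf1 : ∀ x, f x ≤ M) (hg1 : ∀ x, g x ≤ M)
    (hfR : Function.support f ⊆ Set.Icc (-R) R) (hgR : Function.support g ⊆ Set.Icc (-R) R)
    (hhi : Integrable h) (hh : ∀ t, {x | t < h x}.OrdConnected)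
    (H : ∀ x y, f x ^ l * g y ^ (1 - l) ≤ h (l * x + (1 - l) * y)) :
    (∫ x, f x) ^ l * (∫ x, g x) ^ (1 - l) ≤ ∫ x, h x := by
  have hl1' : 0 < 1 - l := by linarith
  have hh0' : 0 ≤ ∫ x, h x := integral_nonneg hh0
  have bf : BddAbove (Set.range f) := ⟨M, by rintro _ ⟨x, rfl⟩; exact hf1 x⟩
  have bg : BddAbove (Set.range g) := ⟨M, by rintro _ ⟨x, rfl⟩; exact hg1 x⟩
  set F := ⨆ x, f x with hF
  set G := ⨆ x, g x with hG
  have leF : ∀ x, f x ≤ F := le_ciSup bf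
  have leG : ∀ x, g x ≤ G := le_ciSup bg
  rcases (le_trans (hf0 0) (leF 0)).eq_or_lt with F0 | F0
  · have : ∀ x, f x = 0 := fun x => le_antisymm (F0 ▸ leF x) (hf0 x)
    simp [this, Real.zero_rpow hl0.ne', hh0']
  rcases (le_trans (hg0 0) (leG 0)).eq_or_lt with G0 | G0
  · have : ∀ x, g x = 0 := fun x => le_antisymm (G0 ▸ leG x) (hg0 x)
    simp [this, Real.zero_rpow hl1'.ne', hh0']
  set K := F ^ l * G ^ (1 - l) with hK
  have K0 : 0 < K := by positivity
  have key := lintegral_combo_le (f := fun x => f x / F) (g := fun x => g x / G)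
    (h := fun x => h x / K) (R := R) hl0 hl1 (hfm.div_const _) (hgm.div_const _)
    (hhm.div_const _) (fun x => by have := hf0 x; positivity)
    (fun x => by have := hg0 x; positivity) (fun x => by have := hh0 x; positivity)
    (fun x => (div_le_one F0).2 (leF x)) (fun x => (div_le_one G0).2 (leG x))
    (fun x hx => hfR fun h => hx (by simp [h])) (fun x hx => hgR fun h => hx (by simp [h]))
    (fun t ht => by
      obtain ⟨x, hx⟩ := exists_lt_of_lt_ciSup (show t * F < ⨆ x, f x by
        rw [← hF]; nlinarith)
      exact ⟨x, (lt_div_iff₀ F0).2 hx⟩)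
    (fun t ht => by
      obtain ⟨x, hx⟩ := exists_lt_of_lt_ciSup (show t * G < ⨆ x, g x by
        rw [← hG]; nlinarith)
      exact ⟨x, (lt_div_iff₀ G0).2 hx⟩)
    (fun t => by
      convert hh (t * K) using 3 with x
      exact lt_div_iff₀ K0)
    (fun x y => by
      rw [Real.div_rpow (hf0 x) F0.le, Real.div_rpow (hg0 y) G0.le, div_mul_div_comm]
      gcongr
      exact H x y)
  have ifin : ∀ k : ℝ → ℝ, Measurable k → (∀ x, 0 ≤ k x) → (∀ x, k x ≤ M) →
      Function.support k ⊆ Set.Icc (-R) R → Integrable k := by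
    intro k hkm hk0 hk1 hkR
    rw [← integrableOn_iff_integrable_of_support_subset hkR]
    exact Measure.integrableOn_of_bounded (M := M) (by simp) hkm.aestronglyMeasurable
      (.of_forall fun x => by rw [Real.norm_of_nonneg (hk0 x)]; exact hk1 x)
  have fi := ifin f hfm hf0 hf1 hfR
  have gi := ifin g hgm hg0 hg1 hgR
  rw [← ofReal_integral_eq_lintegral_ofReal (fi.div_const _)
      (.of_forall fun x => by have := hf0 x; positivity),
    ← ofReal_integral_eq_lintegral_ofReal (gi.div_const _)
      (.of_forall fun x => by have := hg0 x; positivity),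
    ← ofReal_integral_eq_lintegral_ofReal (hhi.div_const _)
      (.of_forall fun x => by have := hh0 x; positivity),
    MeasureTheory.integral_div, MeasureTheory.integral_div, MeasureTheory.integral_div,
    ← ENNReal.ofReal_mul hl0.le, ← ENNReal.ofReal_mul hl1'.le] at key
  have f0' : 0 ≤ ∫ x, f x := integral_nonneg hf0
  have g0' : 0 ≤ ∫ x, g x := integral_nonneg hg0
  rw [← ENNReal.ofReal_add (by positivity) (by positivity),
    ENNReal.ofReal_le_ofReal_iff (by positivity)] at key
  have amgm := Real.geom_mean_le_arith_mean2_weighted hl0.le hl1'.le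
    (show 0 ≤ (∫ x, f x) / F by positivity) (show 0 ≤ (∫ x, g x) / G by positivity) (by ring)
  rw [Real.div_rpow f0' F0.le, Real.div_rpow g0' G0.le, div_mul_div_comm, ← hK] at amgm
  exact (div_le_div_iff_of_pos_right K0).1 (amgm.trans key)

lemma LogConcaveFn.ordConnected_lt {f : ℝ → ℝ} (hf : LogConcaveFn f) (hf0 : ∀ x, 0 ≤ f x)
    (t : ℝ) : {x | t < f x}.OrdConnected := by
  rcases lt_or_ge t 0 with ht | ht
  · have : {x | t < f x} = Set.univ := by ext x; simpa using ht.trans_le (hf0 x)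
    rw [this]; exact Set.ordConnected_univ
  refine Convex.ordConnected fun x (hx : t < f x) y (hy : t < f y) a b ha hb hab => ?_
  have hb' : b = 1 - a := by linarith
  subst hb'
  refine lt_of_lt_of_le ?_ (hf x y a ha (by linarith))
  rcases ha.eq_or_lt with rfl | ha
  · simpa using hy
  rcases hb.eq_or_lt with h | hb
  · have : a = 1 := by linarith
    subst this; simpa using hx
  rcases ht.eq_or_lt with rfl | ht
  · positivity
  calc t = t ^ a * t ^ (1 - a) := by rw [← Real.rpow_add ht]; simp
    _ < f x ^ a * f y ^ (1 - a) :=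
      mul_lt_mul'' (Real.rpow_lt_rpow ht.le hx ha) (Real.rpow_lt_rpow ht.le hy hb)
        (by positivity) (by positivity)

/-- Marginals of logconcave functions are logconcave. -/
lemma LogConcaveFn.marginal {E : Type*} [AddCommMonoid E] [Module ℝ E] {F : E → ℝ → ℝ} {R M : ℝ}
    (hF : ∀ x y : E, ∀ s t l : ℝ, 0 ≤ l → l ≤ 1 →
      F x s ^ l * F y t ^ (1 - l) ≤ F (l • x + (1 - l) • y) (l * s + (1 - l) * t))
    (hm : ∀ x, Measurable (F x)) (h0 : ∀ x t, 0 ≤ F x t) (hM : ∀ x t, F x t ≤ M)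
    (hR : ∀ x, Function.support (F x) ⊆ Set.Icc (-R) R) :
    LogConcaveFn fun x => ∫ t, F x t := by
  intro x y l hl0 hl1
  rcases hl0.eq_or_lt with rfl | hl0
  · simp
  rcases hl1.eq_or_lt with rfl | hl1
  · simp
  refine prekopa_leindler (R := R) (M := M) hl0 hl1 (hm _) (hm _) (hm _) (h0 _) (h0 _) (h0 _)
    (hM _) (hM _) (hR _) (hR _) ?_ ?_ fun s t => hF x y s t l hl0.le hl1.le
  · rw [← integrableOn_iff_integrable_of_support_subset (hR _)]
    exact Measure.integrableOn_of_bounded (M := M) (by simp) (hm _).aestronglyMeasurable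
      (.of_forall fun x => by rw [Real.norm_of_nonneg (h0 _ x)]; exact hM _ x)
  · refine LogConcaveFn.ordConnected_lt (fun s t a ha0 ha1 => ?_) (h0 _)
    have := hF (l • x + (1 - l) • y) (l • x + (1 - l) • y) s t a ha0 ha1
    rwa [← add_smul, add_sub_cancel, one_smul] at this

/-- Logconcavity of a finite sequence. -/
def LogConcaveSeq {N : ℕ} (h : Fin N → ℝ) : Prop :=
  ∀ i j k : Fin N, ∀ l : ℝ, 0 ≤ l → l ≤ 1 →
    ((j : ℕ) : ℝ) = l * ((i : ℕ) : ℝ) + (1 - l) * ((k : ℕ) : ℝ) →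
    h i ^ l * h k ^ (1 - l) ≤ h j

lemma isClosed_logConcaveSeq (N : ℕ) : IsClosed {h : Fin N → ℝ | LogConcaveSeq h} := by
  simp only [LogConcaveSeq, Set.ofPred_forall]
  refine isClosed_iInter fun i => isClosed_iInter fun j => isClosed_iInter fun k =>
    isClosed_iInter fun l => isClosed_iInter fun hl0 => isClosed_iInter fun hl1 =>
    isClosed_iInter fun _ => isClosed_le ?_ (continuous_apply j)
  exact ((Real.continuous_rpow_const hl0).comp (continuous_apply i)).mul
    ((Real.continuous_rpow_const (sub_nonneg.2 hl1)).comp (continuous_apply k))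

/-- To check logconcavity of a sequence it suffices to consider strict interior points
where both outer values are positive. -/
lemma LogConcaveSeq.of_pos {N : ℕ} {h : Fin N → ℝ} (h0 : ∀ i, 0 ≤ h i)
    (H : ∀ i j k : Fin N, ∀ l : ℝ, 0 < l → l < 1 →
      ((j : ℕ) : ℝ) = l * ((i : ℕ) : ℝ) + (1 - l) * ((k : ℕ) : ℝ) → 0 < h i → 0 < h k →
      h i ^ l * h k ^ (1 - l) ≤ h j) : LogConcaveSeq h := by
  intro i j k l hl0 hl1 hj
  rcases hl0.eq_or_lt with rfl | hl0
  · have : j = k := Fin.ext (by exact_mod_cast (by linarith : ((j : ℕ) : ℝ) = (k : ℕ)))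
    simp [this]
  rcases hl1.eq_or_lt with rfl | hl1
  · have : j = i := Fin.ext (by exact_mod_cast (by linarith : ((j : ℕ) : ℝ) = (i : ℕ)))
    simp [this]
  rcases (h0 i).eq_or_lt with hi | hi
  · simp [← hi, Real.zero_rpow hl0.ne', h0 j]
  rcases (h0 k).eq_or_lt with hk | hk
  · simp [← hk, Real.zero_rpow (sub_pos.2 hl1).ne', h0 j]
  exact H i j k l hl0 hl1 hj hi hk

lemma LogConcaveSeq.const_mul {N : ℕ} {h : Fin N → ℝ} (hh : LogConcaveSeq h)
    (h0 : ∀ i, 0 ≤ h i) {r : ℝ} (hr : 0 < r) : LogConcaveSeq fun i => r * h i := by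
  intro i j k l hl0 hl1 hj
  rw [Real.mul_rpow hr.le (h0 i), Real.mul_rpow hr.le (h0 k)]
  calc _ = (r ^ l * r ^ (1 - l)) * (h i ^ l * h k ^ (1 - l)) := by ring
    _ = r * (h i ^ l * h k ^ (1 - l)) := by rw [← Real.rpow_add hr]; simp
    _ ≤ _ := mul_le_mul_of_nonneg_left (hh i j k l hl0 hl1 hj) hr.le

lemma LogConcaveSeq.indicator {N : ℕ} {h : Fin N → ℝ} (hh : LogConcaveSeq h)
    (h0 : ∀ i, 0 ≤ h i) {s : Set (Fin N)} (hs : s.OrdConnected) :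
    LogConcaveSeq (s.indicator h) := by
  refine .of_pos (fun i => Set.indicator_nonneg (fun _ _ => h0 _) i)
    fun i j k l hl0 hl1 hj hi hk => ?_
  have hi' : i ∈ s := by by_contra h; simp [h] at hi
  have hk' : k ∈ s := by by_contra h; simp [h] at hk
  have hj' : j ∈ s := by
    rcases le_total i k with hik | hik
    · have : ((i : ℕ) : ℝ) ≤ (k : ℕ) := by exact_mod_cast hik
      refine hs.out hi' hk' ⟨?_, ?_⟩ <;> rw [Fin.le_def] <;> rify <;> nlinarith
    · have : ((k : ℕ) : ℝ) ≤ (i : ℕ) := by exact_mod_cast hik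
      refine hs.out hk' hi' ⟨?_, ?_⟩ <;> rw [Fin.le_def] <;> rify <;> nlinarith
  simpa [hi', hk', hj'] using hh i j k l hl0.le hl1.le hj

lemma exp_affine_combo {z m x y t l : ℝ} (h : t = l * x + (1 - l) * y) :
    Real.exp (z + m * t) = Real.exp (z + m * x) ^ l * Real.exp (z + m * y) ^ (1 - l) := by
  rw [← Real.exp_mul, ← Real.exp_mul, ← Real.exp_add, h]
  ring_nf

lemma LogConcaveSeq.min_exp {N : ℕ} {h : Fin N → ℝ} (hh : LogConcaveSeq h)
    (h0 : ∀ i, 0 ≤ h i) (z m : ℝ) :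
    LogConcaveSeq fun i => min (h i) (Real.exp (z + m * ((i : ℕ) : ℝ))) := by
  intro i j k l hl0 hl1 hj
  have hl1' := sub_nonneg.2 hl1
  have mi : 0 ≤ min (h i) (Real.exp (z + m * ((i : ℕ) : ℝ))) := le_min (h0 i) (Real.exp_pos _).le
  have mk : 0 ≤ min (h k) (Real.exp (z + m * ((k : ℕ) : ℝ))) := le_min (h0 k) (Real.exp_pos _).le
  have hi0 := h0 i
  have hk0 := h0 k
  refine le_min (le_trans ?_ (hh i j k l hl0 hl1 hj)) ?_
  · gcongr <;> exact min_le_left _ _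
  · rw [exp_affine_combo hj]
    gcongr <;> exact min_le_right _ _

/-- Superadditivity of weighted geometric means. -/
lemma geom_mean_superadditive {x y u v l : ℝ} (hx : 0 ≤ x) (hy : 0 ≤ y) (hu : 0 < u) (hv : 0 < v)
    (hl0 : 0 ≤ l) (hl1 : l ≤ 1) :
    x ^ l * y ^ (1 - l) + u ^ l * v ^ (1 - l) ≤ (x + u) ^ l * (y + v) ^ (1 - l) := by
  have hl1' := sub_nonneg.2 hl1
  have hxu : 0 < x + u := by positivity
  have hyv : 0 < y + v := by positivity
  have h1 := Real.geom_mean_le_arith_mean2_weighted hl0 hl1'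
    (show 0 ≤ x / (x + u) by positivity) (show 0 ≤ y / (y + v) by positivity) (by ring)
  have h2 := Real.geom_mean_le_arith_mean2_weighted hl0 hl1'
    (show 0 ≤ u / (x + u) by positivity) (show 0 ≤ v / (y + v) by positivity) (by ring)
  rw [Real.div_rpow hx hxu.le, Real.div_rpow hy hyv.le, div_mul_div_comm] at h1
  rw [Real.div_rpow hu.le hxu.le, Real.div_rpow hv.le hyv.le, div_mul_div_comm] at h2
  rw [← div_le_one (by positivity), add_div]
  calc _ ≤ _ := add_le_add h1 h2
    _ = 1 := by field_simp; ring

lemma LogConcaveSeq.sub_min_exp {N : ℕ} {h : Fin N → ℝ} (hh : LogConcaveSeq h) (z m : ℝ) :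
    LogConcaveSeq fun i => h i - min (h i) (Real.exp (z + m * ((i : ℕ) : ℝ))) := by
  refine .of_pos (fun i => sub_nonneg.2 (min_le_left _ _)) fun i j k l hl0 hl1 hj hi hk => ?_
  set e : Fin N → ℝ := fun i => Real.exp (z + m * ((i : ℕ) : ℝ)) with he
  have hi' : e i < h i := by
    by_contra hc; rw [min_eq_left (not_lt.1 hc)] at hi; simp at hi
  have hk' : e k < h k := by
    by_contra hc; rw [min_eq_left (not_lt.1 hc)] at hk; simp at hk
  change (h i - min (h i) (e i)) ^ l * (h k - min (h k) (e k)) ^ (1 - l) ≤ h j - min (h j) (e j)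
  rw [min_eq_right hi'.le, min_eq_right hk'.le]
  have e1 : e j = e i ^ l * e k ^ (1 - l) := exp_affine_combo hj
  have key := geom_mean_superadditive (sub_nonneg.2 hi'.le) (sub_nonneg.2 hk'.le)
    (Real.exp_pos (z + m * ((i : ℕ) : ℝ))) (Real.exp_pos (z + m * ((k : ℕ) : ℝ))) hl0.le hl1.le
  change _ + e i ^ l * e k ^ (1 - l) ≤ (h i - e i + e i) ^ l * (h k - e k + e k) ^ (1 - l) at key
  rw [sub_add_cancel, sub_add_cancel] at key
  have := hh i j k l hl0.le hl1.le hj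
  have := min_le_right (h j) (e j)
  linarith

/-- If a finite logconcave sequence has positive values at `p` and `q`, it is positive between. -/
lemma LogConcaveSeq.pos_of_mem_Icc {N : ℕ} {h : Fin N → ℝ} (hh : LogConcaveSeq h) {p q j : Fin N}
    (hp : 0 < h p) (hq : 0 < h q) (hpj : p ≤ j) (hjq : j ≤ q) : 0 < h j := by
  rcases hpj.eq_or_lt with rfl | hpj'
  · exact hp
  have h1 : ((p : ℕ) : ℝ) < (j : ℕ) := by exact_mod_cast hpj'
  have h2 : ((j : ℕ) : ℝ) ≤ (q : ℕ) := by exact_mod_cast hjq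
  have h3 : (0 : ℝ) < (q : ℕ) - (p : ℕ) := by linarith
  refine lt_of_lt_of_le ?_ (hh p j q ((((q : ℕ) : ℝ) - (j : ℕ)) / ((q : ℕ) - (p : ℕ)))
    (div_nonneg (by linarith) h3.le) ((div_le_one h3).2 (by linarith)) ?_)
  · positivity
  · field_simp
    ring

/-- Localization for finite logconcave sequences: a quadratic inequality between linear functionals
that holds for all geometric sequences on index intervals holds for all logconcave sequences. -/
lemma LogConcaveSeq.localization {N : ℕ} {a b g : Fin N → ℝ} {c : ℝ} (ha : ∀ i, 0 ≤ a i)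
    (hg : ∀ i, 0 < g i)
    (H : ∀ p q : Fin N, ∀ m : ℝ, p ≤ q →
      (∑ j ∈ Finset.Icc p q, Real.exp (m * ((j : ℕ) : ℝ)) * a j) *
        (∑ j ∈ Finset.Icc p q, Real.exp (m * ((j : ℕ) : ℝ)) * b j) ≤
      c * (∑ j ∈ Finset.Icc p q, Real.exp (m * ((j : ℕ) : ℝ)) * g j) ^ 2)
    {h : Fin N → ℝ} (hh : LogConcaveSeq h) (h0 : ∀ i, 0 ≤ h i) :
    (∑ j, h j * a j) * (∑ j, h j * b j) ≤ c * (∑ j, h j * g j) ^ 2 := by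
  have posC : ∀ k : Fin N → ℝ, (∀ i, 0 ≤ k i) → (∃ i, 0 < k i) → 0 < ∑ j, k j * g j := by
    rintro k hk ⟨i, hi⟩
    exact Finset.sum_pos' (fun j _ => mul_nonneg (hk j) (hg j).le)
      ⟨i, Finset.mem_univ i, mul_pos hi (hg i)⟩
  by_cases hne : ∃ i, 0 < h i
  swap
  · have : ∀ i, h i = 0 := fun i => le_antisymm (not_lt.1 fun hi => hne ⟨i, hi⟩) (h0 i)
    simp [this]
  have hC := posC h h0 hne
  set C := ∑ j, h j * g j with hCdef
  set A := ∑ j, h j * a j with hAdef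
  set s := A / C with hs
  have hA0 : 0 ≤ A := Finset.sum_nonneg fun j _ => mul_nonneg (h0 j) (ha j)
  have hs0 : 0 ≤ s := div_nonneg hA0 hC.le
  -- the normalized logconcave sequences with prescribed value of the first functional
  let S : Set (Fin N → ℝ) := {k | LogConcaveSeq k ∧ (∀ i, 0 ≤ k i) ∧ ∑ j, k j * g j = 1 ∧
    ∑ j, k j * a j = s}
  have cont : ∀ w : Fin N → ℝ, Continuous fun k : Fin N → ℝ => ∑ j, k j * w j := fun w => by
    fun_prop
  have Scomp : IsCompact S := by
    refine (isCompact_univ_pi fun i => isCompact_Icc (a := (0 : ℝ)) (b := 1 / g i)).of_isClosed_subset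
      ?_ ?_
    · refine (isClosed_logConcaveSeq N).inter (IsClosed.inter ?_ (IsClosed.inter ?_ ?_))
      · change IsClosed {k : Fin N → ℝ | ∀ i, 0 ≤ k i}
        simp only [Set.ofPred_forall]
        exact isClosed_iInter fun i => isClosed_le continuous_const (continuous_apply i)
      · exact isClosed_eq (cont g) continuous_const
      · exact isClosed_eq (cont a) continuous_const
    · rintro k ⟨-, hk0, hk1, -⟩ i -
      refine ⟨hk0 i, (le_div_iff₀ (hg i)).2 ?_⟩
      rw [← hk1]
      exact Finset.single_le_sum (f := fun j => k j * g j)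
        (fun j _ => mul_nonneg (hk0 j) (hg j).le) (Finset.mem_univ i)
  have scale : ∀ (r : ℝ) (k w : Fin N → ℝ), ∑ j, r * k j * w j = r * ∑ j, k j * w j := by
    intro r k w; simp only [Finset.mul_sum, mul_assoc]
  have Sne : (fun j => C⁻¹ * h j) ∈ S := by
    refine ⟨hh.const_mul h0 (by positivity), fun i => by have := h0 i; positivity, ?_, ?_⟩
    · rw [scale, ← hCdef, inv_mul_cancel₀ hC.ne']
    · rw [scale, ← hAdef, hs, div_eq_inv_mul]
  obtain ⟨k₀, hk₀S, hk₀max⟩ := Scomp.exists_isMaxOn ⟨_, Sne⟩ (cont b).continuousOn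
  set B₀ := ∑ j, k₀ j * b j with hB₀
  have maxB : ∀ k ∈ S, ∑ j, k j * b j ≤ B₀ := fun k hk => hk₀max hk
  obtain ⟨u, hu⟩ := (Scomp.inter_right
    (isClosed_eq (cont b) (continuous_const (y := B₀)))).extremePoints_nonempty
    ⟨k₀, hk₀S, rfl⟩
  rw [mem_extremePoints_iff_left] at hu
  obtain ⟨⟨⟨uLC, u0, uC, uA⟩, uB⟩, uext⟩ := hu
  have uB : ∑ j, u j * b j = B₀ := uB
  -- balanced decompositions of the extreme point are trivial
  have split : ∀ k : Fin N → ℝ, LogConcaveSeq k → (∀ i, 0 ≤ k i) → (∃ i, 0 < k i) →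
      LogConcaveSeq (fun i => u i - k i) → (∀ i, k i ≤ u i) → (∃ i, k i < u i) →
      ∑ j, k j * (a j - s * g j) = 0 → ∃ r, 0 < r ∧ r < 1 ∧ ∀ i, k i = r * u i := by
    intro k kLC k0 kne k'LC kle k'ne kbal
    have k'0 : ∀ i, 0 ≤ u i - k i := fun i => sub_nonneg.2 (kle i)
    have c1 := posC k k0 kne
    have c2 := posC (fun i => u i - k i) k'0 (k'ne.imp fun i hi => sub_pos.2 hi)
    set C1 := ∑ j, k j * g j with hC1
    set C2 := ∑ j, (u j - k j) * g j with hC2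
    have split_sum : ∀ w : Fin N → ℝ, ∑ j, (u j - k j) * w j = ∑ j, u j * w j - ∑ j, k j * w j := by
      intro w; simp only [sub_mul, Finset.sum_sub_distrib]
    have hC12 : C1 + C2 = 1 := by rw [hC2, split_sum, uC]; ring
    have kA : ∑ j, k j * a j = s * C1 := by
      have : ∑ j, k j * (a j - s * g j) = ∑ j, k j * a j - s * C1 := by
        rw [hC1, Finset.mul_sum, ← Finset.sum_sub_distrib]
        exact Finset.sum_congr rfl fun j _ => by ring
      linarith
    have m1 : (fun j => C1⁻¹ * k j) ∈ S := by
      refine ⟨kLC.const_mul k0 (by positivity), fun i => by have := k0 i; positivity, ?_, ?_⟩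
      · rw [scale, ← hC1, inv_mul_cancel₀ c1.ne']
      · rw [scale, kA]; field_simp
    have m2 : (fun j => C2⁻¹ * (u j - k j)) ∈ S := by
      refine ⟨k'LC.const_mul k'0 (by positivity),
        fun i => by have := k'0 i; positivity, ?_, ?_⟩
      · rw [scale, ← hC2, inv_mul_cancel₀ c2.ne']
      · rw [scale, split_sum, kA, uA]
        have : s - s * C1 = s * C2 := by linear_combination -s * hC12
        rw [this]; field_simp
    have b1 := maxB _ m1
    have b2 := maxB _ m2
    have b12 : C1 * (∑ j, C1⁻¹ * k j * b j) + C2 * (∑ j, C2⁻¹ * (u j - k j) * b j) = B₀ := by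
      rw [scale, scale, mul_inv_cancel_left₀ c1.ne', mul_inv_cancel_left₀ c2.ne', split_sum, uB]
      ring
    have e1 : ∑ j, C1⁻¹ * k j * b j = B₀ := by
      refine le_antisymm b1 ?_
      by_contra hlt
      have : C1 * (∑ j, C1⁻¹ * k j * b j) < C1 * B₀ := mul_lt_mul_of_pos_left (not_le.1 hlt) c1
      have : C2 * (∑ j, C2⁻¹ * (u j - k j) * b j) ≤ C2 * B₀ := mul_le_mul_of_nonneg_left b2 c2.le
      have : C1 * B₀ + C2 * B₀ = B₀ := by rw [← add_mul, hC12, one_mul]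
      linarith
    have e2 : ∑ j, C2⁻¹ * (u j - k j) * b j = B₀ := by
      rw [e1] at b12
      have : C2 * (∑ j, C2⁻¹ * (u j - k j) * b j) = C2 * B₀ := by
        have : C1 * B₀ + C2 * B₀ = B₀ := by rw [← add_mul, hC12, one_mul]
        linarith
      exact mul_left_cancel₀ c2.ne' this
    have key := uext _ ⟨m1, e1⟩ _ ⟨m2, e2⟩ ⟨C1, C2, c1, c2, hC12, by
      ext j; simp [mul_inv_cancel_left₀ c1.ne', mul_inv_cancel_left₀ c2.ne']⟩
    refine ⟨C1, c1, by linarith, fun i => ?_⟩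
    rw [← key]
    simp [mul_inv_cancel_left₀ c1.ne']
  -- the extreme point is a geometric sequence on an interval of indices
  obtain ⟨p, q, hpq, z, m, hum, hu0⟩ : ∃ p q : Fin N, p ≤ q ∧ ∃ z m : ℝ,
      (∀ j ∈ Finset.Icc p q, u j = Real.exp z * Real.exp (m * ((j : ℕ) : ℝ))) ∧
      ∀ j ∉ Finset.Icc p q, u j = 0 := by
    have une : ∃ i, 0 < u i := by
      by_contra hc
      have : ∀ i, u i = 0 := fun i => le_antisymm (not_lt.1 fun hi => hc ⟨i, hi⟩) (u0 i)
      simp [this] at uC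
    have fne : (Finset.univ.filter fun i => 0 < u i).Nonempty := by
      simpa [Finset.filter_nonempty_iff] using une
    obtain ⟨p, hp, pmin⟩ := Finset.exists_min_image _ id fne
    obtain ⟨q, hq, qmax⟩ := Finset.exists_max_image _ id fne
    simp only [Finset.mem_filter, Finset.mem_univ, true_and, id] at hp hq pmin qmax
    have hout : ∀ j ∉ Finset.Icc p q, u j = 0 := by
      intro j hj
      by_contra hne
      have hj' := lt_of_le_of_ne (u0 j) (Ne.symm hne)
      exact hj (Finset.mem_Icc.2 ⟨pmin j hj', qmax j hj'⟩)
    rcases (pmin q hq).eq_or_lt with rfl | hlt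
    · refine ⟨p, p, le_rfl, Real.log (u p), 0, fun j hj => ?_, hout⟩
      rw [Finset.Icc_self, Finset.mem_singleton] at hj
      rw [hj, Real.exp_log hp]; simp
    let p' : Fin N := ⟨p + 1, lt_of_le_of_lt hlt q.2⟩
    have hp' : 0 < u p' := uLC.pos_of_mem_Icc hp hq (Fin.le_def.2 (by simp [p'])) hlt
    set z := Real.log (u p * u p' / 2) / 2 with hz
    have hez : Real.exp z * Real.exp z = u p * u p' / 2 := by
      rw [← Real.exp_add, hz, add_halves, Real.exp_log (by positivity)]
    let e : ℝ → Fin N → ℝ := fun m j => Real.exp ((z - m * ((p : ℕ) + 1 / 2)) + m * ((j : ℕ) : ℝ))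
    have he : ∀ m j, e m j = Real.exp (z + m * (((j : ℕ) : ℝ) - ((p : ℕ) + 1 / 2))) := by
      intro m j; simp only [e]; ring_nf
    let F : ℝ → ℝ := fun m => ∑ j, min (u j) (e m j) * (a j - s * g j)
    have Fcont : Continuous F := by fun_prop
    set P := ∑ j, (Set.Ioi p).indicator u j * (a j - s * g j) with hP
    set Q := ∑ j, (Set.Iic p).indicator u j * (a j - s * g j) with hQ
    have hPQ : P + Q = 0 := by
      have : ∑ j, u j * (a j - s * g j) = ∑ j, u j * a j - s * ∑ j, u j * g j := by
        rw [Finset.mul_sum, ← Finset.sum_sub_distrib]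
        exact Finset.sum_congr rfl fun j _ => by ring
      rw [uA, uC, mul_one, sub_self] at this
      rw [← this, hP, hQ, ← Finset.sum_add_distrib]
      refine Finset.sum_congr rfl fun j _ => ?_
      by_cases hj : j ≤ p
      · simp [hj, not_lt.2 hj]
      · simp [hj, not_le.1 hj]
    have P0 : P ≠ 0 := by
      intro hP0
      obtain ⟨r, hr, -, hk⟩ := split ((Set.Ioi p).indicator u)
        (uLC.indicator u0 Set.ordConnected_Ioi)
        (fun i => Set.indicator_nonneg (fun _ _ => u0 _) i)
        ⟨p', by simpa [p', Fin.lt_def] using hp'⟩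
        (by
          convert uLC.indicator u0 (Set.ordConnected_Iic (a := p)) using 2 with j
          by_cases hj : j ≤ p
          · simp [hj, not_lt.2 hj]
          · simp [hj, not_le.1 hj])
        (fun i => Set.indicator_le_self' (fun _ _ => u0 _) i) ⟨p, by simpa using hp⟩ hP0
      have := hk p
      simp only [Set.mem_Ioi, lt_irrefl, not_false_eq_true, Set.indicator_of_notMem] at this
      exact (mul_pos hr hp).ne this
    have above : ∀ j : Fin N, p < j → (0 : ℝ) < ((j : ℕ) : ℝ) - ((p : ℕ) + 1 / 2) := by
      intro j hj
      have : ((p : ℕ) : ℝ) + 1 ≤ (j : ℕ) := by exact_mod_cast hj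
      linarith
    have below : ∀ j : Fin N, j ≤ p → ((j : ℕ) : ℝ) - ((p : ℕ) + 1 / 2) < 0 := by
      intro j hj
      have : ((j : ℕ) : ℝ) ≤ (p : ℕ) := by exact_mod_cast hj
      linarith
    have big : ∀ {l : Filter ℝ} {d : ℝ} (j : Fin N), Filter.Tendsto (fun m => m * d) l Filter.atTop →
        Filter.Tendsto (fun m => min (u j) (Real.exp (z + m * d))) l (nhds (u j)) := by
      intro l d j hd
      have := Real.tendsto_exp_atTop.comp (Filter.tendsto_atTop_add_const_left l z hd)
      refine tendsto_const_nhds.congr' ?_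
      filter_upwards [this.eventually_ge_atTop (u j)] with m hm
      exact (min_eq_left hm).symm
    have small : ∀ {l : Filter ℝ} {d : ℝ} (j : Fin N), Filter.Tendsto (fun m => m * d) l Filter.atBot →
        Filter.Tendsto (fun m => min (u j) (Real.exp (z + m * d))) l (nhds 0) := by
      intro l d j hd
      have := Real.tendsto_exp_atBot.comp (Filter.tendsto_atBot_add_const_left l z hd)
      have := (tendsto_const_nhds (x := u j)).min this
      rwa [min_eq_right (u0 j)] at this
    have topF : Filter.Tendsto F Filter.atTop (nhds P) := by
      refine tendsto_finsetSum _ fun j _ => Filter.Tendsto.mul_const _ ?_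
      simp only [he]
      by_cases hj : j ≤ p
      · simp only [Set.mem_Ioi, not_lt.2 hj, not_false_eq_true, Set.indicator_of_notMem]
        exact small j (Filter.tendsto_id.atTop_mul_const_of_neg (below j hj))
      · simp only [Set.mem_Ioi, not_le.1 hj, Set.indicator_of_mem]
        exact big j (Filter.tendsto_id.atTop_mul_const (above j (not_le.1 hj)))
    have botF : Filter.Tendsto F Filter.atBot (nhds Q) := by
      refine tendsto_finsetSum _ fun j _ => Filter.Tendsto.mul_const _ ?_
      simp only [he]
      by_cases hj : j ≤ p
      · simp only [Set.mem_Iic, hj, Set.indicator_of_mem]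
        exact big j (Filter.tendsto_id.atBot_mul_const_of_neg (below j hj))
      · simp only [Set.mem_Iic, hj, not_false_eq_true, Set.indicator_of_notMem]
        exact small j (Filter.tendsto_id.atBot_mul_const (above j (not_le.1 hj)))
    obtain ⟨m, hm⟩ : ∃ m, F m = 0 := by
      rcases lt_or_gt_of_ne P0 with hneg | hpos
      · exact mem_range_of_exists_le_of_exists_ge Fcont
          ((topF.eventually_lt_const hneg).exists.imp fun _ h => h.le)
          ((botF.eventually_const_lt (by linarith : 0 < Q)).exists.imp fun _ h => h.le)
      · exact mem_range_of_exists_le_of_exists_ge Fcont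
          ((botF.eventually_lt_const (by linarith : Q < 0)).exists.imp fun _ h => h.le)
          ((topF.eventually_const_lt hpos).exists.imp fun _ h => h.le)
    obtain ⟨r, hr0, hr1, hr⟩ := split (fun j => min (u j) (e m j)) (uLC.min_exp u0 _ _)
      (fun i => le_min (u0 i) (Real.exp_pos _).le) ⟨p, lt_min hp (Real.exp_pos _)⟩
      (uLC.sub_min_exp _ _) (fun i => min_le_left _ _) (by
        by_contra! hc
        have h1 : u p ≤ e m p := (hc p).trans (min_le_right _ _)
        have h2 : u p' ≤ e m p' := (hc p').trans (min_le_right _ _)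
        have h3 : e m p * e m p' = u p * u p' / 2 := by
          rw [he, he, ← hez, ← Real.exp_add, ← Real.exp_add]
          simp only [p']
          push_cast
          ring_nf
        have := mul_le_mul h1 h2 hp'.le (Real.exp_pos _).le
        have : 0 < u p * u p' := by positivity
        linarith) hm
    refine ⟨p, q, hlt.le, z - m * ((p : ℕ) + 1 / 2) - Real.log r, m, fun j hj => ?_, hout⟩
    rw [Finset.mem_Icc] at hj
    have hj0 := uLC.pos_of_mem_Icc hp hq hj.1 hj.2
    have h1 := hr j
    have h2 : e m j = r * u j := by
      rcases min_choice (u j) (e m j) with h | h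
      · rw [h] at h1
        nlinarith
      · rw [← h1, h]
    rw [← Real.exp_add, show z - m * ((p : ℕ) + 1 / 2) - Real.log r + m * ((j : ℕ) : ℝ) =
      (z - m * ((p : ℕ) + 1 / 2) + m * ((j : ℕ) : ℝ)) - Real.log r by ring, Real.exp_sub,
      Real.exp_log hr0]
    change u j = e m j / r
    rw [h2]
    field_simp
  have sums : ∀ w : Fin N → ℝ, ∑ j, u j * w j =
      Real.exp z * ∑ j ∈ Finset.Icc p q, Real.exp (m * ((j : ℕ) : ℝ)) * w j := by
    intro w
    rw [← Finset.sum_subset (Finset.subset_univ (Finset.Icc p q))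
      fun j _ hj => by rw [hu0 j hj, zero_mul], Finset.mul_sum]
    exact Finset.sum_congr rfl fun j hj => by rw [hum j hj, mul_assoc]
  have fin : s * B₀ ≤ c := by
    have := H p q m hpq
    have e1 := sums a
    have e2 := sums b
    have e3 := sums g
    rw [uA] at e1
    rw [uB] at e2
    rw [uC] at e3
    rw [e1, e2]
    calc _ = Real.exp z ^ 2 * _ := by ring
      _ ≤ Real.exp z ^ 2 * _ := mul_le_mul_of_nonneg_left this (by positivity)
      _ = c * (Real.exp z * ∑ j ∈ Finset.Icc p q, Real.exp (m * ((j : ℕ) : ℝ)) * g j) ^ 2 := by ring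
      _ = c := by rw [← e3]; ring
  have hB := maxB _ Sne
  rw [scale] at hB
  have : A = s * C := by rw [hs]; field_simp
  calc A * ∑ j, h j * b j = C ^ 2 * (s * (C⁻¹ * ∑ j, h j * b j)) := by rw [this]; field_simp
    _ ≤ C ^ 2 * (s * B₀) := by gcongr
    _ ≤ C ^ 2 * c := by gcongr
    _ = c * C ^ 2 := by ring

/-- The one-dimensional needle inequality for the Gaussian weights `exp (-βᵢ t²)`. -/
def NeedleBound (R c β₁ β₂ β₃ : ℝ) : Prop :=
  ∀ ℓ u γ : ℝ, -R ≤ ℓ → ℓ ≤ u → u ≤ R →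
    (∫ t in ℓ..u, Real.exp (γ * t) * Real.exp (-β₁ * t ^ 2)) *
      (∫ t in ℓ..u, Real.exp (γ * t) * Real.exp (-β₂ * t ^ 2)) ≤
    c * (∫ t in ℓ..u, Real.exp (γ * t) * Real.exp (-β₃ * t ^ 2)) ^ 2

lemma exp_neg_mul_sq_le {β B R Δ s t : ℝ} (hβ : 0 ≤ β) (hβB : β ≤ B) (hs : |s| ≤ R) (ht : |t| ≤ R)
    (hst : |s - t| ≤ Δ) :
    Real.exp (-β * s ^ 2) ≤ Real.exp (2 * B * R * Δ) * Real.exp (-β * t ^ 2) := by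
  rw [← Real.exp_add, Real.exp_le_exp]
  have hR : 0 ≤ R := (abs_nonneg s).trans hs
  have h : t ^ 2 - s ^ 2 ≤ 2 * R * Δ := by
    calc t ^ 2 - s ^ 2 ≤ |t ^ 2 - s ^ 2| := le_abs_self _
      _ = |s + t| * |s - t| := by rw [← abs_mul, abs_sub_comm]; ring_nf
      _ ≤ (2 * R) * Δ := by
        have := abs_add_le s t
        gcongr
        linarith
  have hΔ : 0 ≤ 2 * R * Δ := by have := (abs_nonneg _).trans hst; positivity
  nlinarith [mul_le_mul_of_nonneg_left h hβ, mul_le_mul_of_nonneg_right hβB hΔ]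

/-- Comparison of a weighted integral over grid cells with the sum obtained by freezing the weight
at the left endpoint of each cell. -/
lemma grid_sum_comparison {N : ℕ} {β B R Δ : ℝ} (hβ : 0 ≤ β) (hβB : β ≤ B)
    (hΔ : 0 ≤ Δ) (hN : N * Δ = 2 * R) {k : ℝ → ℝ} (hk0 : ∀ t, 0 ≤ k t)
    (hki : ∀ a b, IntervalIntegrable k volume a b) {p q : Fin N} (hpq : p ≤ q) :
    (∫ t in (-R + (p : ℕ) * Δ)..(-R + ((q : ℕ) + 1 : ℕ) * Δ), k t * Real.exp (-β * t ^ 2)) ≤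
      Real.exp (2 * B * R * Δ) * ∑ j ∈ Finset.Icc p q,
        (∫ t in (-R + (j : ℕ) * Δ)..(-R + ((j : ℕ) + 1 : ℕ) * Δ), k t) *
          Real.exp (-β * (-R + (j : ℕ) * Δ) ^ 2) ∧
    (∑ j ∈ Finset.Icc p q,
        (∫ t in (-R + (j : ℕ) * Δ)..(-R + ((j : ℕ) + 1 : ℕ) * Δ), k t) *
          Real.exp (-β * (-R + (j : ℕ) * Δ) ^ 2)) ≤
      Real.exp (2 * B * R * Δ) *
        ∫ t in (-R + (p : ℕ) * Δ)..(-R + ((q : ℕ) + 1 : ℕ) * Δ), k t * Real.exp (-β * t ^ 2) := by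
  have hw : Continuous fun t : ℝ => Real.exp (-β * t ^ 2) := by fun_prop
  have hkw : ∀ a b, IntervalIntegrable (fun t => k t * Real.exp (-β * t ^ 2)) volume a b :=
    fun a b => (hki a b).mul_continuousOn hw.continuousOn
  have hsum : (∫ t in (-R + (p : ℕ) * Δ)..(-R + ((q : ℕ) + 1 : ℕ) * Δ),
      k t * Real.exp (-β * t ^ 2)) = ∑ j ∈ Finset.Icc p q,
      ∫ t in (-R + (j : ℕ) * Δ)..(-R + ((j : ℕ) + 1 : ℕ) * Δ), k t * Real.exp (-β * t ^ 2) := by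
    rw [← sum_integral_adjacent_intervals_Ico (a := fun j : ℕ => -R + j * Δ)
      (show (p : ℕ) ≤ q + 1 from Nat.le_succ_of_le hpq) fun j _ => hkw _ _]
    have : Finset.Ico (p : ℕ) ((q : ℕ) + 1) = (Finset.Icc p q).map Fin.valEmbedding := by
      rw [Fin.map_valEmbedding_Icc]; rfl
    rw [this, Finset.sum_map]
    rfl
  have hcell : ∀ j : Fin N, ∀ t ∈ Set.Icc (-R + (j : ℕ) * Δ) (-R + ((j : ℕ) + 1 : ℕ) * Δ),
      |t| ≤ R ∧ |-R + (j : ℕ) * Δ| ≤ R ∧ |t - (-R + (j : ℕ) * Δ)| ≤ Δ := by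
    intro j t ht
    have h1 : ((j : ℕ) + 1 : ℕ) * Δ ≤ N * Δ := by
      gcongr
      exact j.2
    have h2 : 0 ≤ (j : ℕ) * Δ := by positivity
    obtain ⟨ht1, ht2⟩ := ht
    push_cast at h1 ht2
    refine ⟨abs_le.2 ⟨?_, ?_⟩, abs_le.2 ⟨?_, ?_⟩, abs_le.2 ⟨?_, ?_⟩⟩ <;> linarith
  have hle : ∀ j : Fin N, -R + (j : ℕ) * Δ ≤ -R + ((j : ℕ) + 1 : ℕ) * Δ := by
    intro j; push_cast; linarith
  rw [hsum, Finset.mul_sum, Finset.mul_sum]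
  constructor
  · refine Finset.sum_le_sum fun j _ => ?_
    rw [← intervalIntegral.integral_mul_const, ← intervalIntegral.integral_const_mul]
    refine integral_mono_on (hle j) (hkw _ _) (((hki _ _).mul_const _).const_mul _) fun t ht => ?_
    obtain ⟨h1, h2, h3⟩ := hcell j t ht
    have := mul_le_mul_of_nonneg_left (exp_neg_mul_sq_le hβ hβB h1 h2 h3) (hk0 t)
    linarith
  · refine Finset.sum_le_sum fun j _ => ?_
    rw [← intervalIntegral.integral_mul_const, ← intervalIntegral.integral_const_mul]
    refine integral_mono_on (hle j) ((hki _ _).mul_const _) ((hkw _ _).const_mul _) fun t ht => ?_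
    obtain ⟨h1, h2, h3⟩ := hcell j t ht
    rw [abs_sub_comm] at h3
    have := mul_le_mul_of_nonneg_left (exp_neg_mul_sq_le hβ hβB h2 h1 h3) (hk0 t)
    linarith

/-- Integrals of a logconcave function over the cells of a uniform grid form a logconcave
sequence. -/
lemma LogConcaveFn.logConcaveSeq_cells {h : ℝ → ℝ} (hh : LogConcaveFn h) (hm : Measurable h)
    (h0 : ∀ t, 0 ≤ h t) {M : ℝ} (hM : ∀ t, h t ≤ M) (N : ℕ) (s Δ : ℝ) (hΔ : 0 ≤ Δ) :
    LogConcaveSeq fun j : Fin N => ∫ t in (s + (j : ℕ) * Δ)..(s + ((j : ℕ) + 1 : ℕ) * Δ), h t := by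
  set F : ℝ → ℝ → ℝ := fun x => (Set.Ioc 0 Δ).indicator fun τ => h (x + τ) with hF
  have hF0 : ∀ x t, 0 ≤ F x t := fun x t => Set.indicator_nonneg (fun _ _ => h0 _) _
  have key : LogConcaveFn fun x => ∫ t, F x t := by
    refine LogConcaveFn.marginal (R := Δ) (M := M) ?_ ?_ hF0 ?_ ?_
    · intro x y u v l hl0 hl1
      rcases hl0.eq_or_lt with rfl | hl0
      · simp
      rcases hl1.eq_or_lt with rfl | hl1
      · simp
      have hl1' := sub_pos.2 hl1
      by_cases hu : u ∈ Set.Ioc 0 Δ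
      · by_cases hv : v ∈ Set.Ioc 0 Δ
        · have hw : l * u + (1 - l) * v ∈ Set.Ioc 0 Δ :=
            convex_Ioc 0 Δ hu hv hl0.le hl1'.le (by ring)
          simp only [hF, Set.indicator_of_mem hu, Set.indicator_of_mem hv,
            Set.indicator_of_mem hw]
          refine (hh _ _ l hl0.le hl1.le).trans_eq ?_
          congr 1
          simp only [smul_eq_mul]
          ring
        · simp only [hF, Set.indicator_of_notMem hv, Real.zero_rpow hl1'.ne', mul_zero]
          exact hF0 _ _
      · simp only [hF, Set.indicator_of_notMem hu, Real.zero_rpow hl0.ne', zero_mul]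
        exact hF0 _ _
    · intro x
      exact (hm.comp (measurable_const_add x)).indicator measurableSet_Ioc
    · intro x t
      exact Set.indicator_apply_le' (fun _ => hM _) fun _ => (h0 0).trans (hM 0)
    · intro x
      refine Set.support_indicator_subset.trans fun t ht => ⟨?_, ht.2⟩
      linarith [ht.1]
  have e : ∀ j : ℕ, (∫ t in (s + (j : ℕ) * Δ)..(s + ((j : ℕ) + 1 : ℕ) * Δ), h t)
      = ∫ t, F (s + j * Δ) t := by
    intro j
    rw [hF, MeasureTheory.integral_indicator measurableSet_Ioc, ← integral_of_le hΔ,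
      intervalIntegral.integral_comp_add_left]
    congr 1 <;> push_cast <;> ring
  intro i j k l hl0 hl1 hj
  simp only [e]
  refine (key _ _ l hl0 hl1).trans_eq ?_
  simp only [smul_eq_mul, hj]
  congr 2
  ring_nf

/-- The localization inequality for logconcave functions on the line. -/
lemma LogConcaveFn.needle_real {R c β₁ β₂ β₃ : ℝ} (hR : 0 < R) (hc : 0 ≤ c)
    (h1 : 0 ≤ β₁) (h2 : 0 ≤ β₂) (h3 : 0 ≤ β₃)
    (hneedle : NeedleBound R c β₁ β₂ β₃) {h : ℝ → ℝ} (hh : LogConcaveFn h) (hm : Measurable h)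
    (h0 : ∀ t, 0 ≤ h t) {M : ℝ} (hM : ∀ t, h t ≤ M)
    (hsupp : Function.support h ⊆ Set.Icc (-R) R) :
    (∫ t, h t * Real.exp (-β₁ * t ^ 2)) * (∫ t, h t * Real.exp (-β₂ * t ^ 2)) ≤
      c * (∫ t, h t * Real.exp (-β₃ * t ^ 2)) ^ 2 := by
  set B := max β₁ (max β₂ β₃)
  have b1 : β₁ ≤ B := le_max_left _ _
  have b2 : β₂ ≤ B := (le_max_left _ _).trans (le_max_right _ _)
  have b3 : β₃ ≤ B := (le_max_right _ _).trans (le_max_right _ _)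
  have hi : ∀ a b, IntervalIntegrable h volume a b := fun a b =>
    intervalIntegrable_iff.2 <| Measure.integrableOn_of_bounded (M := M) (by simp)
      hm.aestronglyMeasurable (.of_forall fun x => by rw [Real.norm_of_nonneg (h0 x)]; exact hM x)
  have hline : ∀ β, (∫ t, h t * Real.exp (-β * t ^ 2)) =
      ∫ t in (-R)..R, h t * Real.exp (-β * t ^ 2) := by
    intro β
    rw [integral_of_le (by linarith), ← integral_Icc_eq_integral_Ioc,
      setIntegral_eq_integral_of_forall_compl_eq_zero]
    intro t ht
    rw [Function.notMem_support.1 fun h => ht (hsupp h), zero_mul]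
  have hbound : ∀ n : ℕ, (∫ t, h t * Real.exp (-β₁ * t ^ 2)) *
      (∫ t, h t * Real.exp (-β₂ * t ^ 2)) ≤
      c * Real.exp (2 * B * R * (2 * R / (n + 1))) ^ 8 *
        (∫ t, h t * Real.exp (-β₃ * t ^ 2)) ^ 2 := by
    intro n
    set Δ : ℝ := 2 * R / (n + 1) with hΔdef
    have hΔ : 0 < Δ := by positivity
    have hN : ((n + 1 : ℕ) : ℝ) * Δ = 2 * R := by
      push_cast; rw [hΔdef]; field_simp
    set E := Real.exp (2 * B * R * Δ) with hE
    have hE0 : 0 < E := Real.exp_pos _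
    set H : Fin (n + 1) → ℝ := fun j =>
      ∫ t in (-R + (j : ℕ) * Δ)..(-R + ((j : ℕ) + 1 : ℕ) * Δ), h t with hH
    set w : ℝ → Fin (n + 1) → ℝ := fun β j => Real.exp (-β * (-R + (j : ℕ) * Δ) ^ 2) with hw
    have hH0 : ∀ j, 0 ≤ H j := fun j => integral_nonneg (by push_cast; linarith) fun t _ => h0 t
    have hHw : ∀ β, 0 ≤ ∑ j, H j * w β j := fun β =>
      Finset.sum_nonneg fun j _ => mul_nonneg (hH0 j) (Real.exp_pos _).le
    have hcmp : ∀ β, 0 ≤ β → β ≤ B →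
        (∫ t, h t * Real.exp (-β * t ^ 2)) ≤ E * ∑ j, H j * w β j ∧
        (∑ j, H j * w β j) ≤ E * ∫ t, h t * Real.exp (-β * t ^ 2) := by
      intro β hβ hβB
      have := grid_sum_comparison hβ hβB hΔ.le hN h0 hi (Fin.zero_le (Fin.last n))
      have hIcc : Finset.Icc 0 (Fin.last n) = Finset.univ := by
        ext j; simp [Fin.le_last]
      have eR : -R + ((n + 1 : ℕ) : ℝ) * Δ = R := by rw [hN]; ring
      rw [hIcc, Fin.val_last, Fin.val_zero, eR, Nat.cast_zero, zero_mul, add_zero,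
        ← hline β] at this
      exact this
    have key := LogConcaveSeq.localization (a := w β₁) (b := w β₂) (g := w β₃) (c := c * E ^ 4)
      (fun _ => (Real.exp_pos _).le) (fun _ => Real.exp_pos _) ?_
      (hh.logConcaveSeq_cells hm h0 hM (n + 1) (-R) Δ hΔ.le) hH0
    · have I0 : ∀ β, 0 ≤ ∫ t, h t * Real.exp (-β * t ^ 2) := fun β =>
        MeasureTheory.integral_nonneg fun t => mul_nonneg (h0 t) (Real.exp_pos _).le
      calc _ ≤ (E * ∑ j, H j * w β₁ j) * (E * ∑ j, H j * w β₂ j) :=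
            mul_le_mul (hcmp β₁ h1 b1).1 (hcmp β₂ h2 b2).1 (I0 _) (mul_nonneg hE0.le (hHw _))
        _ = E ^ 2 * ((∑ j, H j * w β₁ j) * (∑ j, H j * w β₂ j)) := by ring
        _ ≤ E ^ 2 * (c * E ^ 4 * (∑ j, H j * w β₃ j) ^ 2) := by gcongr
        _ ≤ E ^ 2 * (c * E ^ 4 * (E * ∫ t, h t * Real.exp (-β₃ * t ^ 2)) ^ 2) := by
            have := hHw β₃
            gcongr
            exact (hcmp β₃ h3 b3).2
        _ = _ := by ring
    · intro p q m hpq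
      set γ := m / Δ with hγ
      set κ := ∫ t in (0 : ℝ)..Δ, Real.exp (γ * (-R + t)) with hκ
      have hκ0 : 0 < κ := intervalIntegral_pos_of_pos
        (Continuous.intervalIntegrable (by fun_prop) _ _) (fun _ => Real.exp_pos _) hΔ
      have hcell : ∀ j : ℕ, (∫ t in (-R + (j : ℕ) * Δ)..(-R + ((j : ℕ) + 1 : ℕ) * Δ),
          Real.exp (γ * t)) = κ * Real.exp (m * j) := by
        intro j
        rw [hκ, ← intervalIntegral.integral_mul_const]
        have : ∀ t, Real.exp (γ * (-R + t)) * Real.exp (m * j) =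
            Real.exp (γ * ((-R + j * Δ) + t)) := by
          intro t
          rw [← Real.exp_add, hγ]
          congr 1
          field_simp
          ring
        simp only [this]
        rw [intervalIntegral.integral_comp_add_left (fun t => Real.exp (γ * t))]
        congr 1 <;> push_cast <;> ring
      have hcmp' : ∀ β, 0 ≤ β → β ≤ B → _ := fun β hβ hβB =>
        grid_sum_comparison (k := fun t => Real.exp (γ * t)) hβ hβB hΔ.le hN
          (fun _ => (Real.exp_pos _).le)
          (fun a b => Continuous.intervalIntegrable (by fun_prop) _ _) hpq
      simp only [hcell, mul_assoc, ← Finset.mul_sum] at hcmp'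
      simp only [← mul_assoc, ← hE] at hcmp'
      have hlow : -R ≤ -R + (p : ℕ) * Δ := by
        have : 0 ≤ (p : ℕ) * Δ := by positivity
        linarith
      have hmid : -R + (p : ℕ) * Δ ≤ -R + ((q : ℕ) + 1 : ℕ) * Δ := by
        gcongr
        exact Nat.le_succ_of_le hpq
      have hup : -R + ((q : ℕ) + 1 : ℕ) * Δ ≤ R := by
        have : ((q : ℕ) + 1 : ℕ) * Δ ≤ ((n + 1 : ℕ) : ℝ) * Δ := by
          gcongr
          exact Nat.le_of_lt_succ q.2
        linarith
      have hnd := hneedle _ _ γ hlow hmid hup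
      have S0 : ∀ β, 0 ≤ ∑ j ∈ Finset.Icc p q, Real.exp (m * (j : ℕ)) * w β j := fun β =>
        Finset.sum_nonneg fun j _ => mul_nonneg (Real.exp_pos _).le (Real.exp_pos _).le
      have I0 : ∀ β, 0 ≤ ∫ t in (-R + (p : ℕ) * Δ)..(-R + ((q : ℕ) + 1 : ℕ) * Δ),
          Real.exp (γ * t) * Real.exp (-β * t ^ 2) := fun β =>
        intervalIntegral.integral_nonneg hmid fun t _ =>
          mul_nonneg (Real.exp_pos _).le (Real.exp_pos _).le
      have k1 := (hcmp' β₁ h1 b1).2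
      have k2 := (hcmp' β₂ h2 b2).2
      have k3 := (hcmp' β₃ h3 b3).1
      refine le_of_mul_le_mul_left ?_ (pow_pos hκ0 2)
      calc _ = (κ * ∑ j ∈ Finset.Icc p q, Real.exp (m * (j : ℕ)) * w β₁ j) *
            (κ * ∑ j ∈ Finset.Icc p q, Real.exp (m * (j : ℕ)) * w β₂ j) := by ring
        _ ≤ _ := mul_le_mul k1 k2 (mul_nonneg hκ0.le (S0 _)) (mul_nonneg hE0.le (I0 _))
        _ = E ^ 2 * _ := by rw [mul_mul_mul_comm, ← sq]
        _ ≤ E ^ 2 * _ := mul_le_mul_of_nonneg_left hnd (by positivity)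
        _ ≤ E ^ 2 * (c * (E * κ * ∑ j ∈ Finset.Icc p q, Real.exp (m * (j : ℕ)) * w β₃ j) ^ 2) := by
            have := I0 β₃
            gcongr
        _ = _ := by ring
  have t1 : Filter.Tendsto (fun n : ℕ => 2 * R / ((n : ℝ) + 1)) Filter.atTop (nhds 0) := by
    simpa [div_eq_mul_inv] using tendsto_one_div_add_atTop_nhds_zero_nat.const_mul (2 * R)
  have t2 : Continuous fun x : ℝ => c * Real.exp (2 * B * R * x) ^ 8 *
      (∫ t, h t * Real.exp (-β₃ * t ^ 2)) ^ 2 := by fun_prop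
  have t3 := (t2.tendsto 0).comp t1
  rw [mul_zero, Real.exp_zero, one_pow, mul_one] at t3
  exact ge_of_tendsto' t3 hbound

/-- A line through a given point bisecting a function of zero integral. -/
lemma exists_halfplane {X : Type*} [MeasurableSpace X] {μ : Measure X} {π : X → ℝ × ℝ}
    (hπ : Measurable π) {F₁ F₂ : X → ℝ} (h₁ : Integrable F₁ μ) (h₂ : Integrable F₂ μ)
    (hnull : ∀ a b d : ℝ, a ^ 2 + b ^ 2 = 1 → μ {x | a * (π x).1 + b * (π x).2 = d} = 0)
    (e₁ : ∫ x, F₁ x ∂μ = 0) (e₂ : 0 < ∫ x, F₂ x ∂μ) (q : ℝ × ℝ) :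
    ∃ a b : ℝ, a ^ 2 + b ^ 2 = 1 ∧
      ∫ x in π ⁻¹' {y | 0 ≤ a * (y.1 - q.1) + b * (y.2 - q.2)}, F₁ x ∂μ = 0 ∧
      0 < ∫ x in π ⁻¹' {y | 0 ≤ a * (y.1 - q.1) + b * (y.2 - q.2)}, F₂ x ∂μ := by
  set L : ℝ → X → ℝ := fun θ x =>
    Real.cos θ * ((π x).1 - q.1) + Real.sin θ * ((π x).2 - q.2) with hL
  have hLm : ∀ θ, Measurable (L θ) := fun θ => by fun_prop
  have hLnull : ∀ θ, ∀ᵐ x ∂μ, L θ x ≠ 0 := by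
    intro θ
    have := hnull (Real.cos θ) (Real.sin θ) (Real.cos θ * q.1 + Real.sin θ * q.2)
      (Real.cos_sq_add_sin_sq θ)
    rw [ae_iff]
    refine measure_mono_null (fun x hx => ?_) this
    have hx : L θ x = 0 := not_not.1 hx
    change Real.cos θ * (π x).1 + Real.sin θ * (π x).2 = _
    simp only [hL] at hx
    linarith
  have hms : ∀ θ, MeasurableSet {x | 0 ≤ L θ x} := fun θ => measurableSet_le measurable_const (hLm θ)
  have hflip : ∀ θ x, L (θ + Real.pi) x = -L θ x := by
    intro θ x
    simp only [hL, Real.cos_add_pi, Real.sin_add_pi]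
    ring
  have hsplit : ∀ F : X → ℝ, Integrable F μ → ∀ θ,
      (∫ x in {x | 0 ≤ L θ x}, F x ∂μ) + (∫ x in {x | 0 ≤ L (θ + Real.pi) x}, F x ∂μ) =
        ∫ x, F x ∂μ := by
    intro F hF θ
    rw [← integral_add_compl (hms θ) hF]
    congr 1
    refine setIntegral_congr_set ?_
    filter_upwards [hLnull θ] with x hx
    refine propext ?_
    change 0 ≤ L (θ + Real.pi) x ↔ ¬ 0 ≤ L θ x
    rw [hflip, not_le]
    exact ⟨fun h => lt_of_le_of_ne (by linarith) hx, fun h => by linarith⟩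
  have hcont : Continuous fun θ => ∫ x in {x | 0 ≤ L θ x}, F₁ x ∂μ := by
    simp only [← MeasureTheory.integral_indicator (hms _)]
    refine continuous_iff_continuousAt.2 fun θ => ?_
    refine continuousAt_of_dominated (bound := fun x => ‖F₁ x‖) ?_ ?_ h₁.norm ?_
    · exact .of_forall fun θ => h₁.aestronglyMeasurable.indicator (hms θ)
    · exact .of_forall fun θ => .of_forall fun x => norm_indicator_le_norm_self _ _
    · filter_upwards [hLnull θ] with x hx
      have hLc : Continuous fun θ => L θ x := by
        simp only [hL]; fun_prop
      rcases lt_or_gt_of_ne hx with hx | hx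
      · refine (continuousAt_const (y := (0 : ℝ))).congr ?_
        filter_upwards [hLc.continuousAt.eventually_lt continuousAt_const hx] with θ' h'
        exact (Set.indicator_of_notMem (show x ∉ {x | 0 ≤ L θ' x} from not_le.2 h') _).symm
      · refine (continuousAt_const (y := F₁ x)).congr ?_
        filter_upwards [continuousAt_const.eventually_lt hLc.continuousAt hx] with θ' h'
        exact (Set.indicator_of_mem (show x ∈ {x | 0 ≤ L θ' x} from h'.le) _).symm
  obtain ⟨θ, hθ⟩ : ∃ θ, ∫ x in {x | 0 ≤ L θ x}, F₁ x ∂μ = 0 := by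
    have h := hsplit F₁ h₁ 0
    rw [e₁] at h
    rcases le_total (∫ x in {x | 0 ≤ L 0 x}, F₁ x ∂μ) 0 with h0 | h0
    · exact mem_range_of_exists_le_of_exists_ge hcont ⟨0, h0⟩ ⟨0 + Real.pi, by linarith⟩
    · exact mem_range_of_exists_le_of_exists_ge hcont ⟨0 + Real.pi, by linarith⟩ ⟨0, h0⟩
  have hθ' : ∫ x in {x | 0 ≤ L (θ + Real.pi) x}, F₁ x ∂μ = 0 := by
    have h := hsplit F₁ h₁ θ
    linarith
  have h := hsplit F₂ h₂ θ
  rcases lt_or_ge 0 (∫ x in {x | 0 ≤ L θ x}, F₂ x ∂μ) with h0 | h0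
  · exact ⟨Real.cos θ, Real.sin θ, Real.cos_sq_add_sin_sq θ, hθ, h0⟩
  · exact ⟨Real.cos (θ + Real.pi), Real.sin (θ + Real.pi), Real.cos_sq_add_sin_sq _, hθ',
      show 0 < ∫ x in {x | 0 ≤ L (θ + Real.pi) x}, F₂ x ∂μ by linarith⟩

/-- A convex planar set with empty interior lies on a line. -/
lemma Convex.exists_linear_const_of_interior_eq_empty {T : Set (ℝ × ℝ)} (hT : Convex ℝ T)
    (hi : interior T = ∅) :
    ∃ a b : ℝ, a ^ 2 + b ^ 2 = 1 ∧ ∀ y ∈ T, ∀ z ∈ T, a * (y.1 - z.1) + b * (y.2 - z.2) = 0 := by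
  have hspan : vectorSpan ℝ T < ⊤ := by
    refine lt_top_iff_ne_top.2 fun h => ?_
    rcases T.eq_empty_or_nonempty with rfl | hne
    · simp at h
    · have := hT.interior_nonempty_iff_affineSpan_eq_top.2
        ((AffineSubspace.affineSpan_eq_top_iff_vectorSpan_eq_top_of_nonempty ℝ _ _ hne).2 h)
      simp [hi] at this
  obtain ⟨f, hf0, hf⟩ := Submodule.exists_le_ker_of_lt_top _ hspan
  set a := f (1, 0) with ha
  set b := f (0, 1) with hb
  have hfab : ∀ y, f y = a * y.1 + b * y.2 := by
    intro y
    have : y = y.1 • ((1, 0) : ℝ × ℝ) + y.2 • ((0, 1) : ℝ × ℝ) := by ext <;> simp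
    conv_lhs => rw [this]
    rw [map_add, map_smul, map_smul, smul_eq_mul, smul_eq_mul]
    ring
  have hpos : 0 < a ^ 2 + b ^ 2 := by
    by_contra h
    refine hf0 (LinearMap.ext fun y => ?_)
    have h1 : a = 0 := by nlinarith [sq_nonneg a, sq_nonneg b]
    have h2 : b = 0 := by nlinarith [sq_nonneg a, sq_nonneg b]
    rw [hfab, h1, h2]
    simp
  set r := Real.sqrt (a ^ 2 + b ^ 2)
  have hr : r ^ 2 = a ^ 2 + b ^ 2 := Real.sq_sqrt hpos.le
  have hr0 : 0 < r := Real.sqrt_pos.2 hpos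
  refine ⟨a / r, b / r, ?_, fun y hy z hz => ?_⟩
  · rw [div_pow, div_pow, ← add_div, ← hr]
    field_simp
  · have h := hf (vsub_mem_vectorSpan ℝ hy hz)
    rw [LinearMap.mem_ker, hfab] at h
    simp only [vsub_eq_sub, Prod.fst_sub, Prod.snd_sub] at h
    rw [div_mul_eq_mul_div, div_mul_eq_mul_div, ← add_div, h, zero_div]

/-- Iterated bisection along the fibres of a map to the plane: there is a planar closed convex set,
arbitrarily thin inside a given compact set, over which the two integral conditions persist. -/
lemma exists_thin_convex {X : Type*} [MeasurableSpace X] {μ : Measure X} {π : X → ℝ × ℝ}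
    (hπ : Measurable π) {F₁ F₂ : X → ℝ} (h₁ : Integrable F₁ μ) (h₂ : Integrable F₂ μ)
    (hnull : ∀ a b d : ℝ, a ^ 2 + b ^ 2 = 1 → μ {x | a * (π x).1 + b * (π x).2 = d} = 0)
    (e₁ : ∫ x, F₁ x ∂μ = 0) (e₂ : 0 < ∫ x, F₂ x ∂μ) {K : Set (ℝ × ℝ)} (hK : IsCompact K)
    (hKc : Convex ℝ K) {ε : ℝ} (hε : 0 < ε) :
    ∃ S : Set (ℝ × ℝ), Convex ℝ S ∧ IsClosed S ∧ ∫ x in π ⁻¹' S, F₁ x ∂μ = 0 ∧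
      0 < ∫ x in π ⁻¹' S, F₂ x ∂μ ∧
      ∃ a b : ℝ, a ^ 2 + b ^ 2 = 1 ∧
        ∀ y ∈ S ∩ K, ∀ z ∈ S ∩ K, |a * (y.1 - z.1) + b * (y.2 - z.2)| ≤ ε := by
  let P : Set (ℝ × ℝ) → Prop := fun S => Convex ℝ S ∧ IsClosed S ∧
    ∫ x in π ⁻¹' S, F₁ x ∂μ = 0 ∧ 0 < ∫ x in π ⁻¹' S, F₂ x ∂μ
  have step : ∀ (q : ℝ × ℝ) (S : {S // P S}), ∃ T : {S // P S}, T.1 ⊆ S.1 ∧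
      ∃ a b : ℝ, a ^ 2 + b ^ 2 = 1 ∧ ∀ y ∈ T.1, 0 ≤ a * (y.1 - q.1) + b * (y.2 - q.2) := by
    rintro q ⟨S, hSc, hScl, hS1, hS2⟩
    obtain ⟨a, b, hab, g1, g2⟩ := exists_halfplane hπ h₁.restrict h₂.restrict
      (fun a b d h => le_bot_iff.1 ((Measure.restrict_apply_le _ _).trans (hnull a b d h).le)) hS1 hS2 q
    set H : Set (ℝ × ℝ) := {y | 0 ≤ a * (y.1 - q.1) + b * (y.2 - q.2)} with hH
    have hHcl : IsClosed H := isClosed_le continuous_const (by fun_prop)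
    have hHc : Convex ℝ H := by
      intro y hy z hz s t hs ht hst
      have hy : 0 ≤ a * (y.1 - q.1) + b * (y.2 - q.2) := hy
      have hz : 0 ≤ a * (z.1 - q.1) + b * (z.2 - q.2) := hz
      change 0 ≤ a * (s * y.1 + t * z.1 - q.1) + b * (s * y.2 + t * z.2 - q.2)
      have : a * (s * y.1 + t * z.1 - q.1) + b * (s * y.2 + t * z.2 - q.2) =
          s * (a * (y.1 - q.1) + b * (y.2 - q.2)) + t * (a * (z.1 - q.1) + b * (z.2 - q.2)) +
            (s + t - 1) * (a * q.1 + b * q.2) := by ring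
      rw [this, hst]
      have := mul_nonneg hs hy
      have := mul_nonneg ht hz
      linarith
    rw [Measure.restrict_restrict (hπ hHcl.measurableSet), ← Set.preimage_inter] at g1 g2
    exact ⟨⟨H ∩ S, hHc.inter hSc, hHcl.inter hScl, g1, g2⟩, Set.inter_subset_right, a, b, hab,
      fun y hy => hy.1⟩
  choose next hsub hhalf using step
  let S : ℕ → {S // P S} := fun n => Nat.rec
    ⟨Set.univ, convex_univ, isClosed_univ, by simpa using e₁, by simpa using e₂⟩
    (fun i T => next (TopologicalSpace.denseSeq (ℝ × ℝ) i) T) n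
  have hSsucc : ∀ i, S (i + 1) = next (TopologicalSpace.denseSeq (ℝ × ℝ) i) (S i) := fun i => rfl
  have hanti : Antitone fun i => (S i).1 := antitone_nat_of_succ_le fun i => by
    rw [hSsucc]; exact hsub _ _
  set T : Set (ℝ × ℝ) := ⋂ i, ((S i).1 ∩ K) with hTdef
  have hTc : Convex ℝ T := convex_iInter fun i => (S i).2.1.inter hKc
  have hTi : interior T = ∅ := by
    by_contra hne
    obtain ⟨_, hq, i, rfl⟩ := (TopologicalSpace.denseRange_denseSeq (ℝ × ℝ)).inter_open_nonempty _
      isOpen_interior (Set.nonempty_iff_ne_empty.2 hne)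
    set q := TopologicalSpace.denseSeq (ℝ × ℝ) i
    obtain ⟨a, b, hab, h⟩ := hhalf q (S i)
    have hcurve : Continuous fun δ : ℝ => ((q.1 - δ * a, q.2 - δ * b) : ℝ × ℝ) := by fun_prop
    have hev : ∀ᶠ δ in nhds (0 : ℝ), ((q.1 - δ * a, q.2 - δ * b) : ℝ × ℝ) ∈ interior T :=
      hcurve.continuousAt.eventually_mem (isOpen_interior.mem_nhds (by simpa using hq))
    obtain ⟨δ, hδ, hδ0⟩ := ((hev.filter_mono nhdsWithin_le_nhds).and
      (self_mem_nhdsWithin (s := Set.Ioi (0 : ℝ)))).exists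
    have hmem := (Set.mem_iInter.1 (interior_subset hδ) (i + 1)).1
    rw [hSsucc] at hmem
    have := h _ hmem
    have hδ0 : 0 < δ := hδ0
    simp only at this
    nlinarith
  obtain ⟨a, b, hab, hline⟩ := hTc.exists_linear_const_of_interior_eq_empty hTi
  by_contra hcon
  push Not at hcon
  let D : ℕ → Set ((ℝ × ℝ) × (ℝ × ℝ)) := fun i => (((S i).1 ∩ K) ×ˢ ((S i).1 ∩ K)) ∩
    {p | ε ≤ |a * (p.1.1 - p.2.1) + b * (p.1.2 - p.2.2)|}
  have hScomp : ∀ i, IsCompact ((S i).1 ∩ K) := fun i => hK.inter_left (S i).2.2.1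
  have hDcl : IsClosed {p : (ℝ × ℝ) × (ℝ × ℝ) |
      ε ≤ |a * (p.1.1 - p.2.1) + b * (p.1.2 - p.2.2)|} :=
    isClosed_le continuous_const (by fun_prop)
  have hDcomp : ∀ i, IsCompact (D i) := fun i => ((hScomp i).prod (hScomp i)).inter_right hDcl
  obtain ⟨p, hp⟩ := IsCompact.nonempty_iInter_of_sequence_nonempty_isCompact_isClosed D
    (fun i => Set.inter_subset_inter_left _ <| Set.prod_mono
      (Set.inter_subset_inter_left _ (hanti (Nat.le_succ i)))
      (Set.inter_subset_inter_left _ (hanti (Nat.le_succ i))))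
    (fun i => by
      obtain ⟨y, hy, z, hz, hyz⟩ := hcon (S i).1 (S i).2.1 (S i).2.2.1 (S i).2.2.2.1
        (S i).2.2.2.2 a b hab
      exact ⟨(y, z), ⟨hy, hz⟩, hyz.le⟩)
    (hDcomp 0) (fun i => (hDcomp i).isClosed)
  rw [Set.mem_iInter] at hp
  have := hline p.1 (Set.mem_iInter.2 fun i => (hp i).1.1) p.2 (Set.mem_iInter.2 fun i => (hp i).1.2)
  have h0 := (hp 0).2
  simp only [Set.mem_ofPred_eq, this, abs_zero] at h0
  linarith

/-- Orthonormal coordinates adapted to a unit vector, splitting off the coordinate along it. -/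
lemma exists_orthogonal_coordinates {n : ℕ} (v : EuclideanSpace ℝ (Fin (n + 1))) (hv : ‖v‖ = 1) :
    ∃ Φ : (ℝ × EuclideanSpace ℝ (Fin n)) →ₗ[ℝ] EuclideanSpace ℝ (Fin (n + 1)),
      MeasurePreserving Φ volume volume ∧ MeasurableEmbedding Φ ∧
      (∀ t y, ‖Φ (t, y)‖ ^ 2 = t ^ 2 + ‖y‖ ^ 2) ∧ ∀ t y, inner ℝ v (Φ (t, y)) = t := by
  obtain ⟨b, hb⟩ := Orthonormal.exists_orthonormalBasis_extension_of_card_eq (ι := Fin (n + 1))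
    (𝕜 := ℝ) (E := EuclideanSpace ℝ (Fin (n + 1))) (by simp) (v := fun _ => v) (s := {0})
    ⟨fun _ => hv, fun i j hij => absurd (Subsingleton.elim i j) hij⟩
  have hb0 : b 0 = v := hb 0 rfl
  let ψ : (ℝ × EuclideanSpace ℝ (Fin n)) ≃ᵐ EuclideanSpace ℝ (Fin (n + 1)) :=
    (((MeasurableEquiv.refl ℝ).prodCongr (MeasurableEquiv.toLp 2 (Fin n → ℝ)).symm).trans
      (MeasurableEquiv.piFinSuccAbove (fun _ => ℝ) 0).symm).trans
      (MeasurableEquiv.toLp 2 (Fin (n + 1) → ℝ))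
  have hψ : MeasurePreserving ψ volume volume := by
    refine (EuclideanSpace.volume_preserving_symm_measurableEquiv_toLp (Fin (n + 1))).symm.comp
      ((volume_preserving_piFinSuccAbove (fun _ => ℝ) 0).symm.comp ?_)
    exact (MeasurePreserving.id volume).prod
      (EuclideanSpace.volume_preserving_symm_measurableEquiv_toLp (Fin n))
  have hψ0 : ∀ t y, ψ (t, y) 0 = t := fun t y => rfl
  have hψs : ∀ t y (i : Fin n), ψ (t, y) i.succ = y i := fun t y i => rfl
  let Ψ : (ℝ × EuclideanSpace ℝ (Fin n)) →ₗ[ℝ] EuclideanSpace ℝ (Fin (n + 1)) :=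
    { toFun := ψ
      map_add' := by
        rintro ⟨t, y⟩ ⟨s, z⟩
        ext i
        refine Fin.cases ?_ (fun j => ?_) i <;> rfl
      map_smul' := by
        rintro a ⟨t, y⟩
        ext i
        refine Fin.cases ?_ (fun j => ?_) i <;> rfl }
  refine ⟨b.repr.symm.toLinearEquiv.toLinearMap ∘ₗ Ψ, ?_, ?_, ?_, ?_⟩
  · exact b.measurePreserving_repr_symm.comp hψ
  · exact b.repr.symm.toHomeomorph.measurableEmbedding.comp ψ.measurableEmbedding
  · intro t y
    change ‖b.repr.symm (ψ (t, y))‖ ^ 2 = _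
    rw [LinearIsometryEquiv.norm_map, EuclideanSpace.norm_sq_eq, EuclideanSpace.norm_sq_eq,
      Fin.sum_univ_succ, hψ0]
    simp [hψs]
  · intro t y
    change inner ℝ v (b.repr.symm (ψ (t, y))) = t
    rw [← hb0, ← b.repr_apply_apply, LinearIsometryEquiv.apply_symm_apply, hψ0]

lemma volume_inner_eq_zero {n : ℕ} {v : EuclideanSpace ℝ (Fin (n + 1))} (hv : ‖v‖ = 1) (d : ℝ) :
    volume {x | inner ℝ v x = d} = 0 := by
  obtain ⟨Φ, hΦ, hΦe, -, hΦv⟩ := exists_orthogonal_coordinates v hv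
  rw [← hΦ.measure_preimage_emb hΦe]
  have : Φ ⁻¹' {x | inner ℝ v x = d} = {d} ×ˢ Set.univ := by
    ext ⟨t, y⟩
    simp [hΦv]
  rw [this, Measure.volume_eq_prod, Measure.prod_prod]
  simp

lemma integrable_mul_exp_neg_norm_sq {n : ℕ} {f : EuclideanSpace ℝ (Fin n) → ℝ}
    (hf : Integrable f) {β : ℝ} (hβ : 0 ≤ β) :
    Integrable fun x => f x * Real.exp (-β * ‖x‖ ^ 2) := by
  refine hf.mul_bdd (c := 1) (by fun_prop) (.of_forall fun x => ?_)
  rw [Real.norm_of_nonneg (Real.exp_pos _).le, Real.exp_le_one_iff]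
  nlinarith [mul_nonneg hβ (sq_nonneg ‖x‖)]

lemma integrable_of_bounded_support {n : ℕ} {f : EuclideanSpace ℝ (Fin n) → ℝ} {M R : ℝ}
    (hm : Measurable f) (h0 : ∀ x, 0 ≤ f x) (hM : ∀ x, f x ≤ M)
    (hsupp : Function.support f ⊆ Metric.closedBall 0 R) : Integrable f := by
  rw [← integrableOn_iff_integrable_of_support_subset hsupp]
  exact Measure.integrableOn_of_bounded (M := M) measure_closedBall_lt_top.ne
    hm.aestronglyMeasurable (.of_forall fun x => by rw [Real.norm_of_nonneg (h0 x)]; exact hM x)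

/-- The localization inequality for bounded logconcave functions on `ℝⁿ` supported in the ball of
radius `R`. -/
def NeedleBoundEuclidean (n : ℕ) (R c β₁ β₂ β₃ : ℝ) : Prop :=
  ∀ ⦃f : EuclideanSpace ℝ (Fin n) → ℝ⦄ ⦃M : ℝ⦄, LogConcaveFn f → Measurable f →
    (∀ x, 0 ≤ f x) → (∀ x, f x ≤ M) → Function.support f ⊆ Metric.closedBall 0 R →
    (∫ x, f x * Real.exp (-β₁ * ‖x‖ ^ 2)) * (∫ x, f x * Real.exp (-β₂ * ‖x‖ ^ 2)) ≤
      c * (∫ x, f x * Real.exp (-β₃ * ‖x‖ ^ 2)) ^ 2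

/-- Functions supported in a thin slab satisfy the localization inequality up to a factor tending
to one with the width of the slab. -/
lemma NeedleBoundEuclidean.slab {n : ℕ} {R c β₁ β₂ β₃ B ε t₀ : ℝ}
    (hP : NeedleBoundEuclidean n R c β₁ β₂ β₃) (hc : 0 ≤ c) (h1 : 0 ≤ β₁) (h2 : 0 ≤ β₂)
    (h3 : 0 ≤ β₃) (b1 : β₁ ≤ B) (b2 : β₂ ≤ B) (b3 : β₃ ≤ B) (hβ : β₁ + β₂ = 2 * β₃)
    (hR : 0 ≤ R) {g : EuclideanSpace ℝ (Fin (n + 1)) → ℝ} {M : ℝ} (hg : LogConcaveFn g)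
    (hm : Measurable g) (h0 : ∀ x, 0 ≤ g x) (hM : ∀ x, g x ≤ M)
    (hsupp : Function.support g ⊆ Metric.closedBall 0 R)
    {v : EuclideanSpace ℝ (Fin (n + 1))} (hv : ‖v‖ = 1) (ht₀ : |t₀| ≤ R)
    (hslab : ∀ x ∈ Function.support g, |inner ℝ v x - t₀| ≤ ε) :
    (∫ x, g x * Real.exp (-β₁ * ‖x‖ ^ 2)) * (∫ x, g x * Real.exp (-β₂ * ‖x‖ ^ 2)) ≤
      c * Real.exp (2 * B * R * ε) ^ 4 * (∫ x, g x * Real.exp (-β₃ * ‖x‖ ^ 2)) ^ 2 := by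
  obtain ⟨Φ, hΦ, hΦe, hΦn, hΦv⟩ := exists_orthogonal_coordinates v hv
  have hΦm := hΦe.measurable
  set H : EuclideanSpace ℝ (Fin n) → ℝ := fun y => ∫ t, g (Φ (t, y)) with hH
  have hnorm : ∀ t y, |t| ≤ ‖Φ (t, y)‖ ∧ ‖y‖ ≤ ‖Φ (t, y)‖ := by
    intro t y
    have := hΦn t y
    constructor
    · exact abs_le_of_sq_le_sq (by nlinarith [sq_nonneg ‖y‖]) (norm_nonneg _)
    · exact abs_le_of_sq_le_sq' (by nlinarith [sq_nonneg t]) (norm_nonneg _) |>.2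
  have hball : ∀ t y, g (Φ (t, y)) ≠ 0 → |t| ≤ R ∧ ‖y‖ ≤ R := by
    intro t y h
    have := mem_closedBall_zero_iff.1 (hsupp h)
    exact ⟨(hnorm t y).1.trans this, (hnorm t y).2.trans this⟩
  have hgi : Integrable g := integrable_of_bounded_support hm h0 hM hsupp
  have hgΦ : Integrable (fun z => g (Φ z)) := (hΦ.integrable_comp_emb hΦe).2 hgi
  have hM0 : 0 ≤ M := (h0 0).trans (hM 0)
  have hts : ∀ y, Function.support (fun t => g (Φ (t, y))) ⊆ Set.Icc (-R) R := fun y t ht =>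
    abs_le.1 (hball t y ht).1
  have hHlc : LogConcaveFn H := by
    refine LogConcaveFn.marginal (F := fun y t => g (Φ (t, y))) (R := R) (M := M)
      (fun x y s t l hl0 hl1 => ?_) (fun y => hm.comp (hΦm.comp (by fun_prop)))
      (fun _ _ => h0 _) (fun _ _ => hM _) hts
    refine (hg _ _ l hl0 hl1).trans_eq ?_
    rw [← map_smul, ← map_smul, ← map_add]
    rfl
  have hHm : Measurable H :=
    (hm.comp hΦm).stronglyMeasurable.integral_prod_left'.measurable
  have hH0 : ∀ y, 0 ≤ H y := fun y => MeasureTheory.integral_nonneg fun t => h0 _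
  have hHM : ∀ y, H y ≤ M * (2 * R) := by
    intro y
    simp only [hH]
    rw [← setIntegral_eq_integral_of_forall_compl_eq_zero (s := Set.Icc (-R) R)
      (fun t ht => Function.notMem_support.1 fun h => ht (hts y h))]
    have := norm_setIntegral_le_of_norm_le_const (μ := volume) (s := Set.Icc (-R) R)
      (f := fun t => g (Φ (t, y))) (C := M) (by simp)
      (fun t _ => by rw [Real.norm_of_nonneg (h0 _)]; exact hM _)
    rw [Real.volume_real_Icc_of_le (by linarith)] at this
    calc _ ≤ _ := Real.le_norm_self _
      _ ≤ _ := this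
      _ = _ := by ring
  have hHs : Function.support H ⊆ Metric.closedBall 0 R := by
    intro y hy
    by_contra hyR
    refine hy ?_
    simp only [hH]
    have : ∀ t, g (Φ (t, y)) = 0 := fun t => by
      by_contra h
      exact hyR (mem_closedBall_zero_iff.2 (hball t y h).2)
    simp [this]
  set E := Real.exp (2 * B * R * ε) with hE
  have hE0 : 0 < E := Real.exp_pos _
  have hw : ∀ β, 0 ≤ β → Integrable fun z : ℝ × EuclideanSpace ℝ (Fin n) =>
      g (Φ z) * Real.exp (-β * ‖z.2‖ ^ 2) := by
    intro β hβ
    refine hgΦ.mul_bdd (c := 1) (by fun_prop) (.of_forall fun x => ?_)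
    rw [Real.norm_of_nonneg (Real.exp_pos _).le, Real.exp_le_one_iff]
    nlinarith [mul_nonneg hβ (sq_nonneg ‖x.2‖)]
  have hFub : ∀ β, 0 ≤ β → (∫ y, H y * Real.exp (-β * ‖y‖ ^ 2)) =
      ∫ z : ℝ × EuclideanSpace ℝ (Fin n), g (Φ z) * Real.exp (-β * ‖z.2‖ ^ 2) := by
    intro β hβ
    have := hw β hβ
    rw [Measure.volume_eq_prod] at this ⊢
    rw [integral_prod_symm _ this]
    simp only [hH, MeasureTheory.integral_mul_const]
  have hpull : ∀ β, (∫ x, g x * Real.exp (-β * ‖x‖ ^ 2)) =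
      ∫ z, g (Φ z) * Real.exp (-β * ‖Φ z‖ ^ 2) := fun β =>
    (hΦ.integral_comp hΦe fun x => g x * Real.exp (-β * ‖x‖ ^ 2)).symm
  have hpi : ∀ β, 0 ≤ β → Integrable fun z => g (Φ z) * Real.exp (-β * ‖Φ z‖ ^ 2) := fun β hβ =>
    (hΦ.integrable_comp_emb hΦe).2 (integrable_mul_exp_neg_norm_sq hgi hβ)
  have hcmp : ∀ β, 0 ≤ β → β ≤ B →
      (∫ x, g x * Real.exp (-β * ‖x‖ ^ 2)) ≤
        E * Real.exp (-β * t₀ ^ 2) * ∫ y, H y * Real.exp (-β * ‖y‖ ^ 2) ∧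
      Real.exp (-β * t₀ ^ 2) * (∫ y, H y * Real.exp (-β * ‖y‖ ^ 2)) ≤
        E * ∫ x, g x * Real.exp (-β * ‖x‖ ^ 2) := by
    intro β hβ hβB
    rw [hFub β hβ, hpull β, ← MeasureTheory.integral_const_mul,
      ← MeasureTheory.integral_const_mul, ← MeasureTheory.integral_const_mul]
    have hsplit : ∀ t y, Real.exp (-β * ‖Φ (t, y)‖ ^ 2) =
        Real.exp (-β * t ^ 2) * Real.exp (-β * ‖y‖ ^ 2) := by
      intro t y
      rw [hΦn, ← Real.exp_add]
      ring_nf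
    constructor
    · refine integral_mono (hpi β hβ) ((hw β hβ).const_mul _) ?_
      rintro ⟨t, y⟩
      by_cases h : g (Φ (t, y)) = 0
      · simp [h]
      · have hs := hslab _ h
        rw [hΦv] at hs
        have h' := exp_neg_mul_sq_le hβ hβB (hball t y h).1 ht₀ hs
        have h'' := mul_le_mul_of_nonneg_right h'
          (mul_nonneg (h0 (Φ (t, y))) (Real.exp_pos (-β * ‖y‖ ^ 2)).le)
        simp only [hsplit]
        linarith
    · refine integral_mono ((hw β hβ).const_mul _) ((hpi β hβ).const_mul _) ?_
      rintro ⟨t, y⟩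
      by_cases h : g (Φ (t, y)) = 0
      · simp [h]
      · have hs := hslab _ h
        rw [hΦv, abs_sub_comm] at hs
        have h' := exp_neg_mul_sq_le hβ hβB ht₀ (hball t y h).1 hs
        have h'' := mul_le_mul_of_nonneg_right h'
          (mul_nonneg (h0 (Φ (t, y))) (Real.exp_pos (-β * ‖y‖ ^ 2)).le)
        simp only [hsplit]
        linarith
  have key := hP hHlc hHm hH0 hHM hHs
  have I0 : ∀ β, 0 ≤ ∫ x, g x * Real.exp (-β * ‖x‖ ^ 2) := fun β =>
    MeasureTheory.integral_nonneg fun x => mul_nonneg (h0 x) (Real.exp_pos _).le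
  have J0 : ∀ β, 0 ≤ ∫ y, H y * Real.exp (-β * ‖y‖ ^ 2) := fun β =>
    MeasureTheory.integral_nonneg fun x => mul_nonneg (hH0 x) (Real.exp_pos _).le
  have hexp : Real.exp (-β₁ * t₀ ^ 2) * Real.exp (-β₂ * t₀ ^ 2) = Real.exp (-β₃ * t₀ ^ 2) ^ 2 := by
    rw [← Real.exp_add, ← Real.exp_nat_mul]
    congr 1
    push_cast
    linear_combination (-t₀ ^ 2) * hβ
  calc _ ≤ _ := mul_le_mul (hcmp β₁ h1 b1).1 (hcmp β₂ h2 b2).1 (I0 _)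
        (mul_nonneg (by positivity) (J0 _))
    _ = E ^ 2 * Real.exp (-β₃ * t₀ ^ 2) ^ 2 * ((∫ y, H y * Real.exp (-β₁ * ‖y‖ ^ 2)) *
          ∫ y, H y * Real.exp (-β₂ * ‖y‖ ^ 2)) := by rw [← hexp]; ring
    _ ≤ E ^ 2 * Real.exp (-β₃ * t₀ ^ 2) ^ 2 *
          (c * (∫ y, H y * Real.exp (-β₃ * ‖y‖ ^ 2)) ^ 2) := by gcongr
    _ = c * E ^ 2 * (Real.exp (-β₃ * t₀ ^ 2) * ∫ y, H y * Real.exp (-β₃ * ‖y‖ ^ 2)) ^ 2 := by ring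
    _ ≤ c * E ^ 2 * (E * ∫ x, g x * Real.exp (-β₃ * ‖x‖ ^ 2)) ^ 2 := by
        have := J0 β₃
        exact mul_le_mul_of_nonneg_left
          (pow_le_pow_left₀ (by positivity) (hcmp β₃ h3 b3).2 2) (by positivity)
    _ = _ := by ring

lemma LogConcaveFn.indicator {E : Type*} [AddCommMonoid E] [Module ℝ E] {f : E → ℝ}
    (hf : LogConcaveFn f) (h0 : ∀ x, 0 ≤ f x) {D : Set E} (hD : Convex ℝ D) :
    LogConcaveFn (D.indicator f) := by
  intro x y l hl0 hl1
  rcases hl0.eq_or_lt with rfl | hl0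
  · simp
  rcases hl1.eq_or_lt with rfl | hl1
  · simp
  have hl1' := sub_pos.2 hl1
  have hI : ∀ z, 0 ≤ D.indicator f z := fun z => Set.indicator_nonneg (fun _ _ => h0 _) z
  by_cases hx : x ∈ D
  · by_cases hy : y ∈ D
    · rw [Set.indicator_of_mem hx, Set.indicator_of_mem hy,
        Set.indicator_of_mem (hD hx hy hl0.le hl1'.le (by ring))]
      exact hf x y l hl0.le hl1.le
    · rw [Set.indicator_of_notMem hy, Real.zero_rpow hl1'.ne', mul_zero]
      exact hI _
  · rw [Set.indicator_of_notMem hx, Real.zero_rpow hl0.ne', zero_mul]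
    exact hI _

lemma LogConcaveFn.min_const {E : Type*} [AddCommMonoid E] [Module ℝ E] {f : E → ℝ}
    (hf : LogConcaveFn f) (h0 : ∀ x, 0 ≤ f x) {M : ℝ} (hM : 0 < M) :
    LogConcaveFn fun x => min (f x) M := by
  intro x y l hl0 hl1
  have hl1' := sub_nonneg.2 hl1
  have hx : 0 ≤ min (f x) M := le_min (h0 x) hM.le
  have hy : 0 ≤ min (f y) M := le_min (h0 y) hM.le
  have hx0 := h0 x
  have hy0 := h0 y
  refine le_min (le_trans ?_ (hf x y l hl0 hl1)) ?_
  · gcongr <;> exact min_le_left _ _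
  · calc _ ≤ M ^ l * M ^ (1 - l) := by gcongr <;> exact min_le_right _ _
      _ = M := by rw [← Real.rpow_add hM]; simp

lemma NeedleBound.euclidean_one {R c β₁ β₂ β₃ : ℝ} (hR : 0 < R) (hc : 0 ≤ c)
    (h1 : 0 ≤ β₁) (h2 : 0 ≤ β₂) (h3 : 0 ≤ β₃) (hneedle : NeedleBound R c β₁ β₂ β₃) :
    NeedleBoundEuclidean 1 R c β₁ β₂ β₃ := by
  intro f M hf hm h0 hM hsupp
  let e : ℝ ≃ᵐ EuclideanSpace ℝ (Fin 1) :=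
    (MeasurableEquiv.funUnique (Fin 1) ℝ).symm.trans (MeasurableEquiv.toLp 2 (Fin 1 → ℝ))
  have he : MeasurePreserving e volume volume :=
    (EuclideanSpace.volume_preserving_symm_measurableEquiv_toLp (Fin 1)).symm.comp
      (volume_preserving_funUnique (Fin 1) ℝ).symm
  have hnorm : ∀ t, ‖e t‖ = |t| := by
    intro t
    rw [EuclideanSpace.norm_eq]
    simp only [Finset.univ_unique, Finset.sum_singleton]
    rw [Real.sqrt_sq_eq_abs]
    exact abs_abs t
  have hpull : ∀ β, (∫ x, f x * Real.exp (-β * ‖x‖ ^ 2)) =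
      ∫ t, f (e t) * Real.exp (-β * t ^ 2) := by
    intro β
    rw [← he.integral_comp e.measurableEmbedding]
    simp only [hnorm, sq_abs]
  rw [hpull, hpull, hpull]
  refine LogConcaveFn.needle_real (h := fun t => f (e t)) hR hc h1 h2 h3 hneedle ?_
    (hm.comp e.measurable) (fun _ => h0 _) (fun _ => hM _) ?_
  · intro s t l hl0 hl1
    exact hf (e s) (e t) l hl0 hl1
  · intro t ht
    have := mem_closedBall_zero_iff.1 (hsupp ht)
    rw [hnorm] at this
    exact abs_le.1 this

/-- On the ball of radius `R`, Gaussian weights are comparable. -/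
lemma integral_gaussian_le {n : ℕ} {R β β' : ℝ} (hβ : 0 ≤ β) (hβ' : 0 ≤ β')
    {f : EuclideanSpace ℝ (Fin n) → ℝ} (hf : Integrable f) (h0 : ∀ x, 0 ≤ f x)
    (hsupp : Function.support f ⊆ Metric.closedBall 0 R) :
    (∫ x, f x * Real.exp (-β * ‖x‖ ^ 2)) ≤
      Real.exp (β' * R ^ 2) * ∫ x, f x * Real.exp (-β' * ‖x‖ ^ 2) := by
  rw [← MeasureTheory.integral_const_mul]
  refine integral_mono (integrable_mul_exp_neg_norm_sq hf hβ)
    ((integrable_mul_exp_neg_norm_sq hf hβ').const_mul _) fun x => ?_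
  by_cases hx : f x = 0
  · simp [hx]
  have hxR := mem_closedBall_zero_iff.1 (hsupp hx)
  have hsq : ‖x‖ ^ 2 ≤ R ^ 2 := pow_le_pow_left₀ (norm_nonneg _) hxR 2
  change f x * _ ≤ Real.exp (β' * R ^ 2) * (f x * _)
  rw [mul_left_comm, ← Real.exp_add]
  refine mul_le_mul_of_nonneg_left (Real.exp_le_exp.2 ?_) (h0 x)
  nlinarith [mul_nonneg hβ (sq_nonneg ‖x‖), mul_le_mul_of_nonneg_left hsq hβ']

lemma NeedleBoundEuclidean.succ {n : ℕ} {R c β₁ β₂ β₃ : ℝ}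
    (hP : NeedleBoundEuclidean (n + 1) R c β₁ β₂ β₃) (hR : 0 ≤ R) (hc : 0 ≤ c)
    (h1 : 0 ≤ β₁) (h2 : 0 ≤ β₂) (h3 : 0 ≤ β₃) (hβ : β₁ + β₂ = 2 * β₃) :
    NeedleBoundEuclidean (n + 2) R c β₁ β₂ β₃ := by
  intro f M hf hm h0 hM hsupp
  have hfi := integrable_of_bounded_support hm h0 hM hsupp
  set A := ∫ x, f x * Real.exp (-β₁ * ‖x‖ ^ 2) with hA
  set B := ∫ x, f x * Real.exp (-β₂ * ‖x‖ ^ 2) with hB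
  set C := ∫ x, f x * Real.exp (-β₃ * ‖x‖ ^ 2) with hC
  have hA0 : 0 ≤ A := MeasureTheory.integral_nonneg fun x => mul_nonneg (h0 x) (Real.exp_pos _).le
  have hC0 : 0 ≤ C := MeasureTheory.integral_nonneg fun x => mul_nonneg (h0 x) (Real.exp_pos _).le
  by_contra! hcon
  have hCpos : 0 < C := by
    refine lt_of_le_of_ne hC0 fun h => ?_
    have hA' : A ≤ Real.exp (β₃ * R ^ 2) * C := integral_gaussian_le h1 h3 hfi h0 hsupp
    rw [← h, mul_zero] at hA'
    rw [← h, le_antisymm hA' hA0] at hcon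
    simp at hcon
  have hApos : 0 < A := by
    refine lt_of_le_of_ne hA0 fun h => ?_
    rw [← h, zero_mul] at hcon
    exact absurd hcon (not_lt.2 (by positivity))
  set s := A / C with hs
  have hs0 : 0 < s := by positivity
  obtain ⟨r, hr1, hr2⟩ : ∃ r, c / s < r ∧ r < B / C := by
    refine exists_between ?_
    rw [div_lt_div_iff₀ hs0 hCpos, hs, mul_div_assoc', lt_div_iff₀ hCpos]
    linarith
  have hr0 : 0 ≤ r := (div_nonneg hc hs0.le).trans hr1.le
  rw [div_lt_iff₀ hs0] at hr1
  rw [lt_div_iff₀ hCpos] at hr2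
  set b := max β₁ (max β₂ β₃)
  have b1 : β₁ ≤ b := le_max_left _ _
  have b2 : β₂ ≤ b := (le_max_left _ _).trans (le_max_right _ _)
  have b3 : β₃ ≤ b := (le_max_right _ _).trans (le_max_right _ _)
  obtain ⟨ε, hε, hε0⟩ : ∃ ε, c * Real.exp (2 * b * R * ε) ^ 4 < r * s ∧ 0 < ε := by
    have hcont : Continuous fun ε : ℝ => c * Real.exp (2 * b * R * ε) ^ 4 := by fun_prop
    have hev : ∀ᶠ ε in nhds (0 : ℝ), c * Real.exp (2 * b * R * ε) ^ 4 < r * s :=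
      hcont.continuousAt.eventually_lt continuousAt_const (by simpa using hr1)
    exact ((hev.filter_mono nhdsWithin_le_nhds).and
      (self_mem_nhdsWithin (s := Set.Ioi (0 : ℝ)))).exists
  let π : EuclideanSpace ℝ (Fin (n + 2)) →L[ℝ] ℝ × ℝ :=
    (EuclideanSpace.proj 0).prod (EuclideanSpace.proj 1)
  let v : ℝ → ℝ → EuclideanSpace ℝ (Fin (n + 2)) := fun p q =>
    EuclideanSpace.single 0 p + EuclideanSpace.single 1 q
  have hvi : ∀ p q x, inner ℝ (v p q) x = p * (π x).1 + q * (π x).2 := by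
    intro p q x
    simp [v, π, inner_add_left, EuclideanSpace.inner_single_left]
  have hvn : ∀ p q, p ^ 2 + q ^ 2 = 1 → ‖v p q‖ = 1 := by
    intro p q hpq
    rw [← sq_eq_sq₀ (norm_nonneg _) zero_le_one, ← real_inner_self_eq_norm_sq, hvi]
    simp [v, π]
    linarith
  have hwi : ∀ β, 0 ≤ β → Integrable fun x => f x * Real.exp (-β * ‖x‖ ^ 2) := fun β hβ =>
    integrable_mul_exp_neg_norm_sq hfi hβ
  obtain ⟨S, hSc, hScl, g1, g2, p, q, hpq, hthin⟩ := exists_thin_convex (μ := volume) (π := π)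
    (F₁ := fun x => f x * Real.exp (-β₁ * ‖x‖ ^ 2) - s * (f x * Real.exp (-β₃ * ‖x‖ ^ 2)))
    (F₂ := fun x => f x * Real.exp (-β₂ * ‖x‖ ^ 2) - r * (f x * Real.exp (-β₃ * ‖x‖ ^ 2)))
    π.continuous.measurable ((hwi _ h1).sub ((hwi _ h3).const_mul _))
    ((hwi _ h2).sub ((hwi _ h3).const_mul _))
    (fun p q d hpq => by
      simp only [← hvi]
      exact volume_inner_eq_zero (hvn p q hpq) d)
    (by
      rw [MeasureTheory.integral_sub (hwi _ h1) ((hwi _ h3).const_mul _),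
        MeasureTheory.integral_const_mul, ← hA, ← hC, hs]
      field_simp
      ring)
    (by
      rw [MeasureTheory.integral_sub (hwi _ h2) ((hwi _ h3).const_mul _),
        MeasureTheory.integral_const_mul, ← hB, ← hC]
      linarith)
    (K := Set.Icc (-R) R ×ˢ Set.Icc (-R) R) (isCompact_Icc.prod isCompact_Icc)
    ((convex_Icc _ _).prod (convex_Icc _ _)) hε0
  set D := π ⁻¹' S with hD
  have hDm : MeasurableSet D := π.continuous.measurable hScl.measurableSet
  have hDc : Convex ℝ D := hSc.linear_preimage π.toLinearMap
  set g := D.indicator f with hg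
  have hglc : LogConcaveFn g := hf.indicator h0 hDc
  have hgm : Measurable g := hm.indicator hDm
  have hg0 : ∀ x, 0 ≤ g x := fun x => Set.indicator_nonneg (fun _ _ => h0 _) x
  have hgM : ∀ x, g x ≤ M := fun x =>
    Set.indicator_apply_le' (fun _ => hM x) fun _ => (h0 x).trans (hM x)
  have hgD : ∀ x ∈ Function.support g, x ∈ D ∧ x ∈ Function.support f := by
    intro x hx
    rw [hg, Set.support_indicator] at hx
    exact hx
  have hgsupp : Function.support g ⊆ Metric.closedBall 0 R := fun x hx => hsupp (hgD x hx).2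
  have hgi : ∀ β, (∫ x in D, f x * Real.exp (-β * ‖x‖ ^ 2)) =
      ∫ x, g x * Real.exp (-β * ‖x‖ ^ 2) := by
    intro β
    rw [← MeasureTheory.integral_indicator hDm]
    simp only [hg, Set.indicator_mul_left]
  rw [MeasureTheory.integral_sub (hwi _ h1).restrict ((hwi _ h3).const_mul _).restrict,
    MeasureTheory.integral_const_mul, hgi, hgi] at g1
  rw [MeasureTheory.integral_sub (hwi _ h2).restrict ((hwi _ h3).const_mul _).restrict,
    MeasureTheory.integral_const_mul, hgi, hgi] at g2
  have hgI : Integrable g := hfi.indicator hDm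
  have hB' := integral_gaussian_le h2 h3 hgI hg0 hgsupp
  set A' := ∫ x, g x * Real.exp (-β₁ * ‖x‖ ^ 2)
  set B' := ∫ x, g x * Real.exp (-β₂ * ‖x‖ ^ 2) with hB'def
  set C' := ∫ x, g x * Real.exp (-β₃ * ‖x‖ ^ 2)
  have hC'0 : 0 ≤ C' :=
    MeasureTheory.integral_nonneg fun x => mul_nonneg (hg0 x) (Real.exp_pos _).le
  have hB'pos : 0 < B' := by nlinarith [mul_nonneg hr0 hC'0]
  have hC'pos : 0 < C' := by
    refine lt_of_le_of_ne hC'0 fun h => ?_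
    rw [← h, mul_zero] at hB'
    linarith
  obtain ⟨x₀, hx₀⟩ : ∃ x, g x ≠ 0 := by
    by_contra! h
    simp [hB'def, h] at hB'pos
  have habs : ∀ x ∈ Function.support g, π x ∈ S ∩ Set.Icc (-R) R ×ˢ Set.Icc (-R) R := by
    intro x hx
    have hxR := mem_closedBall_zero_iff.1 (hgsupp hx)
    have hcoord : ∀ i, |x i| ≤ R := fun i => (PiLp.norm_apply_le x i).trans hxR
    exact ⟨(hgD x hx).1, abs_le.1 (hcoord 0), abs_le.1 (hcoord 1)⟩
  have key := hP.slab (ε := ε) (t₀ := inner ℝ (v p q) x₀) hc h1 h2 h3 b1 b2 b3 hβ hR hglc hgm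
    hg0 hgM hgsupp (hvn p q hpq)
    (by
      have := abs_real_inner_le_norm (v p q) x₀
      rw [hvn p q hpq, one_mul] at this
      exact this.trans (mem_closedBall_zero_iff.1 (hgsupp hx₀)))
    (by
      intro x hx
      convert hthin _ (habs x hx) _ (habs x₀ hx₀) using 2
      rw [hvi, hvi]
      ring)
  have hlow : s * C' * (r * C') ≤ A' * B' := by
    have : A' = s * C' := by linarith
    rw [this]
    gcongr
    linarith
  have hstrict := mul_lt_mul_of_pos_right hε (pow_pos hC'pos 2)
  nlinarith

lemma NeedleBound.euclidean {R c β₁ β₂ β₃ : ℝ} (hneedle : NeedleBound R c β₁ β₂ β₃) (hR : 0 < R)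
    (hc : 0 ≤ c) (h1 : 0 ≤ β₁) (h2 : 0 ≤ β₂) (h3 : 0 ≤ β₃) (hβ : β₁ + β₂ = 2 * β₃) (n : ℕ) :
    NeedleBoundEuclidean (n + 1) R c β₁ β₂ β₃ := by
  induction n with
  | zero => exact hneedle.euclidean_one hR hc h1 h2 h3
  | succ n ih => exact ih.succ hR.le hc h1 h2 h3 hβ

/-- The boundedness assumption in the localization inequality can be dropped. -/
lemma NeedleBoundEuclidean.of_integrable {n : ℕ} {R c β₁ β₂ β₃ : ℝ}
    (hP : NeedleBoundEuclidean n R c β₁ β₂ β₃) (h1 : 0 ≤ β₁) (h2 : 0 ≤ β₂) (h3 : 0 ≤ β₃)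
    {f : EuclideanSpace ℝ (Fin n) → ℝ} (hf : LogConcaveFn f) (hm : Measurable f)
    (h0 : ∀ x, 0 ≤ f x) (hsupp : Function.support f ⊆ Metric.closedBall 0 R)
    (hfi : Integrable f) :
    (∫ x, f x * Real.exp (-β₁ * ‖x‖ ^ 2)) * (∫ x, f x * Real.exp (-β₂ * ‖x‖ ^ 2)) ≤
      c * (∫ x, f x * Real.exp (-β₃ * ‖x‖ ^ 2)) ^ 2 := by
  have hlim : ∀ β, 0 ≤ β → Filter.Tendsto
      (fun k : ℕ => ∫ x, min (f x) ((k : ℝ) + 1) * Real.exp (-β * ‖x‖ ^ 2)) Filter.atTop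
      (nhds (∫ x, f x * Real.exp (-β * ‖x‖ ^ 2))) := by
    intro β hβ
    refine tendsto_integral_of_dominated_convergence (fun x => f x * Real.exp (-β * ‖x‖ ^ 2))
      (fun k => ((hm.min measurable_const).mul (by fun_prop)).aestronglyMeasurable)
      (integrable_mul_exp_neg_norm_sq hfi hβ) (fun k => .of_forall fun x => ?_)
      (.of_forall fun x => ?_)
    · have : 0 ≤ min (f x) ((k : ℝ) + 1) := le_min (h0 x) (by positivity)
      rw [Real.norm_of_nonneg (by positivity)]
      gcongr
      exact min_le_left _ _
    · refine tendsto_const_nhds.congr' ?_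
      filter_upwards [Filter.eventually_ge_atTop ⌈f x⌉₊] with k hk
      have : f x ≤ k := (Nat.le_ceil _).trans (by exact_mod_cast hk)
      rw [min_eq_left (by linarith)]
  refine le_of_tendsto_of_tendsto' ((hlim β₁ h1).mul (hlim β₂ h2)) (((hlim β₃ h3).pow 2).const_mul c)
    fun k => ?_
  have hk : (0 : ℝ) < k + 1 := by positivity
  refine hP (M := (k : ℝ) + 1) (hf.min_const h0 hk) (hm.min measurable_const)
    (fun x => le_min (h0 x) hk.le) (fun x => min_le_right _ _) ?_
  intro x hx
  refine hsupp fun h => hx ?_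
  simp [h, hk.le]

lemma integral_gaussian_eq_zero_of_not_integrable {n : ℕ} {R β : ℝ}
    {f : EuclideanSpace ℝ (Fin n) → ℝ} (hm : Measurable f)
    (hsupp : Function.support f ⊆ Metric.closedBall 0 R) (hβ : 0 ≤ β) (hf : ¬ Integrable f) :
    ∫ x, f x * Real.exp (-β * ‖x‖ ^ 2) = 0 := by
  refine MeasureTheory.integral_undef fun h => hf ?_
  refine (h.norm.const_mul (Real.exp (β * R ^ 2))).mono' hm.aestronglyMeasurable
    (.of_forall fun x => ?_)
  by_cases hx : f x = 0
  · simp [hx]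
  have hsq : ‖x‖ ^ 2 ≤ R ^ 2 :=
    pow_le_pow_left₀ (norm_nonneg _) (mem_closedBall_zero_iff.1 (hsupp hx)) 2
  rw [norm_mul, Real.norm_of_nonneg (Real.exp_pos _).le, mul_left_comm, ← Real.exp_add]
  refine le_mul_of_one_le_right (norm_nonneg _) (Real.one_le_exp ?_)
  nlinarith [mul_le_mul_of_nonneg_left hsq hβ]

/-- Localization (exponential-needle) reduction: if the one-dimensional needle
inequality holds for all intervals `[ℓ,u] ⊆ [-R₁,R₁]` and all `γ`, then for
every logconcave `f` supported on a compact subset of `R₁·B_n`, with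
`G(s) = ∫ f(x) e^{-‖x‖²/(2s)} dx`, one has
`G(σ²/(1+α))·G(σ²/(1-α)) ≤ c·G(σ²)²`. -/
theorem needle_reduction
    (n : ℕ) (hn : 1 ≤ n) (σ R₁ α c : ℝ) (hσ : 0 < σ) (hR : 0 < R₁)
    (hα0 : 0 < α) (hα1 : α < 1) (hc : 0 < c)
    (hneedle : ∀ ℓ u γ : ℝ, -R₁ ≤ ℓ → ℓ ≤ u → u ≤ R₁ →
      (∫ t in ℓ..u, Real.exp (γ * t) * Real.exp (-t ^ 2 * (1 + α) / (2 * σ ^ 2))) *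
        (∫ t in ℓ..u, Real.exp (γ * t) * Real.exp (-t ^ 2 * (1 - α) / (2 * σ ^ 2))) ≤
      c * (∫ t in ℓ..u, Real.exp (γ * t) * Real.exp (-t ^ 2 / (2 * σ ^ 2))) ^ 2)
    (f : EuclideanSpace ℝ (Fin n) → ℝ) (hf0 : ∀ x, 0 ≤ f x) (hfm : Measurable f)
    (hflc : LogConcaveFn f) (hfc : HasCompactSupport f)
    (hfsupp : Function.support f ⊆ Metric.closedBall 0 R₁) :
    (∫ x, f x * Real.exp (-‖x‖ ^ 2 / (2 * (σ ^ 2 / (1 + α))))) *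
      (∫ x, f x * Real.exp (-‖x‖ ^ 2 / (2 * (σ ^ 2 / (1 - α))))) ≤
    c * (∫ x, f x * Real.exp (-‖x‖ ^ 2 / (2 * σ ^ 2))) ^ 2 := by
  have hk : 0 < 2 * σ ^ 2 := by positivity
  set β₁ := (1 + α) / (2 * σ ^ 2) with hβ₁
  set β₂ := (1 - α) / (2 * σ ^ 2) with hβ₂
  set β₃ := 1 / (2 * σ ^ 2) with hβ₃
  have h1 : 0 ≤ β₁ := by positivity
  have h2 : 0 ≤ β₂ := div_nonneg (by linarith) hk.le
  have h3 : 0 ≤ β₃ := by positivity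
  have hβ : β₁ + β₂ = 2 * β₃ := by
    rw [hβ₁, hβ₂, hβ₃]
    ring
  have hneedle' : NeedleBound R₁ c β₁ β₂ β₃ := by
    intro ℓ u γ hℓ hℓu hu
    convert hneedle ℓ u γ hℓ hℓu hu using 9 <;> ring
  have e1 : ∀ y : ℝ, -y ^ 2 / (2 * (σ ^ 2 / (1 + α))) = -β₁ * y ^ 2 := by
    intro y
    rw [hβ₁]
    field_simp
  have e2 : ∀ y : ℝ, -y ^ 2 / (2 * (σ ^ 2 / (1 - α))) = -β₂ * y ^ 2 := by
    intro y
    have : 1 - α ≠ 0 := by linarith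
    rw [hβ₂]
    field_simp
  have e3 : ∀ y : ℝ, -y ^ 2 / (2 * σ ^ 2) = -β₃ * y ^ 2 := by
    intro y
    rw [hβ₃]
    ring
  simp only [e1, e2, e3]
  by_cases hfi : Integrable f
  · obtain ⟨m, rfl⟩ := Nat.exists_eq_add_of_le' hn
    exact (hneedle'.euclidean hR hc.le h1 h2 h3 hβ m).of_integrable h1 h2 h3 hflc hfm hf0 hfsupp hfi
  · rw [integral_gaussian_eq_zero_of_not_integrable hfm hfsupp h1 hfi, zero_mul]
    positivity
end

section
/- Let R₁ > 0, σ > 0, γ ∈ ℝ, and 0 < α ≤ 1/2. Then for every interval [ℓ,u] ⊆ [−R₁, R₁], (∫_ℓ^u e^{γt} e^{−t²(1+α)/(2σ²)} dt) · (∫_ℓ^u e^{γt} e^{−t²(1−α)/(2σ²)} dt) ≤ exp(2·R₁²·α²/σ²) · (∫_ℓ^u e^{γt} e^{−t²/(2σ²)} dt)². -/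
open MeasureTheory intervalIntegral

/-- A centered interval carries more mass of a centered Gaussian than any of its translates. -/
theorem integral_exp_neg_sq_translate_le {k w : ℝ} (hk : 0 ≤ k) (hw : 0 ≤ w) {a : ℝ}
    (ha : 0 ≤ a) :
    ∫ d in -w..w, Real.exp (-k * (d + a) ^ 2) ≤ ∫ d in -w..w, Real.exp (-k * d ^ 2) := by
  have hi : ∀ x y : ℝ, IntervalIntegrable (fun d => Real.exp (-k * d ^ 2)) volume x y :=
    fun x y => Continuous.intervalIntegrable (by fun_prop) x y
  have hshift : ∫ d in -w..w, Real.exp (-k * (d + a) ^ 2) =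
      ∫ d in (-w + a)..(w + a), Real.exp (-k * d ^ 2) :=
    integral_comp_add_right (fun d => Real.exp (-k * d ^ 2)) a
  have hright : ∫ x in (0 : ℝ)..a, Real.exp (-k * (x + w) ^ 2) =
      ∫ d in w..(w + a), Real.exp (-k * d ^ 2) := by
    rw [integral_comp_add_right (fun d => Real.exp (-k * d ^ 2)) w, zero_add, add_comm a w]
  have hleft : ∫ x in (0 : ℝ)..a, Real.exp (-k * (x + -w) ^ 2) =
      ∫ d in -w..(-w + a), Real.exp (-k * d ^ 2) := by
    rw [integral_comp_add_right (fun d => Real.exp (-k * d ^ 2)) (-w), zero_add, add_comm a (-w)]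
  have hmono : ∫ x in (0 : ℝ)..a, Real.exp (-k * (x + w) ^ 2) ≤
      ∫ x in (0 : ℝ)..a, Real.exp (-k * (x + -w) ^ 2) := by
    refine integral_mono_on ha (Continuous.intervalIntegrable (by fun_prop) _ _)
      (Continuous.intervalIntegrable (by fun_prop) _ _) fun x hx => ?_
    have := mul_nonneg hk (mul_nonneg hx.1 hw)
    exact Real.exp_le_exp.2 (by nlinarith)
  have h₁ := integral_add_adjacent_intervals (hi (-w) (-w + a)) (hi (-w + a) (w + a))
  have h₂ := integral_add_adjacent_intervals (hi (-w) w) (hi w (w + a))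
  linarith

/-- Anderson's inequality for a centered Gaussian on an interval. -/
theorem integral_exp_neg_sq_add_le {k w : ℝ} (hk : 0 ≤ k) (hw : 0 ≤ w) (a : ℝ) :
    ∫ d in -w..w, Real.exp (-k * (d + a) ^ 2) ≤ ∫ d in -w..w, Real.exp (-k * d ^ 2) := by
  rcases le_total 0 a with ha | ha
  · exact integral_exp_neg_sq_translate_le hk hw ha
  · have hneg := integral_comp_neg (a := -w) (b := w) fun d => Real.exp (-k * (d + a) ^ 2)
    rw [neg_neg] at hneg
    rw [← hneg]
    convert integral_exp_neg_sq_translate_le hk hw (neg_nonneg.2 ha) using 5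
    ring

/-- The integral over the antidiagonal fibre of the square `[ℓ, u]²` through `(z / 2, z / 2)`. -/
theorem integral_indicator_mul_indicator_sub (p q : ℝ → ℝ) (ℓ u z : ℝ) :
    ∫ t, (Set.Icc ℓ u).indicator p t * (Set.Icc ℓ u).indicator q (z - t) =
      if 0 ≤ min (u - z / 2) (z / 2 - ℓ) then
        ∫ d in -min (u - z / 2) (z / 2 - ℓ)..min (u - z / 2) (z / 2 - ℓ),
          p (z / 2 + d) * q (z / 2 - d)
      else 0 := by
  set w := min (u - z / 2) (z / 2 - ℓ) with hw
  have hfibre : ∀ d, d ∈ Set.Icc (-w) w ↔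
      z / 2 + d ∈ Set.Icc ℓ u ∧ z - (z / 2 + d) ∈ Set.Icc ℓ u := by
    intro d
    simp only [Set.mem_Icc, neg_le, hw, le_min_iff]
    constructor
    · rintro ⟨⟨_, _⟩, _, _⟩
      refine ⟨⟨?_, ?_⟩, ?_, ?_⟩ <;> linarith
    · rintro ⟨⟨_, _⟩, _, _⟩
      refine ⟨⟨?_, ?_⟩, ?_, ?_⟩ <;> linarith
  have hind : ∀ d, (Set.Icc ℓ u).indicator p (z / 2 + d) *
      (Set.Icc ℓ u).indicator q (z - (z / 2 + d)) =
      (Set.Icc (-w) w).indicator (fun d => p (z / 2 + d) * q (z / 2 - d)) d := by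
    intro d
    have hz : z - (z / 2 + d) = z / 2 - d := by ring
    by_cases hd : d ∈ Set.Icc (-w) w
    · obtain ⟨h₁, h₂⟩ := (hfibre d).1 hd
      rw [Set.indicator_of_mem hd, Set.indicator_of_mem h₁, Set.indicator_of_mem h₂, hz]
    · rw [Set.indicator_of_notMem hd]
      by_cases h₁ : z / 2 + d ∈ Set.Icc ℓ u
      · have h₂ : z - (z / 2 + d) ∉ Set.Icc ℓ u := fun h₂ => hd ((hfibre d).2 ⟨h₁, h₂⟩)
        rw [Set.indicator_of_notMem h₂, mul_zero]
      · rw [Set.indicator_of_notMem h₁, zero_mul]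
  rw [← integral_add_left_eq_self _ (z / 2)]
  simp only [hind]
  rw [MeasureTheory.integral_indicator measurableSet_Icc]
  split_ifs with h
  · rw [integral_of_le (by linarith), integral_Icc_eq_integral_Ioc]
  · rw [Set.Icc_eq_empty (by linarith), setIntegral_empty]

/-- A product of two integrals over `[ℓ, u]` is bounded as soon as the integrands satisfy the
corresponding bound on every antidiagonal fibre of `[ℓ, u]²`. -/
theorem integral_mul_integral_le_of_fibre {p q r : ℝ → ℝ} (hp : Continuous p)
    (hq : Continuous q) (hr : Continuous r) {C ℓ u : ℝ} (hlu : ℓ ≤ u)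
    (h : ∀ m w, 0 ≤ w → ℓ ≤ m - w → m + w ≤ u →
      ∫ d in -w..w, p (m + d) * q (m - d) ≤ C * ∫ d in -w..w, r (m + d) * r (m - d)) :
    (∫ t in ℓ..u, p t) * (∫ t in ℓ..u, q t) ≤ C * (∫ t in ℓ..u, r t) ^ 2 := by
  have hint : ∀ f : ℝ → ℝ, Continuous f → Integrable ((Set.Icc ℓ u).indicator f) volume :=
    fun f hf => (hf.integrableOn_Icc).integrable_indicator measurableSet_Icc
  have hval : ∀ f : ℝ → ℝ, ∫ t in ℓ..u, f t = ∫ t, (Set.Icc ℓ u).indicator f t := by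
    intro f
    rw [integral_of_le hlu, MeasureTheory.integral_indicator measurableSet_Icc,
      integral_Icc_eq_integral_Ioc]
  have hprod : ∀ f g : ℝ → ℝ, Continuous f → Continuous g →
      (∫ t in ℓ..u, f t) * (∫ t in ℓ..u, g t) =
        ∫ z, ∫ t, (Set.Icc ℓ u).indicator f t * (Set.Icc ℓ u).indicator g (z - t) := by
    intro f g hf hg
    rw [hval, hval]
    exact (integral_convolution (ContinuousLinearMap.mul ℝ ℝ) (hint f hf) (hint g hg)).symm
  have hconv : ∀ f g : ℝ → ℝ, Continuous f → Continuous g → Integrable (fun z =>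
      ∫ t, (Set.Icc ℓ u).indicator f t * (Set.Icc ℓ u).indicator g (z - t)) volume :=
    fun f g hf hg =>
      (hint f hf).integrable_convolution (ContinuousLinearMap.mul ℝ ℝ) (hint g hg)
  rw [sq, hprod p q hp hq, hprod r r hr hr, ← MeasureTheory.integral_const_mul]
  refine MeasureTheory.integral_mono (hconv p q hp hq) ((hconv r r hr hr).const_mul C)
    fun z => ?_
  simp only [integral_indicator_mul_indicator_sub]
  split_ifs with hw
  · refine h _ _ hw ?_ ?_
    · linarith [min_le_right (u - z / 2) (z / 2 - ℓ)]
    · linarith [min_le_left (u - z / 2) (z / 2 - ℓ)]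
  · simp

/-- Core one-dimensional needle inequality: for `[ℓ,u] ⊆ [-R₁,R₁]`, any `γ`,
and `0 < α ≤ 1/2`,
`(∫ e^{γt}e^{-t²(1+α)/(2σ²)})·(∫ e^{γt}e^{-t²(1-α)/(2σ²)}) ≤
 exp(2R₁²α²/σ²)·(∫ e^{γt}e^{-t²/(2σ²)})²`. -/
theorem needle_inequality
    (R₁ σ γ α : ℝ) (hR : 0 < R₁) (hσ : 0 < σ) (hα0 : 0 < α) (hα : α ≤ 1 / 2)
    (ℓ u : ℝ) (hℓ : -R₁ ≤ ℓ) (hlu : ℓ ≤ u) (hu : u ≤ R₁) :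
    (∫ t in ℓ..u, Real.exp (γ * t) * Real.exp (-t ^ 2 * (1 + α) / (2 * σ ^ 2))) *
      (∫ t in ℓ..u, Real.exp (γ * t) * Real.exp (-t ^ 2 * (1 - α) / (2 * σ ^ 2))) ≤
    Real.exp (2 * R₁ ^ 2 * α ^ 2 / σ ^ 2) *
      (∫ t in ℓ..u, Real.exp (γ * t) * Real.exp (-t ^ 2 / (2 * σ ^ 2))) ^ 2 := by
  refine integral_mul_integral_le_of_fibre (by fun_prop) (by fun_prop) (by fun_prop) hlu ?_
  intro m w hw hl hr
  have hm : m ^ 2 ≤ R₁ ^ 2 := sq_le_sq' (by linarith) (by linarith)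
  have hleft : ∀ d : ℝ, Real.exp (γ * (m + d)) *
      Real.exp (-(m + d) ^ 2 * (1 + α) / (2 * σ ^ 2)) *
      (Real.exp (γ * (m - d)) * Real.exp (-(m - d) ^ 2 * (1 - α) / (2 * σ ^ 2))) =
      Real.exp (2 * γ * m - m ^ 2 / σ ^ 2) * Real.exp (m ^ 2 * α ^ 2 / σ ^ 2) *
        Real.exp (-(1 / σ ^ 2) * (d + α * m) ^ 2) := by
    intro d
    simp only [← Real.exp_add]
    congr 1
    field_simp
    ring
  have hright : ∀ d : ℝ, Real.exp (γ * (m + d)) * Real.exp (-(m + d) ^ 2 / (2 * σ ^ 2)) *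
      (Real.exp (γ * (m - d)) * Real.exp (-(m - d) ^ 2 / (2 * σ ^ 2))) =
      Real.exp (2 * γ * m - m ^ 2 / σ ^ 2) * Real.exp (-(1 / σ ^ 2) * d ^ 2) := by
    intro d
    simp only [← Real.exp_add]
    congr 1
    field_simp
    ring
  have hC : Real.exp (m ^ 2 * α ^ 2 / σ ^ 2) ≤ Real.exp (2 * R₁ ^ 2 * α ^ 2 / σ ^ 2) := by
    refine Real.exp_le_exp.2 ?_
    gcongr
    nlinarith [sq_nonneg R₁]
  simp only [hleft, hright, intervalIntegral.integral_const_mul]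
  have hA := integral_exp_neg_sq_add_le (k := 1 / σ ^ 2) (by positivity) hw (α * m)
  have hnonneg : 0 ≤ ∫ d in -w..w, Real.exp (-(1 / σ ^ 2) * (d + α * m) ^ 2) :=
    integral_nonneg (by linarith) fun d _ => (Real.exp_pos _).le
  calc _ ≤ Real.exp (2 * γ * m - m ^ 2 / σ ^ 2) * Real.exp (2 * R₁ ^ 2 * α ^ 2 / σ ^ 2) *
        ∫ d in -w..w, Real.exp (-(1 / σ ^ 2) * d ^ 2) := by gcongr
    _ = _ := by ring
end

section
/- Let R₁ > 0, σ > 0, γ ∈ ℝ, and let [ℓ,u] ⊆ [−R₁, R₁] with ℓ < u. Define v : (0,∞) → ℝ by v(x) = (∫_ℓ^u t² e^{γt} e^{−t²x/(2σ²)} dt) / (∫_ℓ^u e^{γt} e^{−t²x/(2σ²)} dt). Then v is differentiable and for every x > 0, v'(x) ≥ −2R₁²/x. -/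
open MeasureTheory intervalIntegral

/-- The second moment `v(x)` of the truncated Gaussian with density
proportional to `e^{γt - t²x/(2σ²)}` on `[ℓ,u]`. -/
noncomputable def truncSecondMoment (σ γ ℓ u : ℝ) : ℝ → ℝ := fun x =>
  (∫ t in ℓ..u, t ^ 2 * Real.exp (γ * t) * Real.exp (-t ^ 2 * x / (2 * σ ^ 2))) /
    (∫ t in ℓ..u, Real.exp (γ * t) * Real.exp (-t ^ 2 * x / (2 * σ ^ 2)))

/-- Differentiation under the integral sign for exponentially tilted integrals on `[a, b]`. -/
lemma hasDerivAt_integral_mul_exp_mul {g h : ℝ → ℝ} (hg : Continuous g) (hh : Continuous h)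
    (a b x : ℝ) :
    HasDerivAt (fun y => ∫ t in a..b, g t * Real.exp (h t * y))
      (∫ t in a..b, h t * g t * Real.exp (h t * x)) x := by
  refine (intervalIntegral.hasDerivAt_integral_of_dominated_loc_of_deriv_le
    (F' := fun y t => h t * g t * Real.exp (h t * y))
    (bound := fun t => |h t * g t| * Real.exp (|h t| * (|x| + 1)))
    (Metric.ball_mem_nhds x one_pos) ?_ ?_ ?_ ?_ ?_ ?_).2
  · exact .of_forall fun y => Continuous.aestronglyMeasurable (by fun_prop)
  · exact Continuous.intervalIntegrable (by fun_prop) _ _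
  · exact Continuous.aestronglyMeasurable (by fun_prop)
  · refine .of_forall fun t _ y hy => ?_
    have hyx : |y| ≤ |x| + 1 := by
      rw [Metric.mem_ball, Real.dist_eq] at hy
      linarith [abs_sub_abs_le_abs_sub y x]
    rw [Real.norm_eq_abs, abs_mul (h t * g t), Real.abs_exp]
    refine mul_le_mul_of_nonneg_left (Real.exp_le_exp.2 ?_) (abs_nonneg _)
    calc h t * y ≤ |h t * y| := le_abs_self _
      _ = |h t| * |y| := abs_mul _ _
      _ ≤ |h t| * (|x| + 1) := by gcongr
  · exact Continuous.intervalIntegrable (by fun_prop) _ _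
  · refine .of_forall fun t _ y _ => ?_
    have := (((hasDerivAt_id y).const_mul (h t)).exp).const_mul (g t)
    refine this.congr_deriv ?_
    simp only [id]
    ring

/-- The mean of a positive weight on `[a, b]` lies in `[a, b]`. -/
lemma integral_id_mul_div_integral_mem_Icc {w : ℝ → ℝ} (hw : Continuous w) (hpos : ∀ t, 0 < w t)
    {a b : ℝ} (hab : a < b) :
    (∫ t in a..b, t * w t) / (∫ t in a..b, w t) ∈ Set.Icc a b := by
  have hZ : 0 < ∫ t in a..b, w t :=
    intervalIntegral_pos_of_pos (hw.intervalIntegrable _ _) hpos hab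
  rw [Set.mem_Icc, le_div_iff₀ hZ, div_le_iff₀ hZ, ← intervalIntegral.integral_const_mul,
    ← intervalIntegral.integral_const_mul]
  constructor <;>
  · refine integral_mono_on hab.le (Continuous.intervalIntegrable (by fun_prop) _ _)
      (Continuous.intervalIntegrable (by fun_prop) _ _) fun t ht => ?_
    exact mul_le_mul_of_nonneg_right (by first | exact ht.1 | exact ht.2) (hpos t).le

/-- **Brascamp–Lieb variance bound** for a truncated Gaussian: a weight `w` on `[a, b]` with
`w' = (γ - κ t) w` has variance at most `1 / κ`. -/
lemma mul_variance_integral_le {w : ℝ → ℝ} {γ κ : ℝ}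
    (hw : ∀ t, HasDerivAt w ((γ - κ * t) * w t) t) (hpos : ∀ t, 0 < w t)
    {a b : ℝ} (hab : a < b) {m : ℝ}
    (hm : m = (∫ t in a..b, t * w t) / ∫ t in a..b, w t) :
    κ * (∫ t in a..b, (t - m) ^ 2 * w t) ≤ ∫ t in a..b, w t := by
  have hc : Continuous w := continuous_iff_continuousAt.2 fun t => (hw t).continuousAt
  have hZ : 0 < ∫ t in a..b, w t :=
    intervalIntegral_pos_of_pos (hc.intervalIntegrable _ _) hpos hab
  have hmem : m ∈ Set.Icc a b := hm ▸ integral_id_mul_div_integral_mem_Icc hc hpos hab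
  have hcenter : ∫ t in a..b, (t - m) * w t = 0 := by
    simp_rw [sub_mul]
    rw [intervalIntegral.integral_sub (Continuous.intervalIntegrable (by fun_prop) _ _)
      (Continuous.intervalIntegrable (by fun_prop) _ _), intervalIntegral.integral_const_mul, hm]
    field_simp
    ring
  have hparts := integral_eq_sub_of_hasDerivAt (a := a) (b := b)
    (f := fun t => (t - m) * w t)
    (f' := fun t => w t + (γ - κ * m) * ((t - m) * w t) - κ * ((t - m) ^ 2 * w t))
    (fun t _ => (((hasDerivAt_id t).sub_const m).mul (hw t)).congr_deriv (by simp only [id]; ring))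
    (Continuous.intervalIntegrable (by fun_prop) _ _)
  rw [intervalIntegral.integral_sub (Continuous.intervalIntegrable (by fun_prop) _ _)
      (Continuous.intervalIntegrable (by fun_prop) _ _),
    intervalIntegral.integral_add (Continuous.intervalIntegrable (by fun_prop) _ _)
      (Continuous.intervalIntegrable (by fun_prop) _ _),
    intervalIntegral.integral_const_mul, intervalIntegral.integral_const_mul, hcenter] at hparts
  nlinarith [mul_nonneg (sub_nonneg.2 hmem.2) (hpos b).le,
    mul_nonneg (sub_nonneg.2 hmem.1) (hpos a).le]

/-- Bound on the variance of the square by the variance, for a weight on `[a, b] ⊆ [-R, R]`. -/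
lemma variance_sq_integral_le {w : ℝ → ℝ} (hw : Continuous w) (hpos : ∀ t, 0 < w t)
    {a b R m : ℝ} (hab : a < b) (ha : -R ≤ a) (hb : b ≤ R) (hm : m ∈ Set.Icc a b) :
    (∫ t in a..b, t ^ 4 * w t) * (∫ t in a..b, w t) - (∫ t in a..b, t ^ 2 * w t) ^ 2 ≤
      4 * R ^ 2 * (∫ t in a..b, (t - m) ^ 2 * w t) * ∫ t in a..b, w t := by
  have hZ : 0 < ∫ t in a..b, w t :=
    intervalIntegral_pos_of_pos (hw.intervalIntegrable _ _) hpos hab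
  have hle : ∫ t in a..b, (t ^ 2 - m ^ 2) ^ 2 * w t ≤
      ∫ t in a..b, 4 * R ^ 2 * ((t - m) ^ 2 * w t) := by
    refine integral_mono_on hab.le (Continuous.intervalIntegrable (by fun_prop) _ _)
      (Continuous.intervalIntegrable (by fun_prop) _ _) fun t ht => ?_
    have hsq : (t + m) ^ 2 ≤ (2 * R) ^ 2 :=
      sq_le_sq' (by linarith [ht.1, hm.1]) (by linarith [ht.2, hm.2])
    calc (t ^ 2 - m ^ 2) ^ 2 * w t = (t + m) ^ 2 * ((t - m) ^ 2 * w t) := by ring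
      _ ≤ (2 * R) ^ 2 * ((t - m) ^ 2 * w t) :=
        mul_le_mul_of_nonneg_right hsq (mul_nonneg (sq_nonneg _) (hpos t).le)
      _ = 4 * R ^ 2 * ((t - m) ^ 2 * w t) := by ring
  have hexp : ∫ t in a..b, (t ^ 2 - m ^ 2) ^ 2 * w t =
      (∫ t in a..b, t ^ 4 * w t) - 2 * m ^ 2 * (∫ t in a..b, t ^ 2 * w t) +
        m ^ 4 * ∫ t in a..b, w t := by
    rw [← intervalIntegral.integral_const_mul, ← intervalIntegral.integral_const_mul,
      ← intervalIntegral.integral_sub (Continuous.intervalIntegrable (by fun_prop) _ _)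
        (Continuous.intervalIntegrable (by fun_prop) _ _),
      ← intervalIntegral.integral_add (Continuous.intervalIntegrable (by fun_prop) _ _)
        (Continuous.intervalIntegrable (by fun_prop) _ _)]
    congr 1
    ext t
    ring
  rw [intervalIntegral.integral_const_mul, hexp] at hle
  nlinarith [mul_le_mul_of_nonneg_right hle hZ.le,
    sq_nonneg ((∫ t in a..b, t ^ 2 * w t) - m ^ 2 * ∫ t in a..b, w t)]

/-- The derivative of the truncated second moment is `-Var(X²) / (2σ²)`. -/
lemma hasDerivAt_truncSecondMoment {σ γ ℓ u : ℝ} (hlu : ℓ < u) {x : ℝ} {w : ℝ → ℝ}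
    (hw : w = fun t => Real.exp (γ * t) * Real.exp (-t ^ 2 * x / (2 * σ ^ 2))) :
    HasDerivAt (truncSecondMoment σ γ ℓ u)
      (-((∫ t in ℓ..u, t ^ 4 * w t) * (∫ t in ℓ..u, w t) - (∫ t in ℓ..u, t ^ 2 * w t) ^ 2) /
        (2 * σ ^ 2 * (∫ t in ℓ..u, w t) ^ 2)) x := by
  have hZ : 0 < ∫ t in ℓ..u, w t := by
    subst hw
    exact intervalIntegral_pos_of_pos (Continuous.intervalIntegrable (by fun_prop) _ _)
      (fun t => by positivity) hlu
  have hexp (t y : ℝ) : Real.exp (-t ^ 2 / (2 * σ ^ 2) * y) =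
      Real.exp (-t ^ 2 * y / (2 * σ ^ 2)) := by rw [div_mul_eq_mul_div]
  have hderiv {g : ℝ → ℝ} (hg : Continuous g) := hasDerivAt_integral_mul_exp_mul
    (h := fun t => -t ^ 2 / (2 * σ ^ 2)) hg (by fun_prop) ℓ u x
  have hN := hderiv (g := fun t => t ^ 2 * Real.exp (γ * t)) (by fun_prop)
  have hD := hderiv (g := fun t => Real.exp (γ * t)) (by fun_prop)
  simp only [hexp] at hN hD
  have hN' : ∫ t in ℓ..u, -t ^ 2 / (2 * σ ^ 2) * (t ^ 2 * Real.exp (γ * t)) *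
      Real.exp (-t ^ 2 * x / (2 * σ ^ 2)) = -(1 / (2 * σ ^ 2)) * ∫ t in ℓ..u, t ^ 4 * w t := by
    rw [← intervalIntegral.integral_const_mul, hw]
    congr 1
    ext t
    ring
  have hD' : ∫ t in ℓ..u, -t ^ 2 / (2 * σ ^ 2) * Real.exp (γ * t) *
      Real.exp (-t ^ 2 * x / (2 * σ ^ 2)) = -(1 / (2 * σ ^ 2)) * ∫ t in ℓ..u, t ^ 2 * w t := by
    rw [← intervalIntegral.integral_const_mul, hw]
    congr 1
    ext t
    ring
  have hDx : ∫ t in ℓ..u, Real.exp (γ * t) * Real.exp (-t ^ 2 * x / (2 * σ ^ 2)) =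
      ∫ t in ℓ..u, w t := by rw [hw]
  have hNx : ∫ t in ℓ..u, t ^ 2 * Real.exp (γ * t) * Real.exp (-t ^ 2 * x / (2 * σ ^ 2)) =
      ∫ t in ℓ..u, t ^ 2 * w t := by simp only [hw, mul_assoc]
  rw [hN'] at hN
  rw [hD'] at hD
  refine (hN.div hD (hDx ▸ hZ.ne')).congr_deriv ?_
  rw [hDx, hNx]
  field_simp
  ring

/-- Derivative bound for the truncated-Gaussian second moment: for
`[ℓ,u] ⊆ [-R₁,R₁]` with `ℓ < u`, the function `v` is differentiable on
`(0,∞)` and `v'(x) ≥ -2R₁²/x`. -/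
theorem truncated_second_moment_deriv_bound
    (R₁ σ γ ℓ u : ℝ) (hR : 0 < R₁) (hσ : 0 < σ)
    (hℓ : -R₁ ≤ ℓ) (hlu : ℓ < u) (hu : u ≤ R₁) :
    ∀ x : ℝ, 0 < x →
      DifferentiableAt ℝ (truncSecondMoment σ γ ℓ u) x ∧
        -(2 * R₁ ^ 2) / x ≤ deriv (truncSecondMoment σ γ ℓ u) x := by
  intro x hx
  obtain ⟨w, hw⟩ : ∃ w : ℝ → ℝ, w = fun t =>
    Real.exp (γ * t) * Real.exp (-t ^ 2 * x / (2 * σ ^ 2)) := ⟨_, rfl⟩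
  have hv := hasDerivAt_truncSecondMoment hlu hw
  refine ⟨hv.differentiableAt, ?_⟩
  rw [hv.deriv]
  have hpos (t : ℝ) : 0 < w t := by
    rw [hw]
    positivity
  have hc : Continuous w := by
    rw [hw]
    fun_prop
  have hw' (t : ℝ) : HasDerivAt w ((γ - x / σ ^ 2 * t) * w t) t := by
    rw [hw]
    refine ((((hasDerivAt_id t).const_mul γ).exp).mul
      (((((hasDerivAt_id t).pow 2).neg.mul_const x).div_const (2 * σ ^ 2)).exp)).congr_deriv ?_
    simp
    field_simp
    ring
  have hZ : 0 < ∫ t in ℓ..u, w t :=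
    intervalIntegral_pos_of_pos (hc.intervalIntegrable _ _) hpos hlu
  have hvar := mul_variance_integral_le hw' hpos hlu rfl
  have hsq := variance_sq_integral_le hc hpos hlu hℓ hu
    (integral_id_mul_div_integral_mem_Icc hc hpos hlu)
  rw [div_mul_eq_mul_div, div_le_iff₀ (by positivity)] at hvar
  rw [div_le_div_iff₀ hx (by positivity)]
  have hbound := mul_le_mul_of_nonneg_left hvar
    (by positivity : 0 ≤ 4 * R₁ ^ 2 * ∫ t in ℓ..u, w t)
  linarith [mul_le_mul_of_nonneg_left hsq hx.le]
end

section
/- Let R₁ > 0, σ > 0, γ ∈ ℝ, and let [ℓ,u] ⊆ [−R₁, R₁] with ℓ < u. Define s(x,t) = e^{γt} e^{−t²x/(2σ²)} and h(α) = (∫_ℓ^u s(1+α,t) dt · ∫_ℓ^u s(1−α,t) dt) / (∫_ℓ^u s(1,t) dt)². Then for every α with 0 < α ≤ 1/2, h is differentiable at α and h'(α) ≤ (4·α·R₁²/σ²)·h(α). -/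
open MeasureTheory intervalIntegral

/-- The needle ratio function
`h(α) = (∫ s(1+α,t)dt · ∫ s(1-α,t)dt)/(∫ s(1,t)dt)²`
where `s(x,t) = e^{γt} e^{-t²x/(2σ²)}`. -/
noncomputable def needleRatio (σ γ ℓ u : ℝ) : ℝ → ℝ := fun α =>
  ((∫ t in ℓ..u, Real.exp (γ * t) * Real.exp (-t ^ 2 * (1 + α) / (2 * σ ^ 2))) *
      (∫ t in ℓ..u, Real.exp (γ * t) * Real.exp (-t ^ 2 * (1 - α) / (2 * σ ^ 2)))) /
    (∫ t in ℓ..u, Real.exp (γ * t) * Real.exp (-t ^ 2 / (2 * σ ^ 2))) ^ 2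

/-- The tilted Gaussian weight `e^{γt} e^{-t²x/(2σ²)}`. -/
noncomputable def needleWeight (σ γ x t : ℝ) : ℝ :=
  Real.exp (γ * t) * Real.exp (-t ^ 2 * x / (2 * σ ^ 2))

/-- The `n`-th moment over `[ℓ, u]` of the weight `needleWeight σ γ x`. -/
noncomputable def needleMoment (σ γ ℓ u : ℝ) (n : ℕ) (x : ℝ) : ℝ :=
  ∫ t in ℓ..u, t ^ n * needleWeight σ γ x t

lemma needleWeight_pos (σ γ x t : ℝ) : 0 < needleWeight σ γ x t := by
  unfold needleWeight; positivity

lemma continuous_needleWeight (σ γ x : ℝ) : Continuous (needleWeight σ γ x) := by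
  unfold needleWeight; fun_prop

lemma hasDerivAt_needleWeight_param (σ γ x t : ℝ) :
    HasDerivAt (fun y => needleWeight σ γ y t)
      (-(t ^ 2 / (2 * σ ^ 2)) * needleWeight σ γ x t) x := by
  have h := ((((hasDerivAt_id x).const_mul (-t ^ 2)).div_const (2 * σ ^ 2)).exp).const_mul
    (Real.exp (γ * t))
  refine h.congr_deriv ?_
  simp only [needleWeight, id]
  ring

lemma hasDerivAt_needleWeight (σ γ x t : ℝ) :
    HasDerivAt (needleWeight σ γ x) ((γ - t * x / σ ^ 2) * needleWeight σ γ x t) t := by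
  have h₁ := ((hasDerivAt_id t).const_mul γ).exp
  have h₂ := (((((hasDerivAt_id t).pow 2).neg).mul_const x).div_const (2 * σ ^ 2)).exp
  refine (h₁.mul h₂).congr_deriv ?_
  simp only [needleWeight, id, Pi.pow_apply, Pi.neg_apply]
  push_cast
  ring

lemma needleMoment_zero_pos (σ γ : ℝ) {ℓ u : ℝ} (hlu : ℓ < u) (x : ℝ) :
    0 < needleMoment σ γ ℓ u 0 x := by
  have hc := continuous_needleWeight σ γ x
  refine intervalIntegral_pos_of_pos (Continuous.intervalIntegrable (by fun_prop) _ _)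
    (fun t => ?_) hlu
  simpa using needleWeight_pos σ γ x t

lemma hasDerivAt_needleMoment (σ γ ℓ u : ℝ) (n : ℕ) (x : ℝ) :
    HasDerivAt (needleMoment σ γ ℓ u n)
      (-(1 / (2 * σ ^ 2)) * needleMoment σ γ ℓ u (n + 2) x) x := by
  have hc := continuous_needleWeight σ γ
  have key := (intervalIntegral.hasDerivAt_integral_of_dominated_loc_of_deriv_le
    (μ := volume) (a := ℓ) (b := u) (s := Metric.ball x 1) (x₀ := x)
    (F := fun y t => t ^ n * needleWeight σ γ y t)
    (F' := fun y t => t ^ n * (-(t ^ 2 / (2 * σ ^ 2)) * needleWeight σ γ y t))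
    (bound := fun t => |t ^ n * (-(t ^ 2 / (2 * σ ^ 2)))| * needleWeight σ γ (x - 1) t)
    (Metric.ball_mem_nhds x one_pos)
    (Filter.Eventually.of_forall fun y =>
      (Continuous.aestronglyMeasurable (by have := hc y; fun_prop)))
    (Continuous.intervalIntegrable (by have := hc x; fun_prop) _ _)
    (Continuous.aestronglyMeasurable (by have := hc x; fun_prop))
    (Filter.Eventually.of_forall fun t _ y hy => ?_)
    (Continuous.intervalIntegrable (by have := hc (x - 1); fun_prop) _ _)
    (Filter.Eventually.of_forall fun t _ y _ =>
      (hasDerivAt_needleWeight_param σ γ y t).const_mul (t ^ n))).2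
  · refine key.congr_deriv ?_
    rw [needleMoment, ← intervalIntegral.integral_const_mul]
    congr 1
    ext t
    ring
  · rw [← mul_assoc, norm_mul, Real.norm_eq_abs, Real.norm_eq_abs,
      abs_of_pos (needleWeight_pos σ γ y t)]
    refine mul_le_mul_of_nonneg_left ?_ (abs_nonneg _)
    have hy' : x - 1 ≤ y := by
      rw [Metric.mem_ball, Real.dist_eq, abs_lt] at hy
      linarith
    unfold needleWeight
    refine mul_le_mul_of_nonneg_left (Real.exp_le_exp.mpr ?_) (Real.exp_pos _).le
    refine div_le_div_of_nonneg_right ?_ (by positivity)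
    nlinarith [mul_le_mul_of_nonneg_left hy' (sq_nonneg t)]

lemma integral_quartic_mul_needleWeight (σ γ ℓ u x a b c d : ℝ) :
    ∫ t in ℓ..u, (a * t ^ 4 + b * t ^ 2 + c * t + d) * needleWeight σ γ x t =
      a * needleMoment σ γ ℓ u 4 x + b * needleMoment σ γ ℓ u 2 x +
        c * needleMoment σ γ ℓ u 1 x + d * needleMoment σ γ ℓ u 0 x := by
  have hc := continuous_needleWeight σ γ x
  have hi : ∀ (r : ℝ) (n : ℕ),
      IntervalIntegrable (fun t => r * (t ^ n * needleWeight σ γ x t)) volume ℓ u :=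
    fun r n => Continuous.intervalIntegrable (by fun_prop) _ _
  simp only [needleMoment, ← intervalIntegral.integral_const_mul]
  rw [← intervalIntegral.integral_add (hi a 4) (hi b 2),
    ← intervalIntegral.integral_add ((hi a 4).add (hi b 2)) (hi c 1),
    ← intervalIntegral.integral_add (((hi a 4).add (hi b 2)).add (hi c 1)) (hi d 0)]
  congr 1
  ext t
  ring

/-- The mean of a probability measure supported in `[ℓ, u]` lies in `[ℓ, u]`. -/
lemma needleMoment_mean_mem_Icc (σ γ : ℝ) {ℓ u : ℝ} (hlu : ℓ < u) (x : ℝ) :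
    needleMoment σ γ ℓ u 1 x / needleMoment σ γ ℓ u 0 x ∈ Set.Icc ℓ u := by
  have h0 := needleMoment_zero_pos σ γ hlu x
  have hl : 0 ≤ ∫ t in ℓ..u, (0 * t ^ 4 + 0 * t ^ 2 + 1 * t + -ℓ) * needleWeight σ γ x t :=
    intervalIntegral.integral_nonneg hlu.le fun t ht =>
      mul_nonneg (by linarith [ht.1]) (needleWeight_pos σ γ x t).le
  have hr : 0 ≤ ∫ t in ℓ..u, (0 * t ^ 4 + 0 * t ^ 2 + (-1) * t + u) * needleWeight σ γ x t :=
    intervalIntegral.integral_nonneg hlu.le fun t ht =>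
      mul_nonneg (by linarith [ht.2]) (needleWeight_pos σ γ x t).le
  rw [integral_quartic_mul_needleWeight] at hl hr
  exact ⟨(le_div_iff₀ h0).mpr (by linarith), (div_le_iff₀ h0).mpr (by linarith)⟩

/-- Truncating a Gaussian to an interval does not increase its variance. -/
lemma needleMoment_variance_le {σ : ℝ} (hσ : 0 < σ) (γ : ℝ) {ℓ u : ℝ} (hlu : ℓ < u) (x : ℝ) :
    x * (needleMoment σ γ ℓ u 2 x - needleMoment σ γ ℓ u 1 x / needleMoment σ γ ℓ u 0 x *
      needleMoment σ γ ℓ u 1 x) ≤ σ ^ 2 * needleMoment σ γ ℓ u 0 x := by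
  have h0 := needleMoment_zero_pos σ γ hlu x
  have hm := needleMoment_mean_mem_Icc σ γ hlu x
  have hM : needleMoment σ γ ℓ u 1 x =
      needleMoment σ γ ℓ u 1 x / needleMoment σ γ ℓ u 0 x * needleMoment σ γ ℓ u 0 x := by
    field_simp
  generalize needleMoment σ γ ℓ u 1 x / needleMoment σ γ ℓ u 0 x = m at hm hM ⊢
  have hc := continuous_needleWeight σ γ x
  have hibp := intervalIntegral.integral_eq_sub_of_hasDerivAt (a := ℓ) (b := u)
    (f := fun t => (t - m) * needleWeight σ γ x t)
    (f' := fun t => (0 * t ^ 4 + -(x / σ ^ 2) * t ^ 2 + (γ + m * x / σ ^ 2) * t + (1 - m * γ)) *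
      needleWeight σ γ x t)
    (fun t _ => (((hasDerivAt_id t).sub_const m).mul (hasDerivAt_needleWeight σ γ x t)).congr_deriv
      (by simp only [id]; ring))
    (Continuous.intervalIntegrable (by fun_prop) _ _)
  rw [integral_quartic_mul_needleWeight] at hibp
  have hbu : 0 ≤ (u - m) * needleWeight σ γ x u :=
    mul_nonneg (by linarith [hm.2]) (needleWeight_pos σ γ x u).le
  have hbl : 0 ≤ (m - ℓ) * needleWeight σ γ x ℓ :=
    mul_nonneg (by linarith [hm.1]) (needleWeight_pos σ γ x ℓ).le
  have hle : x * (needleMoment σ γ ℓ u 2 x - m * needleMoment σ γ ℓ u 1 x) / σ ^ 2 ≤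
      needleMoment σ γ ℓ u 0 x := by
    have hγ : γ * needleMoment σ γ ℓ u 1 x = γ * (m * needleMoment σ γ ℓ u 0 x) := by rw [← hM]
    have hexp : x * (needleMoment σ γ ℓ u 2 x - m * needleMoment σ γ ℓ u 1 x) / σ ^ 2 =
        x / σ ^ 2 * needleMoment σ γ ℓ u 2 x - m * x / σ ^ 2 * needleMoment σ γ ℓ u 1 x := by ring
    rw [hexp]
    linarith
  rw [div_le_iff₀ (by positivity)] at hle
  linarith

/-- The variance of `t²` is at most `4R²` times the variance of `t` on `[-R, R]`, hence at most
`4R²σ²/x` for the truncated Gaussian of inverse variance `x/σ²`. -/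
lemma needleMoment_variance_sq_le {R σ : ℝ} (hσ : 0 < σ) (γ : ℝ) {ℓ u : ℝ}
    (hℓ : -R ≤ ℓ) (hlu : ℓ < u) (hu : u ≤ R) {x : ℝ} (hx : 0 ≤ x) :
    x * (needleMoment σ γ ℓ u 4 x * needleMoment σ γ ℓ u 0 x - needleMoment σ γ ℓ u 2 x ^ 2) ≤
      4 * R ^ 2 * σ ^ 2 * needleMoment σ γ ℓ u 0 x ^ 2 := by
  have h0 := needleMoment_zero_pos σ γ hlu x
  have hm := needleMoment_mean_mem_Icc σ γ hlu x
  have hvar := needleMoment_variance_le hσ γ hlu x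
  have hM : needleMoment σ γ ℓ u 1 x =
      needleMoment σ γ ℓ u 1 x / needleMoment σ γ ℓ u 0 x * needleMoment σ γ ℓ u 0 x := by
    field_simp
  generalize needleMoment σ γ ℓ u 1 x / needleMoment σ γ ℓ u 0 x = m at hm hM hvar
  have hnn : 0 ≤ ∫ t in ℓ..u, ((-1) * t ^ 4 + (4 * R ^ 2 + 2 * m ^ 2) * t ^ 2 +
      (-(8 * R ^ 2 * m)) * t + (4 * R ^ 2 * m ^ 2 - m ^ 4)) * needleWeight σ γ x t := by
    refine intervalIntegral.integral_nonneg hlu.le fun t ht =>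
      mul_nonneg ?_ (needleWeight_pos σ γ x t).le
    have hsum : (t + m) ^ 2 ≤ (2 * R) ^ 2 :=
      sq_le_sq' (by linarith [ht.1, hm.1]) (by linarith [ht.2, hm.2])
    linarith [mul_le_mul_of_nonneg_left hsum (sq_nonneg (t - m))]
  rw [integral_quartic_mul_needleWeight] at hnn
  generalize needleMoment σ γ ℓ u 4 x = M₄ at *
  generalize needleMoment σ γ ℓ u 2 x = M₂ at *
  generalize needleMoment σ γ ℓ u 1 x = M₁ at *
  generalize needleMoment σ γ ℓ u 0 x = M₀ at *
  subst hM
  have hcentre : M₄ * M₀ - M₂ ^ 2 ≤ 4 * R ^ 2 * M₀ * (M₂ - m * (m * M₀)) := by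
    linarith [mul_nonneg hnn h0.le, sq_nonneg (M₂ - m ^ 2 * M₀)]
  have hscale : 0 ≤ 4 * R ^ 2 * M₀ := by positivity
  linarith [mul_le_mul_of_nonneg_left hcentre hx, mul_le_mul_of_nonneg_left hvar hscale]

lemma hasDerivAt_needleMoment_ratio (σ γ : ℝ) {ℓ u : ℝ} (hlu : ℓ < u) (x : ℝ) :
    HasDerivAt (fun y => needleMoment σ γ ℓ u 2 y / needleMoment σ γ ℓ u 0 y)
      (-(1 / (2 * σ ^ 2)) * ((needleMoment σ γ ℓ u 4 x * needleMoment σ γ ℓ u 0 x -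
        needleMoment σ γ ℓ u 2 x ^ 2) / needleMoment σ γ ℓ u 0 x ^ 2)) x := by
  refine ((hasDerivAt_needleMoment σ γ ℓ u 2 x).div (hasDerivAt_needleMoment σ γ ℓ u 0 x)
    (needleMoment_zero_pos σ γ hlu x).ne').congr_deriv ?_
  ring

/-- The second moment changes at rate at most `4R²` in the parameter `x ≥ 1/2`. -/
lemma needleMoment_ratio_sub_le {R σ : ℝ} (hσ : 0 < σ) (γ : ℝ) {ℓ u : ℝ}
    (hℓ : -R ≤ ℓ) (hlu : ℓ < u) (hu : u ≤ R) {x y : ℝ} (hx : 1 / 2 ≤ x) (hxy : x ≤ y) :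
    needleMoment σ γ ℓ u 2 x / needleMoment σ γ ℓ u 0 x -
      needleMoment σ γ ℓ u 2 y / needleMoment σ γ ℓ u 0 y ≤ 4 * R ^ 2 * (y - x) := by
  have hd := hasDerivAt_needleMoment_ratio σ γ hlu
  have h := (convex_Ici (1 / 2 : ℝ)).mul_sub_le_image_sub_of_le_deriv (C := -(4 * R ^ 2))
    (fun z _ => (hd z).continuousAt.continuousWithinAt)
    (fun z _ => (hd z).differentiableAt.differentiableWithinAt)
    (fun z hz => ?_) x hx y (hx.trans hxy) hxy
  · linarith
  · rw [interior_Ici] at hz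
    have hz' : 1 / 2 < z := hz
    rw [(hd z).deriv]
    have h0 := needleMoment_zero_pos σ γ hlu z
    have hv := needleMoment_variance_sq_le hσ γ hℓ hlu hu (by linarith : 0 ≤ z)
    have hq : (needleMoment σ γ ℓ u 4 z * needleMoment σ γ ℓ u 0 z -
        needleMoment σ γ ℓ u 2 z ^ 2) / needleMoment σ γ ℓ u 0 z ^ 2 ≤ 4 * R ^ 2 * (2 * σ ^ 2) := by
      rw [div_le_iff₀ (by positivity)]
      have hrhs : 0 ≤ 4 * R ^ 2 * σ ^ 2 * needleMoment σ γ ℓ u 0 z ^ 2 := by positivity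
      by_contra! hlt
      nlinarith
    have hfin : 1 / (2 * σ ^ 2) * ((needleMoment σ γ ℓ u 4 z * needleMoment σ γ ℓ u 0 z -
        needleMoment σ γ ℓ u 2 z ^ 2) / needleMoment σ γ ℓ u 0 z ^ 2) ≤ 4 * R ^ 2 := by
      rw [one_div_mul_eq_div, div_le_iff₀ (by positivity)]
      exact hq
    linarith

lemma needleRatio_eq_needleMoment (σ γ ℓ u : ℝ) :
    needleRatio σ γ ℓ u = fun α => needleMoment σ γ ℓ u 0 (1 + α) *
      needleMoment σ γ ℓ u 0 (1 - α) / needleMoment σ γ ℓ u 0 1 ^ 2 := by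
  ext α
  simp only [needleRatio, needleMoment, needleWeight, pow_zero, one_mul, mul_one]

/-- The logarithmic derivative of the needle ratio is a difference of normalised second moments. -/
lemma hasDerivAt_needleRatio (σ γ : ℝ) {ℓ u : ℝ} (hlu : ℓ < u) (α : ℝ) :
    HasDerivAt (needleRatio σ γ ℓ u)
      (1 / (2 * σ ^ 2) * (needleMoment σ γ ℓ u 2 (1 - α) / needleMoment σ γ ℓ u 0 (1 - α) -
        needleMoment σ γ ℓ u 2 (1 + α) / needleMoment σ γ ℓ u 0 (1 + α)) *
          needleRatio σ γ ℓ u α) α := by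
  have hp := (needleMoment_zero_pos σ γ hlu (1 + α)).ne'
  have hn := (needleMoment_zero_pos σ γ hlu (1 - α)).ne'
  have h1 := (hasDerivAt_needleMoment σ γ ℓ u 0 (1 + α)).comp_const_add 1 α
  have h2 := (hasDerivAt_needleMoment σ γ ℓ u 0 (1 - α)).comp_const_sub 1 α
  rw [needleRatio_eq_needleMoment]
  refine ((h1.mul h2).div_const (needleMoment σ γ ℓ u 0 1 ^ 2)).congr_deriv ?_
  simp only [zero_add]
  field_simp
  ring

/-- Differential inequality for the needle ratio: for `[ℓ,u] ⊆ [-R₁,R₁]`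
with `ℓ < u` and `0 < α ≤ 1/2`, `h` is differentiable at `α` and
`h'(α) ≤ (4αR₁²/σ²)·h(α)`. -/
theorem needle_ratio_deriv_bound
    (R₁ σ γ ℓ u : ℝ) (hR : 0 < R₁) (hσ : 0 < σ)
    (hℓ : -R₁ ≤ ℓ) (hlu : ℓ < u) (hu : u ≤ R₁)
    (α : ℝ) (hα0 : 0 < α) (hα : α ≤ 1 / 2) :
    DifferentiableAt ℝ (needleRatio σ γ ℓ u) α ∧
      deriv (needleRatio σ γ ℓ u) α ≤
        4 * α * R₁ ^ 2 / σ ^ 2 * needleRatio σ γ ℓ u α := by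
  have hd := hasDerivAt_needleRatio σ γ hlu α
  refine ⟨hd.differentiableAt, ?_⟩
  rw [hd.deriv]
  have hpos : 0 ≤ needleRatio σ γ ℓ u α := by
    rw [needleRatio_eq_needleMoment]
    have hp := needleMoment_zero_pos σ γ hlu (1 + α)
    have hn := needleMoment_zero_pos σ γ hlu (1 - α)
    positivity
  refine mul_le_mul_of_nonneg_right ?_ hpos
  have h := needleMoment_ratio_sub_le hσ γ hℓ hlu hu
    (by linarith : 1 / 2 ≤ 1 - α) (by linarith : 1 - α ≤ 1 + α)
  calc _ ≤ 1 / (2 * σ ^ 2) * (4 * R₁ ^ 2 * (1 + α - (1 - α))) :=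
        mul_le_mul_of_nonneg_left h (by positivity)
    _ = 4 * α * R₁ ^ 2 / σ ^ 2 := by field_simp; ring
end
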